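/- arXiv:2404.08954 — 2 statements merged into one kernel-verified Lean document; each statement's English description precedes it below -/
import Mathlib

section
/- Let F be an algebraically closed field, G ⊆ GL_n(F) a closed subgroup acting irreducibly on F^n with G/Z(G) connected, and suppose Z(G) is finite of order N. Then every element of G can be written as ζ·g with ζ an N-th root of unity (viewed as a scalar matrix) and g in the derived group G^der of G°, and the component group G/G° has order dividing N. -/
open Matrix

noncomputable section

variable {F : Type*} [Field F] {n : ℕ}

/-- Zariski-closed subsets of the space of `n × n` matrices: common zero loci of
families of polynomials in the matrix entries. -/
def MatZClosed (S : Set (Matrix (Fin n) (Fin n) F)) : Prop :=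
  ∃ I : Set (MvPolynomial (Fin n × Fin n) F),
    S = {A | ∀ p ∈ I, MvPolynomial.eval (fun q => A q.1 q.2) p = 0}

/-- Zariski-closed subsets of `GL_n(F)`: traces on `GL_n` of Zariski-closed sets
of matrices. -/
def GLZClosed (S : Set (GL (Fin n) F)) : Prop :=
  ∃ C : Set (Matrix (Fin n) (Fin n) F), MatZClosed C ∧
    S = {g : GL (Fin n) F | (g : Matrix (Fin n) (Fin n) F) ∈ C}

/-- A subset of `GL_n(F)` is connected for the Zariski topology:
it cannot be split by two relatively closed sets. -/
def GLZConnected (S : Set (GL (Fin n) F)) : Prop :=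
  S.Nonempty ∧ ∀ U V : Set (GL (Fin n) F), GLZClosed U → GLZClosed V →
    S ⊆ U ∪ V → (S ∩ U).Nonempty → (S ∩ V).Nonempty → (S ∩ (U ∩ V)).Nonempty

/-- Zariski closure of a subset of `GL_n(F)`. -/
def glZClosure (S : Set (GL (Fin n) F)) : Set (GL (Fin n) F) :=
  ⋂₀ {C : Set (GL (Fin n) F) | GLZClosed C ∧ S ⊆ C}

/-- The scalar matrix `c • 1` as an element of `GL_n(F)`. -/
def scalarGL (n : ℕ) (c : Fˣ) : GL (Fin n) F :=
  Units.map (Matrix.scalar (Fin n)).toMonoidHom c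

/-- The group `𝔾_m` of scalar matrices inside `GL_n(F)`. -/
def IsScalarGL (g : GL (Fin n) F) : Prop := ∃ c : Fˣ, g = scalarGL n c

/-- The tautological action of a subgroup `G ⊆ GL_n(F)` on `F^n` is irreducible. -/
def IrredOn (G : Subgroup (GL (Fin n) F)) : Prop :=
  0 < n ∧ ∀ W : Submodule F (Fin n → F),
    (∀ g ∈ G, ∀ v ∈ W, Matrix.mulVec (g : Matrix (Fin n) (Fin n) F) v ∈ W) → W = ⊥ ∨ W = ⊤

/-- The center of a subset of `GL_n(F)`. -/
def centerSet (S : Set (GL (Fin n) F)) : Set (GL (Fin n) F) :=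
  {z ∈ S | ∀ g ∈ S, z * g = g * z}

/-- The saturation of a subset of `GL_n(F)` by the scalar matrices `𝔾_m`.  For a
subgroup `G` whose tautological representation is irreducible (so that
`Z(G) = G ∩ 𝔾_m`), connectedness of this set is equivalent to connectedness of
`G/Z(G)` (the image of `G` in `PGL_n`), since the fibres `g·𝔾_m` are connected. -/
def scalarSaturation (S : Set (GL (Fin n) F)) : Set (GL (Fin n) F) :=
  {x | ∃ g ∈ S, ∃ c : Fˣ, x = scalarGL n c * g}

/-- The identity component of a subgroup `G ⊆ GL_n(F)` for the Zariski topology: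
the union of all Zariski-connected subsets of `G` containing `1`. -/
def identityComponent (G : Subgroup (GL (Fin n) F)) : Set (GL (Fin n) F) :=
  ⋃₀ {S : Set (GL (Fin n) F) | S ⊆ G ∧ GLZConnected S ∧ (1 : GL (Fin n) F) ∈ S}

/-- The identity component of `G`, as a subgroup (the subgroup it generates). -/
def idCompSubgroup (G : Subgroup (GL (Fin n) F)) : Subgroup (GL (Fin n) F) :=
  Subgroup.closure (identityComponent G)

/-- The derived group `G^der` of the identity component of `G`. -/
def derSubgroup (G : Subgroup (GL (Fin n) F)) : Subgroup (GL (Fin n) F) :=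
  ⁅idCompSubgroup G, idCompSubgroup G⁆

/-- A subset of `GL_n(F)` is (linearly) reductive: its tautological representation on
`F^n` is completely reducible. -/
def LinearlyReductiveOn (S : Set (GL (Fin n) F)) : Prop :=
  ∀ W : Submodule F (Fin n → F),
    (∀ g ∈ S, ∀ v ∈ W, Matrix.mulVec (g : Matrix (Fin n) (Fin n) F) v ∈ W) →
    ∃ W' : Submodule F (Fin n → F),
      (∀ g ∈ S, ∀ v ∈ W', Matrix.mulVec (g : Matrix (Fin n) (Fin n) F) v ∈ W') ∧ IsCompl W W'

/-- A subset of `GL_n(F)` is semisimple: reductive with finite center. -/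
def IsSemisimpleOn (S : Set (GL (Fin n) F)) : Prop :=
  LinearlyReductiveOn S ∧ (centerSet S).Finite

end

/-!
Let `H` be the Zariski closure of `𝔾_m·G`, an irreducible closed group since `G/Z(G)` is connected.
Scalars die in commutators and `h ↦ ⁅a, h⁆` is continuous, so the commutators of `H` lie in `G°`.
The heart of the matter is that `H ⊆ 𝔾_m·⁅H, H⁆`. Granting it, `⁅H, H⁆ = ⁅⁅H, H⁆, ⁅H, H⁆⁆ ⊆ G^der`,
hence `G ⊆ 𝔾_m·G^der`, and the scalars that occur lie in `Z(G)`.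

The group `𝔾_m·D`, `D = ⁅H, H⁆`, is closed by Chevalley's theorem, so it suffices to show that it is
dense in `H`. Otherwise some form vanishes on `D` but not on `H`. The determinant `Φ` built from a
basis of the forms of that degree vanishing on `D` is a semi-invariant of `D`. Its character is
invariant under conjugation by `H`; the determinant of `H` on the corresponding space of
semi-invariants is trivial on commutators, so the character has finite order, and a power of `Φ` is
an invariant of `D`. But `H` acts on the invariants of `D` of degree `n * d` through `det ^ d`,
which is absurd because the zero locus of `Φ` is not stable under `H`.

For the last assertion, let `γ` be the generic point of `H`, over a function field `K`. If
`det γ ^ (-d) • γ m` were not constant for some invariant `m`, some valuation ring `F ⊆ O ⊆ K` would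
not contain one of its coefficients. Diagonalizing `γ` by elimination over `O` and reducing modulo
the maximal ideal exhibits an unstable form, whose optimal weight in the sense of Kempf gives a
proper nonzero subspace of `F ^ n` stable under `H`.
-/

namespace ZariskiGL

open MvPolynomial TopologicalSpace
open scoped commutatorElement Pointwise TensorProduct

section Topology

theorem isIrreducible_image2 {X Y Z : Type*} [TopologicalSpace X] [TopologicalSpace Y]
    [TopologicalSpace Z] {f : X → Y → Z} (hleft : ∀ x, Continuous (f x))
    (hright : ∀ y, Continuous fun x => f x y) {S : Set X} {T : Set Y} (hS : IsIrreducible S)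
    (hT : IsIrreducible T) : IsIrreducible (Set.image2 f S T) := by
  refine ⟨hS.1.image2 hT.1, ?_⟩
  rintro U V hU hV ⟨_, ⟨s, hs, t, ht, rfl⟩, hst⟩ ⟨_, ⟨s', hs', t', ht', rfl⟩, hst'⟩
  obtain ⟨t₀, ht₀, hst₀, hst₀'⟩ := hT.2 _ _ (hU.preimage (hleft s)) (hV.preimage (hleft s'))
    ⟨t, ht, hst⟩ ⟨t', ht', hst'⟩
  obtain ⟨s₀, hs₀, hU₀, hV₀⟩ := hS.2 _ _ (hU.preimage (hright t₀)) (hV.preimage (hright t₀))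
    ⟨s, hs, hst₀⟩ ⟨s', hs', hst₀'⟩
  exact ⟨_, ⟨s₀, hs₀, t₀, ht₀, rfl⟩, hU₀, hV₀⟩

variable {G : Type*} [Group G] [TopologicalSpace G] [SeparatelyContinuousMul G]

theorem eq_of_mem_irreducibleComponents_of_mem {Y Y' : Set G} (hY : Y ∈ irreducibleComponents G)
    (hY' : Y' ∈ irreducibleComponents G) {x : G} (hx : x ∈ Y) (hx' : x ∈ Y') : Y = Y' := by
  have hirr : IsIrreducible (Set.image2 (fun y y' => y * x⁻¹ * y') Y Y') :=
    isIrreducible_image2 (fun _ => continuous_const_mul _)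
      (fun _ => (continuous_mul_const _).comp (continuous_mul_const _)) hY.1 hY'.1
  have hle : Y ⊆ Set.image2 (fun y y' => y * x⁻¹ * y') Y Y' :=
    fun y hy => ⟨y, hy, x, hx', by simp⟩
  have hle' : Y' ⊆ Set.image2 (fun y y' => y * x⁻¹ * y') Y Y' :=
    fun y hy => ⟨x, hx, y, hy, by simp⟩
  exact (hle.antisymm (hY.2 hirr hle)).trans (hle'.antisymm (hY'.2 hirr hle')).symm

theorem irreducibleSpace_of_preconnectedSpace [NoetherianSpace G] [PreconnectedSpace G] :
    IrreducibleSpace G := by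
  set Z := irreducibleComponent (1 : G)
  have hZ : Z ∈ irreducibleComponents G := irreducibleComponent_mem_irreducibleComponents 1
  have hcompl : Zᶜ = ⋃ Y ∈ irreducibleComponents G \ {Z}, Y := by
    ext x
    simp only [Set.mem_compl_iff, Set.mem_iUnion, Set.mem_sdiff, Set.mem_singleton_iff]
    refine ⟨fun hx => ⟨irreducibleComponent x,
      ⟨irreducibleComponent_mem_irreducibleComponents x,
        fun h => hx (h ▸ mem_irreducibleComponent)⟩,
      mem_irreducibleComponent⟩, ?_⟩
    rintro ⟨Y, ⟨hY, hne⟩, hxY⟩ hxZ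
    exact hne (eq_of_mem_irreducibleComponents_of_mem hY hZ hxY hxZ)
  have hopen : IsOpen Z := by
    rw [← isClosed_compl_iff, hcompl]
    exact (NoetherianSpace.finite_irreducibleComponents.subset Set.sdiff_subset).isClosed_biUnion
      fun Y hY => isClosed_of_mem_irreducibleComponents Y hY.1
  have huniv : Z = Set.univ :=
    IsClopen.eq_univ ⟨isClosed_irreducibleComponent, hopen⟩ ⟨1, mem_irreducibleComponent⟩
  rw [irreducibleSpace_def, Set.top_eq_univ, ← huniv]
  exact hZ.1

theorem isIrreducible_of_isPreconnected [NoetherianSpace G] {S : Subgroup G}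
    (hS : IsPreconnected (S : Set G)) : IsIrreducible (S : Set G) := by
  have : SeparatelyContinuousMul S := inferInstanceAs (SeparatelyContinuousMul S.toSubmonoid)
  have : PreconnectedSpace S := Subtype.preconnectedSpace hS
  have : NoetherianSpace S := Topology.IsInducing.subtypeVal.noetherianSpace
  have := irreducibleSpace_of_preconnectedSpace (G := S)
  simpa using (IrreducibleSpace.isIrreducible_univ S).image _ continuous_subtype_val.continuousOn

end Topology

noncomputable section Zariski

variable {F : Type*} [Field F] {n : ℕ}

/-- The value `p(A)` of a polynomial `p` in the entries of the generic matrix. -/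
abbrev evalAt {B : Type*} [CommRing B] [Algebra F B] (A : Matrix (Fin n) (Fin n) B) :
    MvPolynomial (Fin n × Fin n) F →ₐ[F] B :=
  aeval fun q => A q.1 q.2

/-- The closed point of the space of matrices given by `g`. -/
def point (g : GL (Fin n) F) : PrimeSpectrum (MvPolynomial (Fin n × Fin n) F) :=
  ⟨RingHom.ker (evalAt (F := F) g.1), RingHom.ker_isPrime _⟩

/-- The Zariski topology on `GL_n(F)`. -/
abbrev zariskiTopology : TopologicalSpace (GL (Fin n) F) :=
  TopologicalSpace.induced point inferInstance

attribute [local instance] zariskiTopology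

instance : NoetherianSpace (GL (Fin n) F) :=
  Topology.IsInducing.noetherianSpace (i := point) ⟨rfl⟩

theorem isClosed_iff_exists_evalAt {S : Set (GL (Fin n) F)} :
    IsClosed S ↔ ∃ I : Set (MvPolynomial (Fin n × Fin n) F),
      S = {g | ∀ p ∈ I, evalAt g.1 p = 0} := by
  have hpre (I : Set (MvPolynomial (Fin n × Fin n) F)) :
      point ⁻¹' PrimeSpectrum.zeroLocus I = {g | ∀ p ∈ I, evalAt g.1 p = 0} := rfl
  rw [isClosed_induced_iff]
  refine ⟨fun ⟨t, ht, hS⟩ => ?_, fun ⟨I, hS⟩ => ⟨_, PrimeSpectrum.isClosed_zeroLocus I, ?_⟩⟩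
  · obtain ⟨I, rfl⟩ := (PrimeSpectrum.isClosed_iff_zeroLocus t).mp ht
    exact ⟨I, hS ▸ hpre I⟩
  · rw [hS, hpre]

theorem isClosed_iff_GLZClosed {S : Set (GL (Fin n) F)} : IsClosed S ↔ GLZClosed S := by
  rw [isClosed_iff_exists_evalAt]
  constructor
  · rintro ⟨I, rfl⟩
    exact ⟨_, ⟨I, rfl⟩, rfl⟩
  · rintro ⟨_, ⟨I, rfl⟩, rfl⟩
    exact ⟨I, rfl⟩

theorem isConnected_iff_GLZConnected {S : Set (GL (Fin n) F)} :
    IsConnected S ↔ GLZConnected S := by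
  simp only [IsConnected, GLZConnected, isPreconnected_closed_iff, isClosed_iff_GLZClosed]

theorem isClosed_setOf_evalAt_eq_zero (p : MvPolynomial (Fin n × Fin n) F) :
    IsClosed {g : GL (Fin n) F | evalAt g.1 p = 0} :=
  isClosed_iff_exists_evalAt.mpr ⟨{p}, by simp⟩

variable (F n) in
/-- The coordinate ring of `GL_n`. -/
abbrev CoordRing : Type _ := Localization.Away (mvPolynomialX (Fin n) (Fin n) F).det

variable (F n) in
/-- The universal element of `GL_n`, with entries the coordinate functions. -/
def universalGL : GL (Fin n) (CoordRing F n) :=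
  GeneralLinearGroup.mk''
    ((mvPolynomialX (Fin n) (Fin n) F).map (algebraMap _ (CoordRing F n))) <| by
    rw [← RingHom.mapMatrix_apply, ← RingHom.map_det]
    exact IsLocalization.Away.algebraMap_isUnit _

variable {B C : Type*} [CommRing B] [Algebra F B] [CommRing C] [Algebra F C]

/-- The map on points of `GL_n` induced by a homomorphism of algebras. -/
abbrev mapPoint (ψ : B →ₐ[F] C) : GL (Fin n) B →* GL (Fin n) C :=
  GeneralLinearGroup.map (ψ : B →+* C)

theorem mapPoint_map_algebraMap (ψ : B →ₐ[F] C) (a : GL (Fin n) F) :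
    mapPoint ψ (GeneralLinearGroup.map (algebraMap F B) a) =
      GeneralLinearGroup.map (algebraMap F C) a := by
  ext i j
  simp

theorem evalAt_map (ψ : B →ₐ[F] C) (A : Matrix (Fin n) (Fin n) B)
    (p : MvPolynomial (Fin n × Fin n) F) : evalAt (A.map ψ) p = ψ (evalAt A p) := by
  rw [← AlgHom.comp_apply, comp_aeval]
  rfl

theorem evalAt_mapPoint (ψ : B →ₐ[F] C) (u : GL (Fin n) B)
    (p : MvPolynomial (Fin n × Fin n) F) :
    evalAt (mapPoint ψ u).1 p = ψ (evalAt u.1 p) :=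
  evalAt_map ψ u.1 p

theorem evalAt_det_mvPolynomialX (A : Matrix (Fin n) (Fin n) B) :
    evalAt A (mvPolynomialX (Fin n) (Fin n) F).det = A.det := by
  rw [AlgHom.map_det, mvPolynomialX_mapMatrix_aeval]

theorem isUnit_evalAt_det (g : GL (Fin n) B)
    (s : Submonoid.powers (mvPolynomialX (Fin n) (Fin n) F).det) : IsUnit (evalAt g.1 s.1) := by
  obtain ⟨_, k, rfl⟩ := s
  rw [map_pow, evalAt_det_mvPolynomialX]
  exact ((isUnit_iff_isUnit_det _).mp g.isUnit).pow k

/-- The homomorphism from the coordinate ring of `GL_n` corresponding to a `B`-point. -/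
def evalPoint (g : GL (Fin n) B) : CoordRing F n →ₐ[F] B :=
  IsLocalization.liftAlgHom (isUnit_evalAt_det g)

theorem evalPoint_algebraMap (g : GL (Fin n) B) (p : MvPolynomial (Fin n × Fin n) F) :
    evalPoint g (algebraMap _ (CoordRing F n) p) = evalAt g.1 p :=
  IsLocalization.lift_eq _ p

theorem mapPoint_evalPoint_universalGL (g : GL (Fin n) B) :
    mapPoint (evalPoint (F := F) g) (universalGL F n) = g := by
  ext i j
  exact (evalPoint_algebraMap g (X (i, j))).trans (aeval_X _ _)

theorem isClosed_setOf_evalPoint_eq_zero (b : CoordRing F n) :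
    IsClosed {g : GL (Fin n) F | evalPoint g b = 0} := by
  obtain ⟨⟨p, s⟩, hps⟩ := IsLocalization.surj
    (Submonoid.powers (mvPolynomialX (Fin n) (Fin n) F).det) b
  convert isClosed_setOf_evalAt_eq_zero p using 3 with g
  rw [← evalPoint_algebraMap, ← hps, map_mul, evalPoint_algebraMap,
    (isUnit_evalAt_det g s).mul_left_eq_zero]

theorem continuous_of_mapPoint_eq {T : GL (Fin n) F → GL (Fin n) F}
    (U : GL (Fin n) (CoordRing F n))
    (hU : ∀ g, mapPoint (evalPoint g) U = T g) :
    Continuous T := by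
  rw [continuous_iff_isClosed]
  intro S hS
  obtain ⟨I, rfl⟩ := isClosed_iff_exists_evalAt.mp hS
  have hpre : T ⁻¹' {g | ∀ p ∈ I, evalAt g.1 p = 0} =
      ⋂ p ∈ I, {g | evalPoint g (evalAt (F := F) U.1 p) = 0} := by
    ext g
    simp only [Set.mem_preimage, Set.mem_ofPred_eq, Set.mem_iInter, ← hU, evalAt_mapPoint]
  rw [hpre]
  exact isClosed_biInter fun p _ => isClosed_setOf_evalPoint_eq_zero _

instance : SeparatelyContinuousMul (GL (Fin n) F) where
  continuous_const_mul {a} := continuous_of_mapPoint_eq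
    (GeneralLinearGroup.map (algebraMap F _) a * universalGL F n) fun g => by
      simp [mapPoint_map_algebraMap, mapPoint_evalPoint_universalGL]
  continuous_mul_const {a} := continuous_of_mapPoint_eq
    (universalGL F n * GeneralLinearGroup.map (algebraMap F _) a) fun g => by
      simp [mapPoint_map_algebraMap, mapPoint_evalPoint_universalGL]

instance : ContinuousInv (GL (Fin n) F) where
  continuous_inv := continuous_of_mapPoint_eq (universalGL F n)⁻¹ fun g => by
    rw [map_inv, mapPoint_evalPoint_universalGL]

theorem continuous_commutatorElement_right (a : GL (Fin n) F) :
    Continuous fun g : GL (Fin n) F => ⁅a, g⁆ :=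
  continuous_of_mapPoint_eq
    ⁅GeneralLinearGroup.map (algebraMap F (CoordRing F n)) a, universalGL F n⁆ fun g => by
      rw [map_commutatorElement, mapPoint_map_algebraMap, mapPoint_evalPoint_universalGL]
      simp

theorem continuous_commutatorElement_left (a : GL (Fin n) F) :
    Continuous fun g : GL (Fin n) F => ⁅g, a⁆ := by
  convert (continuous_commutatorElement_right a).inv using 2 with g
  exact (commutatorElement_inv a g).symm

end Zariski

attribute [local instance] zariskiTopology

noncomputable section AffineImages

universe u

variable {F : Type u} [Field F] {n : ℕ}

/-- The ideal of polynomials in the matrix entries vanishing on `S`. -/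
abbrev vanishingIdeal (S : Set (GL (Fin n) F)) : Ideal (MvPolynomial (Fin n × Fin n) F) :=
  PrimeSpectrum.vanishingIdeal (point '' S)

theorem mem_vanishingIdeal {S : Set (GL (Fin n) F)} {p : MvPolynomial (Fin n × Fin n) F} :
    p ∈ vanishingIdeal S ↔ ∀ g ∈ S, evalAt g.1 p = 0 := by
  rw [PrimeSpectrum.mem_vanishingIdeal, Set.forall_mem_image]
  rfl

theorem continuous_point : Continuous (point : GL (Fin n) F → _) :=
  continuous_induced_dom

theorem isPrime_vanishingIdeal {S : Set (GL (Fin n) F)} (hS : IsIrreducible S) :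
    (vanishingIdeal S).IsPrime :=
  PrimeSpectrum.isIrreducible_iff_vanishingIdeal_isPrime.mp
    (hS.image _ continuous_point.continuousOn)

theorem mem_closure_iff_vanishingIdeal_le {S : Set (GL (Fin n) F)} {g : GL (Fin n) F} :
    g ∈ closure S ↔ vanishingIdeal S ≤ (point g).asIdeal := by
  rw [closure_induced, ← PrimeSpectrum.zeroLocus_vanishingIdeal_eq_closure,
    PrimeSpectrum.mem_zeroLocus, SetLike.coe_subset_coe]

theorem eq_of_point_le {g h : GL (Fin n) F} (hle : (point g).asIdeal ≤ (point h).asIdeal) :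
    g = h := by
  ext i j
  have hmem : X (i, j) - C (g.1 i j) ∈ (point g).asIdeal := by simp [point]
  have hzero : h i j - g i j = 0 := by simpa [point] using hle hmem
  exact (sub_eq_zero.mp hzero).symm

theorem exists_algHom_ker_eq [IsAlgClosed F] {B : Type*} [CommRing B] [Algebra F B]
    [Algebra.FiniteType F B] (M : Ideal B) [M.IsMaximal] :
    ∃ ψ : B →ₐ[F] F, RingHom.ker ψ = M := by
  let := Ideal.Quotient.field M
  have : Module.Finite F (B ⧸ M) := finite_of_finite_type_of_isJacobsonRing F (B ⧸ M)
  let e : F ≃ₐ[F] (B ⧸ M) :=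
    AlgEquiv.ofBijective (Algebra.ofId F _) IsAlgClosed.algebraMap_bijective_of_isIntegral
  refine ⟨(e.symm : (B ⧸ M) →ₐ[F] F).comp (Ideal.Quotient.mkₐ F M), ?_⟩
  ext b
  simp [RingHom.mem_ker, Ideal.Quotient.eq_zero_iff_mem]

theorem isNilpotent_of_forall_algHom_eq_zero [IsAlgClosed F] {B : Type*} [CommRing B] [Algebra F B]
    [Algebra.FiniteType F B] {b : B} (hb : ∀ ψ : B →ₐ[F] F, ψ b = 0) : IsNilpotent b := by
  have : IsJacobsonRing B := isJacobsonRing_of_finiteType (A := F)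
  rw [← mem_nilradical, nilradical, Ideal.radical_eq_jacobson, Ideal.jacobson, Ideal.mem_sInf]
  rintro M ⟨-, hM⟩
  obtain ⟨ψ, rfl⟩ := exists_algHom_ker_eq (F := F) M
  exact hb ψ

/-- A subset of `GL_n(F)` that is the image of an affine variety: the set of specializations of a
matrix over a finitely generated algebra. -/
def IsAffineImage (W : Set (GL (Fin n) F)) : Prop :=
  ∃ (B : Type u) (_ : CommRing B) (_ : Algebra F B) (_ : Algebra.FiniteType F B)
    (u : GL (Fin n) B), W = Set.range fun ψ : B →ₐ[F] F => mapPoint ψ u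

theorem IsAffineImage.of_isClosed {S : Set (GL (Fin n) F)} (hS : IsClosed S) :
    IsAffineImage S := by
  obtain ⟨I, rfl⟩ := isClosed_iff_exists_evalAt.mp hS
  have huniv (p : MvPolynomial (Fin n × Fin n) F) :
      evalAt (universalGL F n).1 p = algebraMap _ (CoordRing F n) p :=
    DFunLike.congr_fun (algHom_ext (f := evalAt (F := F) (universalGL F n).1)
      (g := IsScalarTower.toAlgHom F _ (CoordRing F n)) fun q => by simp [universalGL]) p
  have : Algebra.FiniteType F (CoordRing F n) := inferInstance
  let J : Ideal (CoordRing F n) := Ideal.span ((evalAt (universalGL F n).1) '' I)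
  refine ⟨CoordRing F n ⧸ J, inferInstance, inferInstance, inferInstance,
    mapPoint (Ideal.Quotient.mkₐ F J) (universalGL F n), ?_⟩
  ext g
  constructor
  · intro hg
    have hle : J ≤ RingHom.ker (evalPoint g) := Ideal.span_le.mpr <| by
      rintro _ ⟨p, hp, rfl⟩
      rw [SetLike.mem_coe, RingHom.mem_ker, huniv, evalPoint_algebraMap]
      exact hg p hp
    exact ⟨Ideal.Quotient.liftₐ J (evalPoint g) fun b hb => hle hb,
      mapPoint_evalPoint_universalGL g⟩
  · rintro ⟨ψ, rfl⟩ p hp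
    rw [evalAt_mapPoint, evalAt_mapPoint, Ideal.Quotient.mkₐ_eq_mk,
      Ideal.Quotient.eq_zero_iff_mem.mpr (Ideal.subset_span (Set.mem_image_of_mem _ hp)), map_zero]

theorem IsAffineImage.image2 {W W' : Set (GL (Fin n) F)} (hW : IsAffineImage W)
    (hW' : IsAffineImage W')
    (op : ∀ {B : Type u} [CommRing B], GL (Fin n) B → GL (Fin n) B → GL (Fin n) B)
    (hop : ∀ {B : Type u} [CommRing B] [Algebra F B] (ψ : B →ₐ[F] F) (u u' : GL (Fin n) B),
      mapPoint ψ (op u u') = op (mapPoint ψ u) (mapPoint ψ u')) :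
    IsAffineImage (Set.image2 op W W') := by
  obtain ⟨B, _, _, _, u, rfl⟩ := hW
  obtain ⟨B', _, _, _, u', rfl⟩ := hW'
  have : Algebra.FiniteType F (B ⊗[F] B') :=
    Algebra.FiniteType.trans (S := B) inferInstance inferInstance
  refine ⟨B ⊗[F] B', inferInstance, inferInstance, inferInstance,
    op (mapPoint (Algebra.TensorProduct.includeLeft : B →ₐ[F] B ⊗[F] B') u)
      (mapPoint (Algebra.TensorProduct.includeRight : B' →ₐ[F] B ⊗[F] B') u'), ?_⟩
  have hcomp {C : Type u} [CommRing C] [Algebra F C] (i : C →ₐ[F] B ⊗[F] B') (v : GL (Fin n) C)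
      (ψ : B ⊗[F] B' →ₐ[F] F) : mapPoint ψ (mapPoint i v) = mapPoint (ψ.comp i) v := rfl
  ext g
  simp only [Set.image2_range, Set.mem_range, hop, hcomp, Prod.exists]
  constructor
  · rintro ⟨ψ, ψ', rfl⟩
    refine ⟨Algebra.TensorProduct.productMap ψ ψ', ?_⟩
    rw [Algebra.TensorProduct.productMap_left, Algebra.TensorProduct.productMap_right]
  · rintro ⟨ψ, rfl⟩
    exact ⟨_, _, rfl⟩

theorem IsAffineImage.mul {W W' : Set (GL (Fin n) F)} (hW : IsAffineImage W)
    (hW' : IsAffineImage W') : IsAffineImage (W * W') :=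
  hW.image2 hW' (fun u u' => u * u') fun ψ u u' => map_mul (mapPoint ψ) u u'

theorem IsAffineImage.image2_commutatorElement {W W' : Set (GL (Fin n) F)} (hW : IsAffineImage W)
    (hW' : IsAffineImage W') : IsAffineImage (Set.image2 (fun g h => ⁅g, h⁆) W W') :=
  hW.image2 hW' (fun u u' => ⁅u, u'⁆) fun ψ u u' => map_commutatorElement (mapPoint ψ) u u'

section Chevalley

variable [IsAlgClosed F] {B : Type u} [CommRing B] [Algebra F B] [Algebra.FiniteType F B]
  (u : GL (Fin n) B)

theorem mem_range_mapPoint_of_point_mem_range_comap {g : GL (Fin n) F}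
    (hg : point g ∈ Set.range (PrimeSpectrum.comap (evalAt (F := F) u.1).toRingHom)) :
    g ∈ Set.range fun ψ : B →ₐ[F] F => mapPoint ψ u := by
  obtain ⟨q, hq⟩ := hg
  obtain ⟨M, hM, hqM⟩ := Ideal.exists_le_maximal q.asIdeal q.2.ne_top
  obtain ⟨ψ, rfl⟩ := exists_algHom_ker_eq (F := F) M
  refine ⟨ψ, (eq_of_point_le fun p hp => ?_).symm⟩
  rw [← hq] at hp
  exact (evalAt_mapPoint ψ u p).trans (hqM hp)

theorem mk_vanishingIdeal_mem_range_comap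
    (hu : (vanishingIdeal (Set.range fun ψ : B →ₐ[F] F => mapPoint ψ u)).IsPrime) :
    (⟨_, hu⟩ : PrimeSpectrum (MvPolynomial (Fin n × Fin n) F)) ∈
      Set.range (PrimeSpectrum.comap (evalAt (F := F) u.1).toRingHom) := by
  set P := vanishingIdeal (Set.range fun ψ : B →ₐ[F] F => mapPoint ψ u) with hP
  have hmem (p : MvPolynomial (Fin n × Fin n) F) :
      p ∈ P ↔ ∀ ψ : B →ₐ[F] F, ψ (evalAt u.1 p) = 0 := by
    simp only [hP, mem_vanishingIdeal, Set.forall_mem_range, evalAt_mapPoint]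
  have hmin : P ∈ ((⊥ : Ideal B).comap (evalAt (F := F) u.1).toRingHom).minimalPrimes := by
    refine ⟨⟨hu, fun p hp => (hmem p).mpr fun ψ => ?_⟩, fun Q ⟨hQ, hker⟩ _ p hp => ?_⟩
    · rw [show evalAt u.1 p = 0 from hp, map_zero]
    · obtain ⟨k, hk⟩ := isNilpotent_of_forall_algHom_eq_zero ((hmem p).mp hp)
      exact hQ.mem_of_pow_mem k (hker (by rwa [← map_pow] at hk))
  obtain ⟨q, hq, h⟩ := Ideal.exists_comap_eq_of_mem_minimalPrimes _ P hmin
  exact ⟨⟨q, hq⟩, PrimeSpectrum.ext h.2⟩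

theorem IsAffineImage.exists_isOpen_inter_closure_subset {W : Set (GL (Fin n) F)}
    (hW : IsAffineImage W) (hirr : IsIrreducible W) :
    ∃ U : Set (GL (Fin n) F), IsOpen U ∧ (W ∩ U).Nonempty ∧ closure W ∩ U ⊆ W := by
  obtain ⟨B, _, _, _, u, rfl⟩ := hW
  have hfp : (evalAt (F := F) u.1).toRingHom.FinitePresentation :=
    RingHom.FinitePresentation.of_finiteType.mp <| RingHom.FiniteType.of_comp_finiteType
      (f := algebraMap F _) <| (evalAt (F := F) u.1).comp_algebraMap ▸
        RingHom.finiteType_algebraMap.mpr inferInstance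
  obtain ⟨S, hS⟩ := PrimeSpectrum.exists_constructibleSetData_iff.mpr
    (PrimeSpectrum.isConstructible_range_comap hfp)
  have hgeneric := mk_vanishingIdeal_mem_range_comap u (isPrime_vanishingIdeal hirr)
  rw [← hS] at hgeneric
  simp only [PrimeSpectrum.ConstructibleSetData.toSet, Set.mem_iUnion] at hgeneric
  obtain ⟨C, hC, hlocus, hbasic⟩ := hgeneric
  refine ⟨{g | evalAt g.1 C.f = 0}ᶜ, (isClosed_setOf_evalAt_eq_zero C.f).isOpen_compl, ?_, ?_⟩
  · by_contra hempty
    rw [← Set.sdiff_eq, Set.not_nonempty_iff_eq_empty, Set.sdiff_eq_empty] at hempty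
    refine hbasic (Set.singleton_subset_iff.mpr (mem_vanishingIdeal.mpr hempty))
  · rintro g ⟨hg, hgf⟩
    refine mem_range_mapPoint_of_point_mem_range_comap u (hS ▸ ?_)
    simp only [PrimeSpectrum.ConstructibleSetData.toSet, Set.mem_iUnion]
    exact ⟨C, hC, Set.Subset.trans hlocus (mem_closure_iff_vanishingIdeal_le.mp hg),
      fun h => hgf (h rfl)⟩

end Chevalley

theorem exists_forall_subset_closure {W : ℕ → Set (GL (Fin n) F)} (hW : Monotone W)
    (hirr : ∀ k, IsIrreducible (W k)) : ∃ m, ∀ k, W k ⊆ closure (W m) := by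
  obtain ⟨_, ⟨m, rfl⟩, hm⟩ := WellFounded.has_min (wellFounded_lt (α := ℕ∞))
    (Set.range fun k => (vanishingIdeal (W k)).height) ⟨_, 0, rfl⟩
  have hanti {k l : ℕ} (hkl : k ≤ l) : vanishingIdeal (W l) ≤ vanishingIdeal (W k) :=
    PrimeSpectrum.vanishingIdeal_anti_mono (Set.image_mono (hW hkl))
  refine ⟨m, fun k g hg => mem_closure_iff_vanishingIdeal_le.mpr ?_⟩
  have := fun k => isPrime_vanishingIdeal (hirr k)
  have hstable : vanishingIdeal (W (max k m)) = vanishingIdeal (W m) := by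
    by_contra hne
    exact hm _ ⟨max k m, rfl⟩ (Ideal.height_strict_mono_of_isPrime_of_isPrime
      ((hanti (le_max_right k m)).lt_of_ne hne))
  exact hstable ▸ mem_closure_iff_vanishingIdeal_le.mp
    (subset_closure (hW (le_max_left k m) hg))

theorem isAffineImage_pow_succ {W : Set (GL (Fin n) F)} (hW : IsAffineImage W) (k : ℕ) :
    IsAffineImage (W ^ (k + 1)) := by
  induction k with
  | zero => simpa using hW
  | succ k ih => exact pow_succ W (k + 1) ▸ ih.mul hW

theorem isIrreducible_pow_succ {W : Set (GL (Fin n) F)} (hW : IsIrreducible W) (k : ℕ) :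
    IsIrreducible (W ^ (k + 1)) := by
  induction k with
  | zero => simpa using hW
  | succ k ih =>
    exact pow_succ W (k + 1) ▸
      isIrreducible_image2 continuous_const_mul continuous_mul_const ih hW

theorem exists_mem_pow_succ_of_mem_closure {G : Type*} [Group G] {W : Set G} (hone : 1 ∈ W)
    (hinv : W⁻¹ ⊆ W) {g : G} (hg : g ∈ Subgroup.closure W) : ∃ k : ℕ, g ∈ W ^ (k + 1) := by
  rw [← Subgroup.mem_toSubmonoid, Subgroup.closure_toSubmonoid, Set.union_eq_left.mpr hinv] at hg
  induction hg using Submonoid.closure_induction with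
  | mem x hx => exact ⟨0, by simpa using hx⟩
  | one => exact ⟨0, by simpa using hone⟩
  | mul x y _ _ hx hy =>
    obtain ⟨k, hk⟩ := hx
    obtain ⟨l, hl⟩ := hy
    have hadd : W ^ (k + 1) * W ^ (l + 1) = W ^ (k + l + 1 + 1) := by
      rw [← pow_add, show k + 1 + (l + 1) = k + l + 1 + 1 by lia]
    exact ⟨k + l + 1, hadd ▸ Set.mul_mem_mul hk hl⟩

theorem isClosed_subgroupClosure [IsAlgClosed F] {W : Set (GL (Fin n) F)} (hW : IsAffineImage W)
    (hirr : IsIrreducible W) (hone : 1 ∈ W) (hinv : W⁻¹ ⊆ W) :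
    IsClosed (Subgroup.closure W : Set (GL (Fin n) F)) := by
  obtain ⟨m, hm⟩ := exists_forall_subset_closure
    (fun k l hkl => Set.pow_right_monotone hone (Nat.succ_le_succ hkl))
    (isIrreducible_pow_succ hirr)
  obtain ⟨U, hU, hne, hUW⟩ := (isAffineImage_pow_succ hW m).exists_isOpen_inter_closure_subset
    (isIrreducible_pow_succ hirr m)
  set S := Subgroup.closure W
  set P := W ^ (m + 1)
  have hPS : P ⊆ S := Subgroup.pow_subset Subgroup.subset_closure
  have hSP : closure (S : Set (GL (Fin n) F)) ⊆ closure P :=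
    closure_minimal (fun g hg =>
      have ⟨k, hk⟩ := exists_mem_pow_succ_of_mem_closure hone hinv hg
      hm k hk) isClosed_closure
  refine isClosed_of_closure_subset fun h hh => ?_
  obtain ⟨y, hyP, hyU⟩ := hne
  have hV : IsOpen {x | h * x⁻¹ ∈ U} := hU.preimage ((continuous_const_mul h).comp continuous_inv)
  have hVP : (P ∩ {x | h * x⁻¹ ∈ U}).Nonempty := by
    rw [Set.inter_comm]
    refine mem_closure_iff.mp (hSP (?_ : y⁻¹ * h ∈ closure (S : Set (GL (Fin n) F)))) _ hV ?_
    · exact map_mem_closure (continuous_const_mul y⁻¹) hh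
        fun s hs => S.mul_mem (S.inv_mem (hPS hyP)) hs
    · simpa using hyU
  obtain ⟨x, hxP, -, hxU⟩ := (isIrreducible_pow_succ hirr m).2 U _ hU hV ⟨y, hyP, hyU⟩ hVP
  have hhx : h * x⁻¹ ∈ closure (S : Set (GL (Fin n) F)) :=
    map_mem_closure (f := fun s => s * x⁻¹) (continuous_mul_const x⁻¹) hh
      fun s hs => S.mul_mem hs (S.inv_mem (hPS hxP))
  simpa using S.mul_mem (hPS (hUW ⟨hSP hhx, hxU⟩)) (hPS hxP)

end AffineImages

noncomputable section Scalars

universe u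

variable {F : Type u} [Field F] {n : ℕ}

theorem polynomial_eq_zero_of_forall_units_eval_eq_zero [Infinite F] {q : Polynomial F}
    (hq : ∀ c : Fˣ, q.eval (c : F) = 0) : q = 0 := by
  have hX : Polynomial.X * q = 0 := Polynomial.funext fun x => by
    rcases eq_or_ne x 0 with rfl | hx
    · simp
    · rw [Polynomial.eval_mul, ← Units.val_mk0 hx, hq, mul_zero, Polynomial.eval_zero]
  exact (mul_eq_zero.mp hX).resolve_left Polynomial.X_ne_zero

theorem isIrreducible_of_isPrime_vanishingIdeal {S : Set (GL (Fin n) F)}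
    (hS : (vanishingIdeal S).IsPrime) : IsIrreducible S := by
  obtain ⟨hne, hpre⟩ := PrimeSpectrum.isIrreducible_iff_vanishingIdeal_isPrime.mpr hS
  refine ⟨hne.of_image, ?_⟩
  rintro _ _ ⟨U, hU, rfl⟩ ⟨V, hV, rfl⟩ ⟨g, hgS, hgU⟩ ⟨h, hhS, hhV⟩
  obtain ⟨_, ⟨x, hxS, rfl⟩, hx⟩ := hpre U V hU hV ⟨_, ⟨g, hgS, rfl⟩, hgU⟩ ⟨_, ⟨h, hhS, rfl⟩, hhV⟩
  exact ⟨x, hxS, hx⟩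

instance : T1Space (GL (Fin n) F) where
  t1 g := isClosed_of_closure_subset fun h hh => by
    refine (eq_of_point_le fun p hp => mem_closure_iff_vanishingIdeal_le.mp hh ?_).symm
    exact mem_vanishingIdeal.mpr (by rintro _ rfl; exact hp)

theorem mem_center_iff_exists_scalarGL {g : GL (Fin n) F} :
    g ∈ Subgroup.center (GL (Fin n) F) ↔ ∃ c : Fˣ, scalarGL n c = g := by
  rw [GeneralLinearGroup.center_eq_range_scalar]
  rfl

theorem scalarGL_mem_center (c : Fˣ) : scalarGL n c ∈ Subgroup.center (GL (Fin n) F) :=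
  mem_center_iff_exists_scalarGL.mpr ⟨c, rfl⟩

theorem val_scalarGL (c : Fˣ) : (scalarGL n c).1 = (c : F) • (1 : Matrix (Fin n) (Fin n) F) :=
  (smul_one_eq_diagonal (c : F)).symm

theorem isClosed_center :
    IsClosed (Subgroup.center (GL (Fin n) F) : Set (GL (Fin n) F)) := by
  have hcenter : (Subgroup.center (GL (Fin n) F) : Set (GL (Fin n) F)) =
      ⋂ a : GL (Fin n) F, (fun g => ⁅a, g⁆) ⁻¹' {1} := by
    ext g
    simp [Subgroup.mem_center_iff, commutatorElement_eq_one_iff_mul_comm]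
  rw [hcenter]
  exact isClosed_iInter fun a => isClosed_singleton.preimage (continuous_commutatorElement_right a)

theorem isIrreducible_center [Infinite F] :
    IsIrreducible (Subgroup.center (GL (Fin n) F) : Set (GL (Fin n) F)) := by
  let generic := evalAt (F := F) (scalar (Fin n) (Polynomial.X : Polynomial F))
  have hspec (c : Fˣ) (p : MvPolynomial (Fin n × Fin n) F) :
      (generic p).eval (c : F) = evalAt (scalarGL n c).1 p := by
    have hcomp : (Polynomial.aeval (c : F)).comp generic = evalAt (scalarGL n c).1 := by
      ext ⟨i, j⟩
      by_cases hij : i = j <;> simp [generic, val_scalarGL, hij]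
    rw [← hcomp, AlgHom.comp_apply, Polynomial.coe_aeval_eq_eval]
  have hker : vanishingIdeal (Subgroup.center (GL (Fin n) F) : Set (GL (Fin n) F)) =
      RingHom.ker generic := by
    ext p
    rw [mem_vanishingIdeal, RingHom.mem_ker]
    refine ⟨fun hp => ?_, fun hp g hg => ?_⟩
    · exact polynomial_eq_zero_of_forall_units_eval_eq_zero fun c => by
        rw [hspec, hp _ (scalarGL_mem_center c)]
    · obtain ⟨c, rfl⟩ := mem_center_iff_exists_scalarGL.mp hg
      rw [← hspec, hp, Polynomial.eval_zero]
  exact isIrreducible_of_isPrime_vanishingIdeal (hker ▸ RingHom.ker_isPrime generic)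

theorem center_sup_commutator_eq_closure {G : Type*} [Group G] (H : Subgroup G) :
    Subgroup.center G ⊔ ⁅H, H⁆ = Subgroup.closure
      ((Subgroup.center G : Set G) * Set.image2 (fun g h => ⁅g, h⁆) (H : Set G) H) := by
  set Z := Subgroup.center G
  set K : Set G := Set.image2 (fun g h => ⁅g, h⁆) (H : Set G) H
  have hcomm : ⁅H, H⁆ = Subgroup.closure K := Subgroup.commutator_def H H
  have hone : (1 : G) ∈ K := ⟨1, H.one_mem, 1, H.one_mem, by simp⟩
  refine le_antisymm (sup_le (fun z hz => ?_) ?_) ?_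
  · exact Subgroup.subset_closure ⟨z, hz, 1, hone, mul_one z⟩
  · exact hcomm ▸ Subgroup.closure_mono fun k hk => ⟨1, Z.one_mem, k, hk, one_mul k⟩
  · exact (Subgroup.closure_mul_le _ _).trans (by rw [hcomm, Subgroup.closure_eq])

theorem isClosed_center_sup_commutator [IsAlgClosed F] {H : Subgroup (GL (Fin n) F)}
    (hH : IsClosed (H : Set (GL (Fin n) F))) (hirr : IsIrreducible (H : Set (GL (Fin n) F))) :
    IsClosed ((Subgroup.center (GL (Fin n) F) ⊔ ⁅H, H⁆ : Subgroup _) : Set (GL (Fin n) F)) := by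
  have : Infinite F := IsAlgClosed.instInfinite
  rw [center_sup_commutator_eq_closure]
  refine isClosed_subgroupClosure ?_ ?_ ⟨1, one_mem _, 1, ⟨1, one_mem H, 1, one_mem H, ?_⟩, ?_⟩ ?_
  · exact (IsAffineImage.of_isClosed isClosed_center).mul
      ((IsAffineImage.of_isClosed hH).image2_commutatorElement (.of_isClosed hH))
  · exact isIrreducible_image2 continuous_const_mul continuous_mul_const isIrreducible_center
      (isIrreducible_image2 continuous_commutatorElement_right continuous_commutatorElement_left
        hirr hirr)
  · exact commutatorElement_self 1
  · exact mul_one 1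
  · rintro x ⟨z, hz, _, ⟨g, hg, h, hh, rfl⟩, hx⟩
    have hz' := (Subgroup.center (GL (Fin n) F)).inv_mem hz
    refine ⟨z⁻¹, hz', ⁅h, g⁆, ⟨h, hh, g, hg, rfl⟩, ?_⟩
    change z * ⁅g, h⁆ = x⁻¹ at hx
    change z⁻¹ * ⁅h, g⁆ = x
    rw [← inv_inv x, ← hx, _root_.mul_inv_rev, commutatorElement_inv]
    exact (Subgroup.mem_center_iff.mp hz' _).symm

end Scalars

noncomputable section LeftSubst

variable {R S : Type*} [CommRing R] [CommRing S] {m ι : Type*} [Fintype m]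

/-- The substitution `f(X) ↦ f(A X)` on polynomials in the entries of an `m × ι` matrix `X`. It is
contravariant in `A`. -/
def leftSubst (A : Matrix m m R) : MvPolynomial (m × ι) R →ₐ[R] MvPolynomial (m × ι) R :=
  aeval fun q => ∑ l, C (A q.1 l) * X (l, q.2)

@[simp]
theorem leftSubst_X (A : Matrix m m R) (q : m × ι) :
    leftSubst A (X q) = ∑ l, C (A q.1 l) * X (l, q.2) :=
  aeval_X _ _

theorem leftSubst_leftSubst (A B : Matrix m m R) (p : MvPolynomial (m × ι) R) :
    leftSubst A (leftSubst B p) = leftSubst (B * A) p := by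
  suffices (leftSubst A).comp (leftSubst B) = leftSubst (ι := ι) (B * A) from
    DFunLike.congr_fun this p
  ext1 q
  simp only [AlgHom.comp_apply, leftSubst_X, map_sum, map_mul, algHom_C, Matrix.mul_apply,
    Finset.sum_mul, Finset.mul_sum, algebraMap_eq, mul_assoc]
  exact Finset.sum_comm

theorem map_leftSubst (φ : R →+* S) (A : Matrix m m R) (p : MvPolynomial (m × ι) R) :
    map φ (leftSubst A p) = leftSubst (A.map φ) (map φ p) := by
  induction p using MvPolynomial.induction_on with
  | C a => simp only [algHom_C, algebraMap_eq, map_C]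
  | add p q hp hq => simp only [map_add, hp, hq]
  | mul_X p q hp => simp only [map_mul, hp, map_X, leftSubst_X, map_sum, map_C, Matrix.map_apply]

theorem eval_leftSubst (A : Matrix m m R) (x : m × ι → R) (p : MvPolynomial (m × ι) R) :
    eval x (leftSubst A p) = eval (fun q => ∑ l, A q.1 l * x (l, q.2)) p := by
  induction p using MvPolynomial.induction_on with
  | C a => simp only [algHom_C, algebraMap_eq, eval_C]
  | add p q hp hq => simp only [map_add, hp, hq]
  | mul_X p q hp => simp only [map_mul, hp, eval_X, leftSubst_X, map_sum, eval_C]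

theorem isHomogeneous_leftSubst (A : Matrix m m R) {p : MvPolynomial (m × ι) R} {N : ℕ}
    (hp : p.IsHomogeneous N) : (leftSubst A p).IsHomogeneous N := by
  have hlinear (q : m × ι) : (∑ l, C (A q.1 l) * X (R := R) (l, q.2)).IsHomogeneous 1 :=
    .sum _ _ _ fun l _ => by
      simpa using (isHomogeneous_C _ (A q.1 l)).mul (isHomogeneous_X R (l, q.2))
  simpa [leftSubst] using hp.aeval _ hlinear

variable [DecidableEq m]

@[simp]
theorem leftSubst_one (p : MvPolynomial (m × ι) R) : leftSubst 1 p = p := by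
  suffices leftSubst (ι := ι) (1 : Matrix m m R) = AlgHom.id R _ from DFunLike.congr_fun this p
  ext1 q
  simp [Matrix.one_apply]

theorem leftSubst_injective {A : Matrix m m R} (hA : IsUnit A.det) :
    Function.Injective (leftSubst (ι := ι) A) :=
  Function.LeftInverse.injective (g := leftSubst A⁻¹) fun p => by
    rw [leftSubst_leftSubst, mul_nonsing_inv A hA, leftSubst_one]

end LeftSubst

noncomputable section RowWeight

variable {R : Type*} [CommRing R] {m ι : Type*}

/-- The weight of a monomial in the entries of an `m × ι` matrix, the `i`-th row having
weight `lam i`. -/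
abbrev rowWeight (lam : m → ℝ) : (m × ι →₀ ℕ) →+ ℝ :=
  Finsupp.weight (lam ∘ Prod.fst)

variable (R) in
/-- The polynomials all of whose monomials have weight at least `c`. -/
def weightGE (lam : m → ℝ) (c : ℝ) : Submodule R (MvPolynomial (m × ι) R) :=
  restrictSupport R {β | c ≤ rowWeight lam β}

theorem mem_weightGE {lam : m → ℝ} {c : ℝ} {p : MvPolynomial (m × ι) R} :
    p ∈ weightGE R lam c ↔ ∀ β, coeff β p ≠ 0 → c ≤ rowWeight lam β := by
  simp only [weightGE, mem_restrictSupport_iff, Set.subset_def, Finset.mem_coe, mem_support_iff,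
    Set.mem_ofPred_eq]

theorem monomial_mem_weightGE {lam : m → ℝ} {c : ℝ} {β : m × ι →₀ ℕ} (hβ : c ≤ rowWeight lam β)
    (a : R) : monomial β a ∈ weightGE R lam c :=
  (monomial_mem_restrictSupport R).mpr (Or.inl hβ)

theorem mul_mem_weightGE {lam : m → ℝ} {c d : ℝ} {p q : MvPolynomial (m × ι) R}
    (hp : p ∈ weightGE R lam c) (hq : q ∈ weightGE R lam d) : p * q ∈ weightGE R lam (c + d) := by
  have hadd : ({β | c ≤ rowWeight lam β} + {β | d ≤ rowWeight lam β} : Set (m × ι →₀ ℕ)) ⊆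
      {β | c + d ≤ rowWeight lam β} := by
    rintro _ ⟨β, hβ, γ, hγ, rfl⟩
    simpa only [Set.mem_ofPred_eq, map_add] using add_le_add hβ hγ
  refine restrictSupport_mono R hadd ?_
  rw [restrictSupport_add]
  exact Submodule.mul_mem_mul hp hq

theorem rowWeight_add_smul (a b : ℝ) (lam mu : m → ℝ) (β : m × ι →₀ ℕ) :
    rowWeight (a • lam + b • mu) β = a * rowWeight lam β + b * rowWeight mu β := by
  simp only [rowWeight, Finsupp.weight_apply, Finsupp.sum, Finset.mul_sum, ← Finset.sum_add_distrib,
    Function.comp_apply, Pi.add_apply, Pi.smul_apply, smul_eq_mul, nsmul_eq_mul]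
  exact Finset.sum_congr rfl fun q _ => by ring

theorem rowWeight_const (t : ℝ) (β : m × ι →₀ ℕ) :
    rowWeight (fun _ => t) β = β.degree * t := by
  simp [rowWeight, Finsupp.weight_apply, Finsupp.degree_apply, Finsupp.sum, Finset.sum_mul]

variable [Fintype m]

theorem rowWeight_eq_sum [Fintype ι] (lam : m → ℝ) (β : m × ι →₀ ℕ) :
    rowWeight lam β = ∑ l, ((∑ j, β (l, j) : ℕ) : ℝ) * lam l := by
  rw [rowWeight, Finsupp.weight_apply, Finsupp.sum_fintype _ _ (by simp), Fintype.sum_prod_type]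
  exact Finset.sum_congr rfl fun l _ => by simp [Finset.sum_mul]

theorem leftSubst_mem_weightGE {lam lam' : m → ℝ} {c : ℝ} {p : MvPolynomial (m × ι) R}
    {A : Matrix m m R} (hp : p ∈ weightGE R lam' c) (hA : ∀ i l, A i l ≠ 0 → lam' i ≤ lam l) :
    leftSubst A p ∈ weightGE R lam c := by
  have hone : leftSubst (ι := ι) A (monomial 0 1) ∈ weightGE R lam 0 := by
    rw [← C_apply, map_one, map_one]
    exact monomial_mem_weightGE (map_zero _).ge 1
  have hX (q : m × ι) : leftSubst A (X q) ∈ weightGE R lam (lam' q.1) := by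
    rw [leftSubst_X]
    refine Submodule.sum_mem _ fun l _ => ?_
    by_cases hl : A q.1 l = 0
    · simp [hl]
    · rw [X, C_mul_monomial]
      exact monomial_mem_weightGE (by simpa [Finsupp.weight_single] using hA _ _ hl) _
  have hadd {β γ : m × ι →₀ ℕ} (hβ : leftSubst A (monomial β 1) ∈ weightGE R lam (rowWeight lam' β))
      (hγ : leftSubst A (monomial γ 1) ∈ weightGE R lam (rowWeight lam' γ)) :
      leftSubst A (monomial (β + γ) 1) ∈ weightGE R lam (rowWeight lam' (β + γ)) := by
    rw [← one_mul (1 : R), ← monomial_mul, map_mul, map_add]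
    exact mul_mem_weightGE hβ hγ
  have hmonomial (β : m × ι →₀ ℕ) :
      leftSubst A (monomial β 1) ∈ weightGE R lam (rowWeight lam' β) := by
    induction β using Finsupp.induction_linear with
    | zero => rwa [map_zero]
    | add β γ hβ hγ => exact hadd hβ hγ
    | single q k =>
      induction k with
      | zero => rwa [Finsupp.single_zero, map_zero]
      | succ k ih =>
        rw [Finsupp.single_add]
        refine hadd ih ?_
        rw [rowWeight, Finsupp.weight_single, one_smul]
        exact hX q
  rw [p.as_sum, map_sum]
  refine Submodule.sum_mem _ fun β hβ => ?_
  have hc : c ≤ rowWeight lam' β := mem_weightGE.mp hp β (mem_support_iff.mp hβ)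
  rw [← mul_one (coeff β p), ← smul_eq_mul, ← smul_monomial, map_smul]
  exact Submodule.smul_mem _ _ (restrictSupport_mono R (fun γ hγ => le_trans hc hγ) (hmonomial β))

end RowWeight

noncomputable section Elimination

variable {K : Type*} [Field K] {m : Type*} {g : Matrix m m K}

/-- The nonzero entries of `g` are exactly the positions `(i, σ i)`. -/
def IsMonomial (g : Matrix m m K) (σ : Equiv.Perm m) : Prop :=
  ∀ i j, g i j ≠ 0 ↔ j = σ i

/-- The entry `(i, j)` is the only nonzero entry of its row and of its column. -/
def IsPivot (g : Matrix m m K) (i j : m) : Prop :=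
  g i j ≠ 0 ∧ (∀ k ≠ j, g i k = 0) ∧ ∀ k ≠ i, g k j = 0

theorem IsPivot.eq_zero {i k s j : m} (hik : IsPivot g i k) (his : i ≠ s) (hsj : g s j ≠ 0) :
    g i j = 0 :=
  hik.2.1 j fun h => hsj (h ▸ hik.2.2 s his.symm)

theorem exists_isMonomial_of_forall_isPivot [Finite m] (hg : ∀ i, ∃ j, IsPivot g i j) :
    ∃ σ, IsMonomial g σ := by
  choose f hf using hg
  have hinj : Function.Injective f := fun i i' hii' => by
    by_contra hne
    exact (hf i).1 (hii' ▸ (hf i').2.2 i hne)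
  refine ⟨Equiv.ofBijective f (Finite.injective_iff_bijective.mp hinj),
    fun i j => ⟨fun hij => ?_, ?_⟩⟩
  · by_contra hne
    exact hij ((hf i).2.1 j hne)
  · rintro rfl
    exact (hf i).1

variable [DecidableEq m]

/-- Left multiplication by `clearCol g s j` subtracts multiples of the row `s` of `g` so as to clear
the column `j` outside of the entry `(s, j)`. -/
def clearCol (g : Matrix m m K) (s j : m) : Matrix m m K :=
  1 + vecMulVec (Function.update (fun r => -(g r j / g s j)) s 0) (Pi.single s 1)

/-- Right multiplication by `clearRow g s j` subtracts multiples of the column `j` of `g` so as to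
clear the row `s` outside of the entry `(s, j)`. -/
def clearRow (g : Matrix m m K) (s j : m) : Matrix m m K :=
  1 + vecMulVec (Pi.single j 1) (Function.update (fun l => -(g s l / g s j)) j 0)

theorem clearCol_apply_self (g : Matrix m m K) (s j r : m) : clearCol g s j r r = 1 := by
  rcases eq_or_ne r s with rfl | hr <;> simp [clearCol, vecMulVec_apply, *]

theorem clearRow_apply_self (g : Matrix m m K) (s j r : m) : clearRow g s j r r = 1 := by
  rcases eq_or_ne r j with rfl | hr <;> simp [clearRow, vecMulVec_apply, *]

theorem clearCol_apply_of_ne {s j r l : m} (hrl : r ≠ l) :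
    clearCol g s j r l = if l = s then -(g r j / g s j) else 0 := by
  rcases eq_or_ne l s with rfl | hl <;> simp [clearCol, vecMulVec_apply, *]

theorem clearRow_apply_of_ne {s j r l : m} (hrl : r ≠ l) :
    clearRow g s j r l = if r = j then -(g s l / g s j) else 0 := by
  rcases eq_or_ne r j with rfl | hr <;> simp [clearRow, vecMulVec_apply, *, hrl.symm]

variable [Fintype m]

theorem exists_ne_zero_of_det_ne_zero (hg : g.det ≠ 0) (i : m) : ∃ j, g i j ≠ 0 := by
  by_contra! h
  exact hg (det_eq_zero_of_row_eq_zero i h)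

theorem det_clearCol (g : Matrix m m K) (s j : m) : (clearCol g s j).det = 1 := by
  rw [clearCol, vecMulVec_eq Unit, det_one_add_replicateCol_mul_replicateRow]
  simp

theorem det_clearRow (g : Matrix m m K) (s j : m) : (clearRow g s j).det = 1 := by
  rw [clearRow, vecMulVec_eq Unit, det_one_add_replicateCol_mul_replicateRow]
  simp

theorem clearCol_mul_apply (g B : Matrix m m K) (s j r l : m) :
    (clearCol g s j * B) r l = B r l + (if r = s then 0 else -(g r j / g s j)) * B s l := by
  rw [clearCol, Matrix.add_mul, Matrix.one_mul, vecMulVec_mul, single_one_vecMul, Matrix.add_apply,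
    vecMulVec_apply, Function.update_apply]
  rfl

theorem mul_clearRow_apply (g B : Matrix m m K) (s j r l : m) :
    (B * clearRow g s j) r l = B r l + B r j * if l = j then 0 else -(g s l / g s j) := by
  rw [clearRow, Matrix.mul_add, Matrix.mul_one, mul_vecMulVec, mulVec_single_one, Matrix.add_apply,
    vecMulVec_apply, Function.update_apply]
  rfl

theorem clearCol_mul_mul_clearRow_apply {s j : m} (hsj : g s j ≠ 0) (r l : m) :
    (clearCol g s j * g * clearRow g s j) r l =
      if r = s then (if l = j then g s j else 0) else g r l - g r j / g s j * g s l := by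
  simp only [mul_clearRow_apply, clearCol_mul_apply]
  split_ifs <;> subst_vars <;> field_simp <;> ring

theorem IsPivot.clearCol_mul_mul_clearRow {s j i k : m} (hsj : g s j ≠ 0) (hik : IsPivot g i k)
    (his : i ≠ s) : IsPivot (clearCol g s j * g * clearRow g s j) i k := by
  obtain ⟨hne, hrow, hcol⟩ := hik
  have hjk : j ≠ k := fun h => hsj (h ▸ hcol s his.symm)
  refine ⟨?_, fun l hl => ?_, fun r hr => ?_⟩ <;> rw [clearCol_mul_mul_clearRow_apply hsj]
  · simpa [his, hrow j hjk] using hne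
  · simp [his, hrow j hjk, hrow l hl]
  · simp [hcol s his.symm, hcol r hr, hjk.symm]

theorem isPivot_clearCol_mul_mul_clearRow {s j : m} (hsj : g s j ≠ 0) :
    IsPivot (clearCol g s j * g * clearRow g s j) s j := by
  refine ⟨?_, fun l hl => ?_, fun r hr => ?_⟩ <;> rw [clearCol_mul_mul_clearRow_apply hsj]
  · simpa using hsj
  · simp [hl]
  · simp [hr, hsj]

theorem exists_isMonomial_mul_mul (M : Submonoid (Matrix m m K))
    (hM : ∀ g : Matrix m m K, g.det ≠ 0 → (∃ i, ∀ j, ¬IsPivot g i j) →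
      ∃ s j, (∀ k, ¬IsPivot g s k) ∧ g s j ≠ 0 ∧ clearCol g s j ∈ M ∧ clearRow g s j ∈ M)
    (g : Matrix m m K) (hg : g.det ≠ 0) :
    ∃ U ∈ M, ∃ U' ∈ M, U.det = 1 ∧ U'.det = 1 ∧ ∃ σ, IsMonomial (U * g * U') σ := by
  induction hN : {i | ∀ j, ¬IsPivot g i j}.ncard using Nat.strong_induction_on generalizing g with
  | _ N ih =>
  by_cases hpivot : ∃ i, ∀ j, ¬IsPivot g i j
  · obtain ⟨s, j, hs, hsj, hcol, hrow⟩ := hM g hg hpivot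
    have hlt : {i | ∀ k, ¬IsPivot (clearCol g s j * g * clearRow g s j) i k}.ncard < N := by
      rw [← hN]
      refine Set.ncard_lt_ncard ⟨fun i hi k hik => ?_, fun hle => ?_⟩
      · have his : i ≠ s := fun h =>
          hi j (by rw [h]; exact isPivot_clearCol_mul_mul_clearRow hsj)
        exact hi k (hik.clearCol_mul_mul_clearRow hsj his)
      · exact hle hs j (isPivot_clearCol_mul_mul_clearRow hsj)
    obtain ⟨U, hU, U', hU', hdU, hdU', σ, hσ⟩ :=
      ih _ hlt _ (by simpa only [det_mul, det_clearCol, det_clearRow, one_mul, mul_one]) rfl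
    refine ⟨U * clearCol g s j, mul_mem hU hcol, clearRow g s j * U', mul_mem hrow hU',
      by rw [det_mul, hdU, det_clearCol, one_mul], by rw [det_mul, hdU', det_clearRow, one_mul],
      σ, ?_⟩
    simpa only [Matrix.mul_assoc] using hσ
  · push Not at hpivot
    obtain ⟨σ, hσ⟩ := exists_isMonomial_of_forall_isPivot hpivot
    exact ⟨1, one_mem M, 1, one_mem M, det_one, det_one, σ,
      by simpa only [Matrix.one_mul, Matrix.mul_one]⟩

theorem exists_clear_blockTriangular {α : Type*} [LinearOrder α] (b : m → α) (hg : g.det ≠ 0)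
    (hrow : ∃ i, ∀ j, ¬IsPivot g i j) :
    ∃ s j, (∀ k, ¬IsPivot g s k) ∧ g s j ≠ 0 ∧ (clearCol g s j).BlockTriangular b ∧
      (clearRow g s j).BlockTriangular b := by
  obtain ⟨s, hs, hmax⟩ := Set.exists_max_image {i | ∀ j, ¬IsPivot g i j} b (Set.toFinite _) hrow
  obtain ⟨j, hj, hmin⟩ :=
    Set.exists_min_image {j | g s j ≠ 0} b (Set.toFinite _) (exists_ne_zero_of_det_ne_zero hg s)
  refine ⟨s, j, hs, hj, fun r l hlr => ?_, fun r l hlr => ?_⟩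
  · have hrl : r ≠ l := fun h => hlr.ne (h ▸ rfl)
    rw [clearCol_apply_of_ne hrl]
    refine ite_eq_right_iff.mpr fun hls => ?_
    by_cases hr : ∀ k, ¬IsPivot g r k
    · exact absurd (hmax r hr) (hls ▸ hlr).not_ge
    · push Not at hr
      rw [hr.choose_spec.eq_zero (hls ▸ hrl) hj, zero_div, neg_zero]
  · have hrl : r ≠ l := fun h => hlr.ne (h ▸ rfl)
    rw [clearRow_apply_of_ne hrl]
    refine ite_eq_right_iff.mpr fun hrj => ?_
    have hsl : g s l = 0 := by
      by_contra hl
      exact (hmin l hl).not_gt (hrj ▸ hlr)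
    rw [hsl, zero_div, neg_zero]

theorem exists_blockTriangular_isMonomial {α : Type*} [LinearOrder α] (b : m → α)
    (hg : g.det ≠ 0) :
    ∃ U U' : Matrix m m K, U.BlockTriangular b ∧ U'.BlockTriangular b ∧ U.det = 1 ∧ U'.det = 1 ∧
      ∃ σ, IsMonomial (U * g * U') σ := by
  obtain ⟨U, hU, U', hU', h⟩ := exists_isMonomial_mul_mul
    (blockTriangularSubsemiring K b).toSubmonoid (fun _ => exists_clear_blockTriangular b) g hg
  exact ⟨U, U', hU, hU', h⟩

theorem exists_clear_mem_matrix (O : ValuationSubring K) (hg : g.det ≠ 0)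
    (hrow : ∃ i, ∀ j, ¬IsPivot g i j) :
    ∃ s j, (∀ k, ¬IsPivot g s k) ∧ g s j ≠ 0 ∧ clearCol g s j ∈ O.toSubring.matrix ∧
      clearRow g s j ∈ O.toSubring.matrix := by
  obtain ⟨i, hi⟩ := hrow
  obtain ⟨⟨s, j⟩, hs, hmax⟩ := Set.exists_max_image {q : m × m | ∀ k, ¬IsPivot g q.1 k}
    (fun q => O.valuation (g q.1 q.2)) (Set.toFinite _) ⟨(i, i), hi⟩
  have hsj : g s j ≠ 0 := by
    obtain ⟨l, hl⟩ := exists_ne_zero_of_det_ne_zero hg i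
    rw [← O.valuation.ne_zero_iff, ← zero_lt_iff] at hl ⊢
    exact hl.trans_le (hmax (i, l) hi)
  have hquot {q : m × m} (hq : ∀ k, ¬IsPivot g q.1 k) : -(g q.1 q.2 / g s j) ∈ O := by
    rw [neg_mem_iff, ← O.valuation_le_one_iff, map_div₀]
    exact div_le_one_of_le₀ (hmax q hq) zero_le
  refine ⟨s, j, hs, hsj, fun r l => ?_, fun r l => ?_⟩ <;>
    rcases eq_or_ne r l with rfl | hrl
  · rw [clearCol_apply_self]; exact one_mem O
  · rw [clearCol_apply_of_ne hrl]
    split_ifs with hls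
    · by_cases hr : ∀ k, ¬IsPivot g r k
      · exact hquot (q := (r, j)) hr
      · push Not at hr
        rw [hr.choose_spec.eq_zero (hls ▸ hrl) hsj, zero_div, neg_zero]
        exact zero_mem O
    · exact zero_mem O
  · rw [clearRow_apply_self]; exact one_mem O
  · rw [clearRow_apply_of_ne hrl]
    split_ifs
    · exact hquot (q := (s, l)) hs
    · exact zero_mem O

theorem exists_valuationSubring_isMonomial (O : ValuationSubring K) (hg : g.det ≠ 0) :
    ∃ U U' : Matrix m m O, U.det = 1 ∧ U'.det = 1 ∧
      ∃ σ, IsMonomial (U.map (algebraMap O K) * g * U'.map (algebraMap O K)) σ := by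
  have hdet (U : Matrix m m O) (hU : (U.map (algebraMap O K)).det = 1) : U.det = 1 :=
    Subtype.val_injective (((algebraMap O K).map_det U).trans hU)
  obtain ⟨U, hU, U', hU', hdetU, hdetU', h⟩ := exists_isMonomial_mul_mul
    O.toSubring.matrix.toSubmonoid (fun _ => exists_clear_mem_matrix O) g hg
  exact ⟨of fun i j => ⟨U i j, hU i j⟩, of fun i j => ⟨U' i j, hU' i j⟩,
    hdet _ hdetU, hdet _ hdetU', h⟩

end Elimination

noncomputable section Kempf

variable {K : Type*} [Field K] {m ι : Type*} [Fintype m]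

theorem exists_forall_sum_sq_le {S : Set (m → ℝ)} (hS : IsClosed S) (hne : S.Nonempty) :
    ∃ x ∈ S, ∀ y ∈ S, ∑ i, x i ^ 2 ≤ ∑ i, y i ^ 2 := by
  obtain ⟨y, hy⟩ := hne
  have hS' : IsClosed (WithLp.ofLp (p := 2) ⁻¹' S) := hS.preimage (PiLp.continuous_ofLp 2 _)
  obtain ⟨x, hx, hdist⟩ := hS'.exists_infDist_eq_dist ⟨WithLp.toLp 2 y, hy⟩ 0
  refine ⟨x.ofLp, hx, fun z hz => ?_⟩
  have hle : ‖x‖ ≤ ‖WithLp.toLp 2 z‖ := by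
    rw [← dist_zero_left, ← dist_zero_left, ← hdist]
    exact Metric.infDist_le_dist_of_mem (show WithLp.toLp 2 z ∈ WithLp.ofLp ⁻¹' S from hz)
  simpa only [EuclideanSpace.real_norm_sq_eq] using pow_le_pow_left₀ (norm_nonneg _) hle 2

theorem eq_of_sum_sq_le_sum_midpoint_sq {x y : m → ℝ} (hxy : ∑ i, y i ^ 2 = ∑ i, x i ^ 2)
    (hle : ∑ i, x i ^ 2 ≤ ∑ i, ((1 / 2 : ℝ) • x + (1 / 2 : ℝ) • y) i ^ 2) : x = y := by
  have hparallelogram : ∑ i, ((1 / 2 : ℝ) • x + (1 / 2 : ℝ) • y) i ^ 2 =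
      ∑ i, (1 / 2 * x i ^ 2 + 1 / 2 * y i ^ 2 - 1 / 4 * (x i - y i) ^ 2) :=
    Finset.sum_congr rfl fun i _ => by
      simp only [Pi.add_apply, Pi.smul_apply, smul_eq_mul]
      ring
  rw [hparallelogram, Finset.sum_sub_distrib, Finset.sum_add_distrib, ← Finset.mul_sum,
    ← Finset.mul_sum, ← Finset.mul_sum, hxy] at hle
  have hzero : ∑ i, (x i - y i) ^ 2 = 0 :=
    le_antisymm (by linarith) (Finset.sum_nonneg fun i _ => sq_nonneg _)
  funext i
  have hi := (Finset.sum_eq_zero_iff_of_nonneg fun i _ => sq_nonneg _).mp hzero i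
    (Finset.mem_univ i)
  exact sub_eq_zero.mp (pow_eq_zero_iff two_ne_zero |>.mp hi)

/-- The row weights that destabilise `w` relative to the `k`-th power of the determinant, in the
coordinates given by `A`: all monomials of `w(A X)` have larger weight than those of `det ^ k`. The
gap is normalised to be at least `1`, which makes this set closed. -/
def destabilizers (w : MvPolynomial (m × ι) K) (k : ℕ) (A : Matrix m m K) : Set (m → ℝ) :=
  {lam | leftSubst A w ∈ weightGE K lam (1 + k * ∑ i, lam i)}

variable {w : MvPolynomial (m × ι) K} {k : ℕ} {A B B' g h : Matrix m m K} {lam : m → ℝ}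

theorem mem_destabilizers : lam ∈ destabilizers w k A ↔
    ∀ β, coeff β (leftSubst A w) ≠ 0 → 1 + k * ∑ i, lam i ≤ rowWeight lam β :=
  mem_weightGE

theorem isClosed_setOf_forall_le_rowWeight (k : ℕ) (S : Set (m × ι →₀ ℕ)) :
    IsClosed {lam : m → ℝ | ∀ β ∈ S, 1 + k * ∑ i, lam i ≤ rowWeight lam β} := by
  simp only [Set.ofPred_forall]
  refine isClosed_biInter fun β _ => isClosed_le (by fun_prop) ?_
  simp only [rowWeight, Finsupp.weight_apply, Finsupp.sum, Function.comp_apply]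
  fun_prop

theorem isClosed_iUnion_destabilizers [Finite ι] {N : ℕ} (hw : w.IsHomogeneous N) (k : ℕ)
    (S : Set (Matrix m m K)) : IsClosed (⋃ A ∈ S, destabilizers w k A) := by
  let supports : Set (Set (m × ι →₀ ℕ)) := (fun A => {β | coeff β (leftSubst A w) ≠ 0}) '' S
  have hfinite : supports.Finite := by
    refine (Finsupp.finite_of_degree_eq (σ := m × ι) N).finite_subsets.subset ?_
    rintro _ ⟨A, -, rfl⟩ β hβ
    by_contra hdeg
    exact hβ ((isHomogeneous_leftSubst A hw).coeff_eq_zero hdeg)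
  have hunion : ⋃ A ∈ S, destabilizers w k A =
      ⋃ T ∈ supports, {lam | ∀ β ∈ T, 1 + k * ∑ i, lam i ≤ rowWeight lam β} := by
    rw [Set.biUnion_image]
    exact Set.iUnion₂_congr fun A _ => Set.ext fun lam => mem_destabilizers
  rw [hunion]
  exact hfinite.isClosed_biUnion fun T _ => isClosed_setOf_forall_le_rowWeight k T

theorem destabilizers_nonempty
    (h : ∀ β, coeff β (leftSubst A w) ≠ 0 → k * ∑ i, lam i < rowWeight lam β) :
    (destabilizers w k A).Nonempty := by
  obtain ⟨ε, hε, hgap⟩ : ∃ ε : ℝ, 0 < ε ∧ ∀ β ∈ (leftSubst A w).support,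
      ε ≤ rowWeight lam β - k * ∑ i, lam i := by
    rcases (leftSubst A w).support.eq_empty_or_nonempty with hempty | hne
    · exact ⟨1, one_pos, by simp [hempty]⟩
    · obtain ⟨β, hβ, hmin⟩ :=
        Finset.exists_min_image _ (fun β => rowWeight lam β - k * ∑ i, lam i) hne
      exact ⟨_, sub_pos.mpr (h β (mem_support_iff.mp hβ)), hmin⟩
  refine ⟨ε⁻¹ • lam + (0 : ℝ) • lam, mem_destabilizers.mpr fun β hβ => ?_⟩
  have hscaled : 1 ≤ ε⁻¹ * (rowWeight lam β - k * ∑ i, lam i) :=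
    (inv_mul_cancel₀ hε.ne').ge.trans
      (mul_le_mul_of_nonneg_left (hgap β (mem_support_iff.mpr hβ)) (by positivity))
  rw [rowWeight_add_smul]
  simp only [Pi.add_apply, Pi.smul_apply, smul_eq_mul, zero_mul, add_zero, ← Finset.mul_sum]
  linarith

theorem convex_destabilizers : Convex ℝ (destabilizers w k A) := by
  intro lam hlam mu hmu a b ha hb hab
  rw [mem_destabilizers] at *
  intro β hβ
  have hsum : ∑ i, (a • lam + b • mu) i = a * ∑ i, lam i + b * ∑ i, mu i := by
    simp [Finset.sum_add_distrib, Finset.mul_sum]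
  rw [rowWeight_add_smul, hsum]
  nlinarith [mul_le_mul_of_nonneg_left (hlam β hβ) ha, mul_le_mul_of_nonneg_left (hmu β hβ) hb]

theorem mem_destabilizers_mul_of_blockTriangular (hlam : lam ∈ destabilizers w k A)
    (hB : B.BlockTriangular lam) : lam ∈ destabilizers w k (A * B) := by
  rw [destabilizers, Set.mem_ofPred_eq, ← leftSubst_leftSubst]
  exact leftSubst_mem_weightGE hlam fun i l hil => not_lt.mp fun hlt => hil (hB hlt)

variable [DecidableEq m]

theorem exists_lt_of_mem_destabilizers (hw : w ≠ 0) (hhom : w.IsHomogeneous (Fintype.card m * k))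
    (hA : A.det ≠ 0) (hlam : lam ∈ destabilizers w k A) : ∃ i j, lam i < lam j := by
  by_contra! hle
  obtain ⟨t, rfl⟩ : ∃ t, lam = fun _ => t := by
    cases isEmpty_or_nonempty m
    · exact ⟨0, Subsingleton.elim _ _⟩
    · exact ⟨lam (Classical.arbitrary m), funext fun i => le_antisymm (hle _ _) (hle _ _)⟩
  obtain ⟨β, hβ⟩ := exists_coeff_ne_zero
    ((map_ne_zero_iff _ (leftSubst_injective (isUnit_iff_ne_zero.mpr hA))).mpr hw)
  have hdeg : β.degree = Fintype.card m * k := by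
    by_contra hdeg
    exact hβ ((isHomogeneous_leftSubst A hhom).coeff_eq_zero hdeg)
  have hweight := mem_destabilizers.mp hlam β hβ
  rw [rowWeight_const, hdeg, Finset.sum_const, Finset.card_univ, nsmul_eq_mul] at hweight
  push_cast at hweight
  linarith

theorem IsMonomial.eq_of_inv_apply_ne_zero {σ : Equiv.Perm m} (hσ : IsMonomial g σ)
    (hg : g.det ≠ 0) {l i : m} (hli : g⁻¹ l i ≠ 0) : l = σ i := by
  obtain ⟨r, rfl⟩ := σ.surjective l
  have hentry : (g * g⁻¹) r i = g r (σ r) * g⁻¹ (σ r) i := by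
    rw [Matrix.mul_apply]
    refine Finset.sum_eq_single (σ r) (fun j _ hj => ?_) (by simp)
    rw [show g r j = 0 from by_contra fun hrj => hj ((hσ r j).mp hrj), zero_mul]
  rw [mul_nonsing_inv g (isUnit_iff_ne_zero.mpr hg)] at hentry
  by_contra hne
  rw [Matrix.one_apply_ne fun hri => hne (congrArg σ hri)] at hentry
  exact mul_ne_zero ((hσ r _).mpr rfl) hli hentry.symm

theorem comp_mem_destabilizers {σ : Equiv.Perm m} (hσ : IsMonomial g σ) (hg : g.det ≠ 0)
    (heq : B * g = h * B') {c : K} (hw : leftSubst h w = C c * w)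
    (hlam : lam ∈ destabilizers w k B') : lam ∘ σ ∈ destabilizers w k B := by
  have hmove : leftSubst g (leftSubst B w) = c • leftSubst B' w := by
    rw [leftSubst_leftSubst, heq, ← leftSubst_leftSubst, hw, ← smul_eq_C_mul, map_smul]
  have hmem : leftSubst g (leftSubst B w) ∈ weightGE K lam (1 + k * ∑ i, lam i) :=
    hmove ▸ Submodule.smul_mem _ c hlam
  have hback := leftSubst_mem_weightGE (lam := lam ∘ σ) (A := g⁻¹) hmem fun i l hil => by
    rw [hσ.eq_of_inv_apply_ne_zero hg hil, Function.comp_apply]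
  rw [leftSubst_leftSubst, mul_nonsing_inv g (isUnit_iff_ne_zero.mpr hg), leftSubst_one] at hback
  rwa [destabilizers, Set.mem_ofPred_eq, ← Equiv.sum_comp σ lam] at *

theorem blockTriangular_inv (hA : A.det = 1) (hT : A.BlockTriangular lam) :
    A⁻¹.BlockTriangular lam := by
  have := invertibleOfIsUnitDet A (by simp [hA])
  exact blockTriangular_inv_of_blockTriangular hT

/- A Bruhat decomposition of `A⁻¹ * h * A` produces a second destabilising weight, a permutation of
`lam`, in the same coordinates; their midpoint would be shorter than `lam`. -/
theorem blockTriangular_of_minimal (hA : A.det ≠ 0) (hlam : lam ∈ destabilizers w k A)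
    (hmin : ∀ B : Matrix m m K, B.det ≠ 0 → ∀ mu ∈ destabilizers w k B,
      ∑ i, lam i ^ 2 ≤ ∑ i, mu i ^ 2)
    (hh : h.det ≠ 0) {c : K} (hw : leftSubst h w = C c * w) :
    (A⁻¹ * h * A).BlockTriangular lam := by
  have hAu : IsUnit A.det := isUnit_iff_ne_zero.mpr hA
  have hdet : (A⁻¹ * h * A).det ≠ 0 := by
    simpa [det_mul, det_nonsing_inv, hA] using hh
  obtain ⟨U, U', hU, hU', hdetU, hdetU', σ, hσ⟩ := exists_blockTriangular_isMonomial lam hdet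
  have hUu : IsUnit U.det := by simp [hdetU]
  have hU'u : IsUnit U'.det := by simp [hdetU']
  set g := U * (A⁻¹ * h * A) * U' with hg
  have hdetg : g.det ≠ 0 := by rwa [hg, det_mul, det_mul, hdetU, hdetU', one_mul, mul_one]
  have hmove : A * U⁻¹ * g = h * (A * U') := by
    rw [hg]
    simp only [← Matrix.mul_assoc, nonsing_inv_mul_cancel_right _ _ hUu,
      mul_nonsing_inv A hAu, Matrix.one_mul]
  have hlamU := mem_destabilizers_mul_of_blockTriangular hlam (blockTriangular_inv hdetU hU)
  have hlamU' := mem_destabilizers_mul_of_blockTriangular hlam hU'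
  have hmid := convex_destabilizers hlamU (comp_mem_destabilizers hσ hdetg hmove hw hlamU')
    (by norm_num : (0 : ℝ) ≤ 1 / 2) (by norm_num : (0 : ℝ) ≤ 1 / 2) (by norm_num)
  have hfix : lam = lam ∘ σ :=
    eq_of_sum_sq_le_sum_midpoint_sq (Equiv.sum_comp σ fun i => lam i ^ 2)
      (hmin _ (by simp [det_mul, det_nonsing_inv, hdetU, hA]) _ hmid)
  have hgT : g.BlockTriangular lam := fun i j hij => by
    by_contra hne
    rw [(hσ i j).mp hne, ← Function.comp_apply (f := lam), ← hfix] at hij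
    exact lt_irrefl _ hij
  have hconj : A⁻¹ * h * A = U⁻¹ * g * U'⁻¹ := by
    rw [hg, ← Matrix.mul_assoc, mul_nonsing_inv_cancel_right _ _ hU'u,
      nonsing_inv_mul_cancel_left _ _ hUu]
  rw [hconj]
  exact ((blockTriangular_inv hdetU hU).mul hgT).mul (blockTriangular_inv hdetU' hU')

theorem exists_blockTriangular_of_destabilizing [Finite ι] (hw : w ≠ 0)
    (hhom : w.IsHomogeneous (Fintype.card m * k)) (hA : A.det ≠ 0)
    (hlam : ∀ β, coeff β (leftSubst A w) ≠ 0 → k * ∑ i, lam i < rowWeight lam β) :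
    ∃ B : Matrix m m K, B.det ≠ 0 ∧ ∃ mu : m → ℝ, (∃ i j, mu i < mu j) ∧
      ∀ h : Matrix m m K, h.det ≠ 0 → ∀ c, leftSubst h w = C c * w →
        (B⁻¹ * h * B).BlockTriangular mu := by
  obtain ⟨mu, hmu, hmin⟩ :=
    exists_forall_sum_sq_le (isClosed_iUnion_destabilizers hhom k {A | A.det ≠ 0})
      ((destabilizers_nonempty hlam).mono
        (Set.subset_biUnion_of_mem (u := destabilizers w k) (show A ∈ {A | A.det ≠ 0} from hA)))
  obtain ⟨B, hB, hmuB⟩ := Set.mem_iUnion₂.mp hmu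
  exact ⟨B, hB, mu, exists_lt_of_mem_destabilizers hw hhom hB hmuB, fun h hh c hc =>
    blockTriangular_of_minimal hB hmuB (fun B' hB' mu' hmu' =>
      hmin mu' (Set.mem_biUnion (show B' ∈ {A | A.det ≠ 0} from hB') hmu')) hh hc⟩

end Kempf

section PositiveWeights

theorem exists_forall_mul_add_pos (S : Finset (ℝ × ℝ)) (hzero : ∀ p ∈ S, p.1 = 0 → 0 < p.2)
    (hpair : ∀ p ∈ S, ∀ q ∈ S, 0 < p.1 → q.1 < 0 → 0 < -q.1 * p.2 + p.1 * q.2) :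
    ∃ t : ℝ, ∀ p ∈ S, 0 < p.1 * t + p.2 := by
  obtain ⟨t, hlower, hupper⟩ := Order.exists_between_finsets
    ({p ∈ S | 0 < p.1}.image fun p => -p.2 / p.1) ({q ∈ S | q.1 < 0}.image fun q => -q.2 / q.1) (by
      simp only [Finset.forall_mem_image, Finset.mem_filter]
      rintro p ⟨hp, hp0⟩ q ⟨hq, hq0⟩
      rw [← neg_div_neg_eq (-q.2), neg_neg, div_lt_div_iff₀ hp0 (neg_pos.mpr hq0)]
      linarith [hpair p hp q hq hp0 hq0])
  simp only [Finset.forall_mem_image, Finset.mem_filter, and_imp] at hlower hupper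
  refine ⟨t, fun p hp => ?_⟩
  rcases lt_trichotomy p.1 0 with hneg | h0 | hpos
  · have := (lt_div_iff_of_neg hneg).mp (hupper hp hneg)
    linarith
  · simpa [h0] using hzero p hp h0
  · have := (div_lt_iff₀ hpos).mp (hlower hp hpos)
    linarith

/-- One step of Fourier–Motzkin elimination: the integral linear forms in the last `n` coordinates
which have to be positive for the forms in `P` to become positive at some value of the first one. -/
def eliminateFirst {n : ℕ} (P : Finset (Fin (n + 1) → ℤ)) : Finset (Fin n → ℤ) :=
  ({a ∈ P | a 0 = 0} ∪ Finset.image₂ (fun a b => -b 0 • a + a 0 • b) {a ∈ P | 0 < a 0}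
    {b ∈ P | b 0 < 0}).image Fin.tail

theorem forall_mem_eliminateFirst {n : ℕ} {P : Finset (Fin (n + 1) → ℤ)} {q : (Fin n → ℤ) → Prop} :
    (∀ a ∈ eliminateFirst P, q a) ↔ (∀ a ∈ P, a 0 = 0 → q (Fin.tail a)) ∧
      ∀ a ∈ P, 0 < a 0 → ∀ b ∈ P, b 0 < 0 → q (Fin.tail (-b 0 • a + a 0 • b)) := by
  simp only [eliminateFirst, Finset.forall_mem_image, Finset.forall_mem_union, Finset.mem_filter,
    Finset.forall_mem_image₂, and_imp]

theorem exists_cons_pos_of_eliminateFirst {n : ℕ} {P : Finset (Fin (n + 1) → ℤ)} {mu : Fin n → ℝ}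
    (hmu : ∀ a ∈ eliminateFirst P, 0 < ∑ l, (a l : ℝ) * mu l) :
    ∃ t : ℝ, ∀ a ∈ P, 0 < ∑ l, (a l : ℝ) * (Fin.cons t mu : Fin (n + 1) → ℝ) l := by
  obtain ⟨hzero, hpair⟩ := forall_mem_eliminateFirst.mp hmu
  obtain ⟨t, ht⟩ := exists_forall_mul_add_pos
    (P.image fun a => ((a 0 : ℝ), ∑ l : Fin n, (a l.succ : ℝ) * mu l))
    (by
      simp only [Finset.forall_mem_image, Int.cast_eq_zero]
      exact hzero)
    (by
      simp only [Finset.forall_mem_image, Int.cast_pos, Int.cast_lt_zero]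
      intro a ha b hb ha0 hb0
      refine (hpair a ha ha0 b hb hb0).trans_eq ?_
      rw [Finset.mul_sum, Finset.mul_sum, ← Finset.sum_add_distrib]
      refine Finset.sum_congr rfl fun l _ => ?_
      simp only [Fin.tail, Pi.add_apply, Pi.smul_apply, smul_eq_mul, Int.cast_add, Int.cast_mul,
        Int.cast_neg]
      ring)
  refine ⟨t, fun a ha => ?_⟩
  rw [Fin.sum_univ_succ]
  exact ht _ (Finset.mem_image_of_mem _ ha)

theorem exists_real_weight_pos {G : Type*} [AddCommGroup G] [LinearOrder G] [IsOrderedAddMonoid G]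
    {n : ℕ} (f : (Fin n → ℤ) →+ G) (P : Finset (Fin n → ℤ)) (hP : ∀ a ∈ P, 0 < f a) :
    ∃ lam : Fin n → ℝ, ∀ a ∈ P, 0 < ∑ l, (a l : ℝ) * lam l := by
  induction n with
  | zero =>
    refine ⟨0, fun a ha => absurd (hP a ha) ?_⟩
    rw [Subsingleton.elim a 0, map_zero]
    exact lt_irrefl 0
  | succ n ih =>
    let consZero : (Fin n → ℤ) →+ (Fin (n + 1) → ℤ) :=
      ((Fin.consLinearEquiv ℤ fun _ => ℤ).toLinearMap ∘ₗ LinearMap.inr ℤ ℤ _).toAddMonoidHom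
    have hcons {a : Fin (n + 1) → ℤ} (ha : a 0 = 0) : consZero (Fin.tail a) = a :=
      (congrArg (Fin.cons · (Fin.tail a)) ha.symm).trans (Fin.cons_self_tail a)
    obtain ⟨mu, hmu⟩ := ih (f.comp consZero) (eliminateFirst P) (by
      simp only [AddMonoidHom.comp_apply]
      refine forall_mem_eliminateFirst.mpr ⟨fun a ha ha0 => ?_, fun a ha ha0 b hb hb0 => ?_⟩
      · rw [hcons ha0]
        exact hP a ha
      · rw [hcons (by simp only [Pi.add_apply, Pi.smul_apply, smul_eq_mul]; ring), map_add,
          map_zsmul, map_zsmul]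
        exact add_pos (zsmul_pos (hP a ha) (neg_pos.mpr hb0)) (zsmul_pos (hP b hb) ha0))
    obtain ⟨t, ht⟩ := exists_cons_pos_of_eliminateFirst hmu
    exact ⟨Fin.cons t mu, ht⟩

end PositiveWeights

section Burnside

variable {F V : Type*} [Field F] [AddCommGroup V] [Module F V]

theorem blockTriangular_conj_of_mem_adjoin {K m α : Type*} [Field K] [Algebra F K] [Fintype m]
    [DecidableEq m] [LinearOrder α] {b : m → α} {A : Matrix m m K} (hA : IsUnit A.det)
    {S : Set (Matrix m m F)}
    (hS : ∀ M ∈ S, (A⁻¹ * M.map (algebraMap F K) * A).BlockTriangular b)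
    {M : Matrix m m F} (hM : M ∈ Algebra.adjoin F S) :
    (A⁻¹ * M.map (algebraMap F K) * A).BlockTriangular b := by
  induction hM using Algebra.adjoin_induction with
  | mem M hM => exact hS M hM
  | algebraMap c =>
    rw [Matrix.algebraMap_eq_diagonal, Matrix.diagonal_map (map_zero _)]
    change (A⁻¹ * Matrix.diagonal (fun _ => algebraMap F K c) * A).BlockTriangular b
    rw [← Matrix.smul_one_eq_diagonal, Matrix.mul_smul, Matrix.mul_one, Matrix.smul_mul,
      Matrix.nonsing_inv_mul _ hA, Matrix.smul_one_eq_diagonal]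
    exact Matrix.blockTriangular_diagonal _
  | add M M' _ _ hM hM' =>
    rw [Matrix.map_add _ (map_add _), Matrix.mul_add, Matrix.add_mul]
    exact hM.add hM'
  | mul M M' _ _ hM hM' =>
    have heq : A⁻¹ * (M * M').map (algebraMap F K) * A =
        A⁻¹ * M.map (algebraMap F K) * A * (A⁻¹ * M'.map (algebraMap F K) * A) := by
      simp only [Matrix.map_mul, Matrix.mul_assoc]
      rw [Matrix.mul_nonsing_inv_cancel_left _ _ hA]
    exact heq ▸ hM.mul hM'

variable [IsAlgClosed F]

theorem subalgebra_eq_top_of_isSimpleModule [FiniteDimensional F V]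
    (A : Subalgebra F (Module.End F V)) [IsSimpleModule A V] : A = ⊤ := by
  refine eq_top_iff.mpr fun T _ => ?_
  let T' : Module.End (Module.End A V) V :=
    { T with
      map_smul' := fun f v => by
        obtain ⟨c, rfl⟩ :=
          (IsSimpleModule.algebraMap_end_bijective_of_isAlgClosed (A := A) (V := V) F).2 f
        exact map_smul T c v }
  have : Module.Finite (Module.End A V) V := .of_restrictScalars_finite F _ _
  obtain ⟨a, ha⟩ := Module.Finite.toModuleEnd_moduleEnd_surjective (R := A) T'
  have hT : T = a := LinearMap.ext fun v => (DFunLike.congr_fun ha v).symm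
  exact hT ▸ a.2

theorem adjoin_eq_top_of_irredOn {n : ℕ} {H : Subgroup (GL (Fin n) F)} (hirr : IrredOn H) :
    Algebra.adjoin F ((↑) '' (H : Set (GL (Fin n) F))) =
      (⊤ : Subalgebra F (Matrix (Fin n) (Fin n) F)) := by
  have : Nonempty (Fin n) := ⟨⟨0, hirr.1⟩⟩
  let toEnd : Matrix (Fin n) (Fin n) F ≃ₐ[F] Module.End F (Fin n → F) := toLinAlgEquiv'
  set S := Algebra.adjoin F ((↑) '' (H : Set (GL (Fin n) F)) : Set (Matrix (Fin n) (Fin n) F))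
  have : IsSimpleModule (S.map toEnd.toAlgHom) (Fin n → F) :=
    { exists_pair_ne := ⟨⊥, ⊤, bot_ne_top⟩
      eq_bot_or_eq_top := fun W => by
        have hW := hirr.2 (W.restrictScalars F) fun g hg v hv =>
          W.smul_mem ⟨toEnd g, _, Algebra.subset_adjoin ⟨g, hg, rfl⟩, rfl⟩ hv
        rwa [Submodule.restrictScalars_eq_bot_iff, Submodule.restrictScalars_eq_top_iff] at hW }
  refine eq_top_iff.mpr fun M _ => ?_
  obtain ⟨M', hM', heq⟩ : toEnd M ∈ S.map toEnd.toAlgHom :=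
    subalgebra_eq_top_of_isSimpleModule (S.map toEnd.toAlgHom) ▸ Algebra.mem_top
  exact toEnd.injective heq ▸ hM'

theorem exists_common_eigenvector [FiniteDimensional F V] [Nontrivial V]
    {T : Set (Module.End F V)} (hT : ∀ f ∈ T, ∀ g ∈ T, f * g = g * f) :
    ∃ v ≠ 0, ∀ f ∈ T, ∃ c : F, f v = c • v := by
  have := Algebra.isMulCommutative_adjoin F hT
  have : IsArtinian (Algebra.adjoin F T) V := isArtinian_of_tower F inferInstance
  obtain ⟨W, hW⟩ := IsAtomic.exists_atom (Submodule (Algebra.adjoin F T) V)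
  have : IsSimpleModule (Algebra.adjoin F T) W := isSimpleModule_iff_isAtom.mpr hW
  have : FiniteDimensional F W := .of_injective (W.subtype.restrictScalars F) W.subtype_injective
  have hrank : Module.finrank F (W.restrictScalars F) = 1 :=
    IsSimpleModule.finrank_eq_one_of_isMulCommutative (Algebra.adjoin F T) W F
  obtain ⟨w, hw0, hw⟩ := finrank_eq_one_iff'.mp hrank
  refine ⟨w, by simpa using hw0, fun f hf => ?_⟩
  obtain ⟨c, hc⟩ := hw ((⟨f, Algebra.subset_adjoin hf⟩ : Algebra.adjoin F T) • w)
  exact ⟨c, (congrArg Subtype.val hc).symm⟩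

theorem exists_common_eigenvector_of_mapsTo {E : Submodule F V} [FiniteDimensional F E]
    (hE : E ≠ ⊥) {T : Set (Module.End F V)} (hT : ∀ f ∈ T, ∀ v ∈ E, f v ∈ E)
    (hcomm : ∀ f ∈ T, ∀ g ∈ T, ∀ v ∈ E, f (g v) = g (f v)) :
    ∃ v ∈ E, v ≠ 0 ∧ ∀ f ∈ T, ∃ c : F, f v = c • v := by
  have : Nontrivial E := Submodule.nontrivial_iff_ne_bot.mpr hE
  obtain ⟨v, hv0, hv⟩ := exists_common_eigenvector
    (T := Set.range fun f : T => f.1.restrict (hT f f.2)) (by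
      rintro _ ⟨f, rfl⟩ _ ⟨g, rfl⟩
      ext v
      exact hcomm f f.2 g g.2 v v.2)
  refine ⟨v, v.2, by simpa using hv0, fun f hf => ?_⟩
  obtain ⟨c, hc⟩ := hv _ ⟨⟨f, hf⟩, rfl⟩
  exact ⟨c, congrArg Subtype.val hc⟩

theorem not_forall_blockTriangular_of_irredOn {K : Type*} [Field K] [Algebra F K]
    {n : ℕ} {H : Subgroup (GL (Fin n) F)} (hirr : IrredOn H) {A : Matrix (Fin n) (Fin n) K}
    (hA : A.det ≠ 0) {lam : Fin n → ℝ} {i j : Fin n} (hlt : lam i < lam j) :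
    ¬ ∀ h ∈ H, (A⁻¹ * h.1.map (algebraMap F K) * A).BlockTriangular lam := by
  intro hT
  have hAu : IsUnit A.det := isUnit_iff_ne_zero.mpr hA
  have hzero (a b : Fin n) : A⁻¹ j a * A b i = 0 := by
    have hsingle := blockTriangular_conj_of_mem_adjoin hAu (Set.forall_mem_image.mpr hT)
      (M := Matrix.single a b 1) (adjoin_eq_top_of_irredOn hirr ▸ Algebra.mem_top) hlt
    rw [Matrix.map_single _ _ _ _, map_one, Matrix.mul_apply, Finset.sum_eq_single b] at hsingle
    · simpa using hsingle
    · intro l _ hl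
      rw [Matrix.mul_single_apply_of_ne (hbj := hl), zero_mul]
    · simp
  obtain ⟨a, ha⟩ := exists_ne_zero_of_det_ne_zero
    ((Matrix.isUnit_nonsing_inv_det A hAu).ne_zero) j
  obtain ⟨b, hb⟩ := exists_ne_zero_of_det_ne_zero (A.det_transpose.trans_ne hA) i
  exact (mul_ne_zero ha hb) (hzero a b)

end Burnside

section ValuationRings

variable {F K : Type*} [Field F] [Field K] [Algebra F K]

theorem exists_valuationSubring_notMem [IsAlgClosed F] {t : K}
    (ht : t ∉ Set.range (algebraMap F K)) :
    ∃ O : ValuationSubring K, (∀ c, algebraMap F K c ∈ O) ∧ t ∉ O := by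
  by_contra! hcon
  have hint : t ∈ (integralClosure (Subring.closure (Set.range (algebraMap F K))) K).toSubring := by
    rw [← iInf_valuationSubring_superset]
    simp only [Subring.mem_iInf]
    exact fun V => hcon V fun c => V.2 ⟨c, rfl⟩
  rw [← RingHom.coe_range, Subring.closure_eq] at hint
  have hintegral : IsIntegral F t :=
    letI := (algebraMap F K).rangeRestrict.toAlgebra
    have := Algebra.isIntegral_of_surjective (algebraMap F K).rangeRestrict_surjective
    have : IsScalarTower F (algebraMap F K).range K := .of_algebraMap_eq fun _ => rfl
    isIntegral_trans (A := (algebraMap F K).range) t hint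
  exact ht (minpoly.mem_range_of_degree_eq_one F t
    (IsAlgClosed.degree_eq_one_of_irreducible F (minpoly.irreducible hintegral)))

theorem IsMonomial.valuation_det {m Γ : Type*} [Fintype m] [DecidableEq m]
    [LinearOrderedCommGroupWithZero Γ] {g : Matrix m m K} {σ : Equiv.Perm m}
    (hg : IsMonomial g σ) (v : Valuation K Γ) : v g.det = ∏ l, v (g (σ.symm l) l) := by
  have hdiag : g.submatrix σ.symm id = Matrix.diagonal fun l => g (σ.symm l) l := by
    ext i j
    rcases eq_or_ne i j with rfl | hij
    · simp
    · rw [Matrix.diagonal_apply_ne _ hij, Matrix.submatrix_apply, id]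
      by_contra h
      exact hij (by simpa using ((hg _ _).mp h).symm)
  have hdet := congrArg v (Matrix.det_permute σ.symm g)
  rw [hdiag, Matrix.det_diagonal, map_prod, map_mul] at hdet
  rcases Int.units_eq_one_or (Equiv.Perm.sign σ.symm) with h | h <;> simpa [h] using hdet.symm

end ValuationRings

noncomputable section GaussBall

variable {K : Type*} [Field K]

/-- The polynomials whose coefficients are bounded by the corresponding monomials in the `y q`:
the unit ball of the Gauss norm in which the `q`-th variable has norm `(y q)⁻¹`. -/
def gaussBall {Γ σ : Type*} [LinearOrderedCommGroupWithZero Γ] (v : Valuation K Γ) (y : σ → Γ) :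
    Subring (MvPolynomial σ K) where
  carrier := {p | ∀ β, v (coeff β p) ≤ β.prod fun q e => y q ^ e}
  zero_mem' β := by simp
  one_mem' β := by
    classical
    rw [coeff_one]
    split_ifs with h
    · simp [← h]
    · simp
  add_mem' hp hq β := v.map_add_le (hp β) (hq β)
  neg_mem' hp β := by simpa using hp β
  mul_mem' hp hq β := by
    classical
    rw [coeff_mul]
    refine v.map_sum_le fun x hx => ?_
    rw [map_mul, ← Finset.HasAntidiagonal.mem_antidiagonal.mp hx,
      Finsupp.prod_add_index' (by simp) (by simp [pow_add])]
    exact mul_le_mul' (hp _) (hq _)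

theorem monomial_mem_gaussBall {Γ σ : Type*} [LinearOrderedCommGroupWithZero Γ]
    {v : Valuation K Γ} {y : σ → Γ} {a : K} {α : σ →₀ ℕ} (ha : v a ≤ α.prod fun q e => y q ^ e) :
    monomial α a ∈ gaussBall v y := by
  classical
  intro β
  rw [coeff_monomial]
  split_ifs with h
  · exact h ▸ ha
  · simp

variable {m ι : Type*} [Fintype m] {O : ValuationSubring K}

theorem leftSubst_map_mem_gaussBall {y : m → O.ValueGroup} {g : Matrix m m K}
    (hg : ∀ i j, O.valuation (g i j) ≤ y j) (r : MvPolynomial (m × ι) O) :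
    leftSubst g (map (algebraMap O K) r) ∈ gaussBall O.valuation fun q : m × ι => y q.1 := by
  induction r using MvPolynomial.induction_on with
  | C a =>
    rw [map_C, algHom_C, algebraMap_eq]
    exact monomial_mem_gaussBall (by simp)
  | add p q hp hq =>
    rw [map_add, map_add]
    exact add_mem hp hq
  | mul_X p q hp =>
    rw [map_mul, map_mul, map_X, leftSubst_X]
    refine mul_mem hp (sum_mem fun l _ => ?_)
    rw [C_mul_X_eq_monomial]
    exact monomial_mem_gaussBall (by simpa using hg q.1 l)

theorem exists_forall_valuation_coeff_leftSubst_le [DecidableEq m] [Fintype ι] {g : Matrix m m K}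
    (hg : g.det ≠ 0) :
    ∃ U : Matrix m m O, U.det = 1 ∧ ∃ y : m → O.ValueGroup, O.valuation g.det = ∏ l, y l ∧
      ∀ (r : MvPolynomial (m × ι) O) (β : m × ι →₀ ℕ),
        O.valuation (coeff β (leftSubst (U.map (algebraMap O K))
          (leftSubst g (map (algebraMap O K) r)))) ≤ ∏ l, y l ^ ∑ j, β (l, j) := by
  obtain ⟨V, U, hV, hU, σ, hσ⟩ := exists_valuationSubring_isMonomial O hg
  set g' := V.map (algebraMap O K) * g * U.map (algebraMap O K) with hg'
  have hdet (W : Matrix m m O) (hW : W.det = 1) : (W.map (algebraMap O K)).det = 1 := by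
    rw [← RingHom.mapMatrix_apply, ← RingHom.map_det, hW, map_one]
  refine ⟨U, hU, fun l => O.valuation (g' (σ.symm l) l), ?_, fun r β => ?_⟩
  · rw [← hσ.valuation_det, hg', Matrix.det_mul, Matrix.det_mul, hdet V hV, hdet U hU, one_mul,
      mul_one]
  · have hVinv : V.adjugate.map (algebraMap O K) * V.map (algebraMap O K) = 1 := by
      rw [← Matrix.map_mul, Matrix.adjugate_mul, hV, one_smul]
      exact Matrix.map_one _ (map_zero _) (map_one _)
    have heq : leftSubst (U.map (algebraMap O K)) (leftSubst g (map (algebraMap O K) r)) =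
        leftSubst g' (map (algebraMap O K) (leftSubst V.adjugate r)) := by
      rw [map_leftSubst, leftSubst_leftSubst, leftSubst_leftSubst, hg', ← Matrix.mul_assoc,
        ← Matrix.mul_assoc, hVinv, Matrix.one_mul]
    have hle := leftSubst_map_mem_gaussBall (g := g') (y := fun l => O.valuation (g' (σ.symm l) l))
      (fun i j => by
        by_cases h : g' i j = 0
        · rw [h, map_zero]
          exact zero_le
        · rw [(hσ i j).mp h, Equiv.symm_apply_apply]) (leftSubst V.adjugate r) β
    rw [heq]
    refine hle.trans_eq ?_
    rw [Finsupp.prod_fintype _ _ (by simp), Fintype.prod_prod_type]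
    simp only [Finset.prod_pow_eq_pow_sum]

end GaussBall

noncomputable section Reduction

variable {K : Type*} [Field K] {O : ValuationSubring K}

theorem exists_map_eq_C_mul_residue_ne_zero {σ : Type*} {p : MvPolynomial σ K} {α : σ →₀ ℕ}
    (hα : coeff α p ∉ O) :
    ∃ c : K, O.valuation c < 1 ∧ ∃ q : MvPolynomial σ O,
      map (algebraMap O K) q = C c * p ∧ map (IsLocalRing.residue O) q ≠ 0 := by
  have hα0 : α ∈ p.support := mem_support_iff.mpr fun h => hα (h ▸ O.zero_mem)
  obtain ⟨α₁, -, hmax⟩ :=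
    Finset.exists_max_image p.support (fun β => O.valuation (coeff β p)) ⟨α, hα0⟩
  have hlt : 1 < O.valuation (coeff α₁ p) :=
    (not_le.mp fun h => hα ((O.valuation_le_one_iff _).mp h)).trans_le (hmax α hα0)
  have hne : coeff α₁ p ≠ 0 := (Valuation.ne_zero_iff _).mp (zero_lt_one.trans hlt).ne'
  obtain ⟨q, hq⟩ : C (coeff α₁ p)⁻¹ * p ∈ Set.range (map (algebraMap O K)) := by
    rw [mem_range_map_iff_coeffs_subset]
    intro x hx
    obtain ⟨β, hβ, rfl⟩ := mem_coeffs_iff.mp hx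
    have hle : O.valuation ((coeff α₁ p)⁻¹ * coeff β p) ≤ 1 := by
      rw [map_mul, map_inv₀, inv_mul_le_iff₀ (zero_lt_one.trans hlt), mul_one]
      exact hmax β (mem_support_iff.mpr fun h => by simp [coeff_C_mul, h] at hβ)
    rw [coeff_C_mul]
    exact ⟨⟨_, (O.valuation_le_one_iff _).mp hle⟩, rfl⟩
  refine ⟨_, (map_inv₀ O.valuation _).trans_lt (inv_lt_one_of_one_lt₀ hlt), q, hq, fun h => ?_⟩
  have hone : coeff α₁ q = 1 := Subtype.val_injective (by
    simpa [coeff_map, coeff_C_mul, hne] using congrArg (coeff α₁) hq)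
  simpa [coeff_map, hone] using congrArg (coeff α₁) h

theorem residue_coeff_ne_zero_iff {σ : Type*} (q : MvPolynomial σ O) (β : σ →₀ ℕ) :
    coeff β (map (IsLocalRing.residue O) q) ≠ 0 ↔
      O.valuation (coeff β (map (algebraMap O K) q)) = 1 := by
  rw [coeff_map, coeff_map, IsLocalRing.residue_ne_zero_iff_isUnit]
  exact O.valuation_eq_one_iff _

end Reduction

noncomputable section Eigenvector

variable {F R K k : Type*} [Field F] [CommRing R] [CommRing K] [CommRing k]
  [Algebra F R] [Algebra F K] [Algebra F k] {m ι : Type*} [Fintype m]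

theorem mapAlgHom_leftSubst_map (φ : R →ₐ[F] K) (A : Matrix m m F) (q : MvPolynomial (m × ι) R) :
    mapAlgHom φ (leftSubst (A.map (algebraMap F R)) q) =
      leftSubst (A.map (algebraMap F K)) (mapAlgHom φ q) := by
  have hφF : ⇑(φ : R →+* K) ∘ ⇑(algebraMap F R) = ⇑(algebraMap F K) := funext φ.commutes
  change map (φ : R →+* K) _ = leftSubst _ (map (φ : R →+* K) q)
  rw [map_leftSubst, Matrix.map_map, hφF]

theorem exists_eigenvector_mapAlgHom [IsAlgClosed F] {L : Submodule F (MvPolynomial (m × ι) K)}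
    [FiniteDimensional F L] {S : Set (Matrix m m F)}
    (hS : ∀ A ∈ S, ∀ p ∈ L, leftSubst (A.map (algebraMap F K)) p ∈ L)
    (hcomm : ∀ A ∈ S, ∀ B ∈ S, ∀ p ∈ L,
      leftSubst (A.map (algebraMap F K)) (leftSubst (B.map (algebraMap F K)) p) =
        leftSubst (B.map (algebraMap F K)) (leftSubst (A.map (algebraMap F K)) p))
    {φ : R →ₐ[F] K} (hφ : Function.Injective φ) (ρ : R →ₐ[F] k)
    {q : MvPolynomial (m × ι) R} (hqL : mapAlgHom φ q ∈ L) (hq : mapAlgHom ρ q ≠ 0) :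
    ∃ q' : MvPolynomial (m × ι) R, mapAlgHom φ q' ∈ L ∧ mapAlgHom ρ q' ≠ 0 ∧ ∀ A ∈ S, ∃ c : k,
      leftSubst (A.map (algebraMap F k)) (mapAlgHom ρ q') = C c * mapAlgHom ρ q' := by
  have hinj : Function.Injective (mapAlgHom (σ := m × ι) φ) := map_injective _ hφ
  let N := L.comap (mapAlgHom (σ := m × ι) φ).toLinearMap
  have : FiniteDimensional F N :=
    .of_injective ((mapAlgHom φ).toLinearMap.restrict (p := N) (q := L) fun _ h => h)
      fun _ _ h => Subtype.ext (hinj (congrArg Subtype.val h))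
  let T (A : Matrix m m F) :=
    (leftSubst (ι := ι) (A.map (algebraMap F k))).toLinearMap.restrictScalars F
  obtain ⟨_, ⟨q', hq'L, rfl⟩, hq'0, hq'⟩ := exists_common_eigenvector_of_mapsTo
    (E := N.map (mapAlgHom ρ).toLinearMap) (T := T '' S)
    ((Submodule.ne_bot_iff _).mpr ⟨_, ⟨q, hqL, rfl⟩, hq⟩)
    (by
      rintro _ ⟨A, hA, rfl⟩ _ ⟨p, hp, rfl⟩
      refine ⟨leftSubst (A.map (algebraMap F R)) p, ?_, mapAlgHom_leftSubst_map ρ A p⟩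
      have hmem := hS A hA _ hp
      rwa [AlgHom.toLinearMap_apply, ← mapAlgHom_leftSubst_map] at hmem)
    (by
      rintro _ ⟨A, hA, rfl⟩ _ ⟨B, hB, rfl⟩ _ ⟨p, hp, rfl⟩
      have heq : leftSubst (A.map (algebraMap F R)) (leftSubst (B.map (algebraMap F R)) p) =
          leftSubst (B.map (algebraMap F R)) (leftSubst (A.map (algebraMap F R)) p) :=
        hinj (by
          simp only [mapAlgHom_leftSubst_map]
          exact hcomm A hA B hB _ hp)
      have hred := congrArg (mapAlgHom ρ) heq
      simp only [mapAlgHom_leftSubst_map] at hred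
      exact hred)
  refine ⟨q', hq'L, hq'0, fun A hA => ?_⟩
  obtain ⟨c, hc⟩ := hq' _ ⟨A, hA, rfl⟩
  refine ⟨algebraMap F k c, hc.trans ?_⟩
  rw [← MvPolynomial.smul_eq_C_mul, algebraMap_smul]
  rfl

end Eigenvector

noncomputable section Specialization

variable {K : Type*} [Field K] {O : ValuationSubring K} {n : ℕ} {ι : Type*}

theorem exists_real_weight_pos_of_one_lt_prod_zpow {Γ : Type*} [LinearOrderedCommGroupWithZero Γ]
    {y : Fin n → Γ} (hy : ∀ l, y l ≠ 0) (P : Finset (Fin n → ℤ))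
    (hP : ∀ a ∈ P, 1 < ∏ l, y l ^ a l) :
    ∃ lam : Fin n → ℝ, ∀ a ∈ P, 0 < ∑ l, (a l : ℝ) * lam l := by
  let u (l : Fin n) : Γˣ := Units.mk0 (y l) (hy l)
  let f : (Fin n → ℤ) →+ Additive Γˣ := AddMonoidHom.mk'
    (fun a => Additive.ofMul (∏ l, u l ^ a l)) fun a b => by
      simp only [Pi.add_apply, _root_.zpow_add, Finset.prod_mul_distrib, ofMul_mul]
  refine exists_real_weight_pos f P fun a ha => ?_
  change (1 : Γˣ) < ∏ l, u l ^ a l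
  rw [← Units.val_lt_val]
  simpa [u] using hP a ha

theorem one_lt_prod_zpow_of_valuation_eq_one {γ : Matrix (Fin n) (Fin n) K} (hγ : γ.det ≠ 0) {d : ℕ}
    {y : Fin n → O.ValueGroup} (hy : O.valuation γ.det = ∏ l, y l) {c x : K}
    (hc : O.valuation c < 1) {e : Fin n → ℕ} (hx : O.valuation x ≤ ∏ l, y l ^ e l)
    (hone : O.valuation (c * (γ.det ^ d)⁻¹ * x) = 1) :
    1 < ∏ l, y l ^ ((e l : ℤ) - d) := by
  have hprod : ∏ l, y l ≠ 0 := hy ▸ (Valuation.ne_zero_iff _).mpr hγ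
  have hy0 (l : Fin n) : y l ≠ 0 := Finset.prod_ne_zero_iff.mp hprod l (Finset.mem_univ l)
  have hsplit : ∏ l, y l ^ ((e l : ℤ) - d) = (∏ l, y l ^ e l) * (O.valuation γ.det ^ d)⁻¹ := by
    simp only [zpow_sub₀ (hy0 _), zpow_natCast, div_eq_mul_inv, Finset.prod_mul_distrib,
      Finset.prod_inv_distrib, Finset.prod_pow, hy]
  have hpos : 0 < (∏ l, y l ^ e l) * (O.valuation γ.det ^ d)⁻¹ :=
    zero_lt_iff.mpr (mul_ne_zero (Finset.prod_ne_zero_iff.mpr fun l _ => pow_ne_zero _ (hy0 l))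
      (inv_ne_zero (pow_ne_zero _ (hy ▸ hprod))))
  calc 1 = O.valuation c * (O.valuation x * (O.valuation γ.det ^ d)⁻¹) := by
        rw [← hone, map_mul, map_mul, map_inv₀, map_pow, mul_assoc, mul_comm (O.valuation x)]
    _ ≤ O.valuation c * ((∏ l, y l ^ e l) * (O.valuation γ.det ^ d)⁻¹) := by gcongr
    _ < 1 * ((∏ l, y l ^ e l) * (O.valuation γ.det ^ d)⁻¹) := mul_lt_mul_of_pos_right hc hpos
    _ = ∏ l, y l ^ ((e l : ℤ) - d) := by rw [one_mul, hsplit]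

theorem exists_destabilizing_weight_residue [Finite ι] {γ : Matrix (Fin n) (Fin n) K}
    (hγ : γ.det ≠ 0) {d : ℕ} {c : K} (hc : O.valuation c < 1) {q r : MvPolynomial (Fin n × ι) O}
    (hq : map (algebraMap O K) q = C (c * (γ.det ^ d)⁻¹) * leftSubst γ (map (algebraMap O K) r)) :
    ∃ U : Matrix (Fin n) (Fin n) (IsLocalRing.ResidueField O), U.det = 1 ∧ ∃ lam : Fin n → ℝ,
      ∀ β, coeff β (leftSubst U (map (IsLocalRing.residue O) q)) ≠ 0 →
        d * ∑ l, lam l < rowWeight lam β := by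
  cases nonempty_fintype ι
  obtain ⟨U, hU, y, hy, hle⟩ := exists_forall_valuation_coeff_leftSubst_le (O := O) (ι := ι) hγ
  have hy0 (l : Fin n) : y l ≠ 0 := Finset.prod_ne_zero_iff.mp
    (hy ▸ (Valuation.ne_zero_iff _).mpr hγ : ∏ l, y l ≠ 0) l (Finset.mem_univ l)
  set w := leftSubst (U.map (IsLocalRing.residue O)) (map (IsLocalRing.residue O) q) with hw
  have hone (β) (hβ : coeff β w ≠ 0) : 1 < ∏ l, y l ^ (((∑ j, β (l, j) : ℕ) : ℤ) - d) := by
    rw [hw, ← map_leftSubst, residue_coeff_ne_zero_iff, map_leftSubst, hq, map_mul, algHom_C,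
      algebraMap_eq, coeff_C_mul] at hβ
    exact one_lt_prod_zpow_of_valuation_eq_one hγ hy hc (hle r β) hβ
  obtain ⟨lam, hlam⟩ := exists_real_weight_pos_of_one_lt_prod_zpow hy0
    (w.support.image fun β l => ((∑ j, β (l, j) : ℕ) : ℤ) - d) (by
      rw [Finset.forall_mem_image]
      exact fun β hβ => hone β (mem_support_iff.mp hβ))
  refine ⟨U.map (IsLocalRing.residue O), ?_, lam, fun β hβ => ?_⟩
  · rw [← RingHom.mapMatrix_apply, ← RingHom.map_det, hU, map_one]
  · have hpos := hlam _ (Finset.mem_image_of_mem _ (mem_support_iff.mpr hβ))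
    simp only [Int.cast_sub, Int.cast_natCast, sub_mul, Finset.sum_sub_distrib,
      ← Finset.mul_sum, sub_pos] at hpos
    rwa [rowWeight_eq_sum]

end Specialization

noncomputable section Semistability

variable {F : Type*} [Field F] {n : ℕ} {ι : Type*} {H : Subgroup (GL (Fin n) F)}

theorem not_destabilizing_of_irredOn {k : Type*} [Field k] [Algebra F k] [IsAlgClosed F] [Finite ι]
    (hirr : IrredOn H)
    {w : MvPolynomial (Fin n × ι) k} (hw : w ≠ 0) {d : ℕ} (hhom : w.IsHomogeneous (n * d))
    (hsemi : ∀ h ∈ H, ∃ c, leftSubst (h.1.map (algebraMap F k)) w = C c * w)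
    {A : Matrix (Fin n) (Fin n) k} (hA : A.det ≠ 0) (lam : Fin n → ℝ) :
    ¬ ∀ β, coeff β (leftSubst A w) ≠ 0 → d * ∑ l, lam l < rowWeight lam β := by
  intro hlam
  obtain ⟨B, hB, mu, ⟨i, j, hij⟩, htri⟩ := exists_blockTriangular_of_destabilizing hw
    (by rwa [Fintype.card_fin]) hA hlam
  refine not_forall_blockTriangular_of_irredOn hirr hB hij fun h hh => ?_
  obtain ⟨c, hc⟩ := hsemi h hh
  refine htri _ ?_ c hc
  rw [← RingHom.mapMatrix_apply, ← RingHom.map_det, map_ne_zero]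
  exact (Matrix.isUnits_det_units h).ne_zero

variable {K : Type*} [Field K] [Algebra F K] {d : ℕ} {M : Submodule F (MvPolynomial (Fin n × ι) F)}
  {γ : Matrix (Fin n) (Fin n) K}

theorem coeff_leftSubst_mem_valuationSubring [IsAlgClosed F] [Finite ι] [FiniteDimensional F M]
    (hirr : IrredOn H) (hhom : ∀ p ∈ M, p.IsHomogeneous (n * d))
    (hstable : ∀ h ∈ H, ∀ p ∈ M, leftSubst h.1 p ∈ M)
    (hcomm : ∀ h ∈ H, ∀ h' ∈ H, ∀ p ∈ M,
      leftSubst h.1 (leftSubst h'.1 p) = leftSubst h'.1 (leftSubst h.1 p))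
    (hγ : γ.det ≠ 0) (hγH : ∀ h ∈ H, ∀ p ∈ M,
      leftSubst (h.1.map (algebraMap F K)) (leftSubst γ (map (algebraMap F K) p)) =
        leftSubst γ (map (algebraMap F K) (leftSubst h.1 p)))
    (O : ValuationSubring K) [Algebra F O] [IsScalarTower F O K]
    {p : MvPolynomial (Fin n × ι) F} (hp : p ∈ M) (α : Fin n × ι →₀ ℕ) :
    (γ.det ^ d)⁻¹ * coeff α (leftSubst γ (map (algebraMap F K) p)) ∈ O := by
  by_contra hα
  rw [← coeff_C_mul] at hα
  obtain ⟨c, hc, q, hq, hq0⟩ := exists_map_eq_C_mul_residue_ne_zero hα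
  let T : MvPolynomial (Fin n × ι) F →ₗ[F] MvPolynomial (Fin n × ι) K :=
    LinearMap.mulLeft F (C (c * (γ.det ^ d)⁻¹)) ∘ₗ
      (leftSubst γ).toLinearMap.restrictScalars F ∘ₗ (mapAlgHom (Algebra.ofId F K)).toLinearMap
  have hT (r) : T r = C (c * (γ.det ^ d)⁻¹) * leftSubst γ (map (algebraMap F K) r) := rfl
  have hHT (h) (hh : h ∈ H) (r) (hr : r ∈ M) :
      leftSubst (h.1.map (algebraMap F K)) (T r) = T (leftSubst h.1 r) := by
    rw [hT, hT, map_mul, algHom_C, algebraMap_eq, hγH h hh r hr]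
  obtain ⟨q', ⟨r, hr, hrq'⟩, hq'0, hq'⟩ := exists_eigenvector_mapAlgHom (L := M.map T)
    (S := (fun h : GL (Fin n) F => h.1) '' H) (q := q)
    (by
      rintro _ ⟨h, hh, rfl⟩ _ ⟨r, hr, rfl⟩
      exact ⟨_, hstable h hh r hr, (hHT h hh r hr).symm⟩)
    (by
      rintro _ ⟨h, hh, rfl⟩ _ ⟨h', hh', rfl⟩ _ ⟨r, hr, rfl⟩
      rw [hHT h' hh' r hr, hHT h hh _ (hstable h' hh' r hr), hHT h hh r hr,
        hHT h' hh' _ (hstable h hh r hr), hcomm h hh h' hh' r hr])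
    (φ := IsScalarTower.toAlgHom F O K) Subtype.val_injective
    (IsScalarTower.toAlgHom F O (IsLocalRing.ResidueField O))
    ⟨p, hp, by rw [hT, C_mul, mul_assoc]; exact hq.symm⟩ hq0
  obtain ⟨U, hU, lam, hlam⟩ := exists_destabilizing_weight_residue hγ (d := d) hc (q := q')
    (r := map (algebraMap F O) r)
    (by
      rw [MvPolynomial.map_map, ← IsScalarTower.algebraMap_eq]
      exact hrq'.symm.trans (hT r))
  refine not_destabilizing_of_irredOn hirr hq'0 ?_ (fun h hh => hq' _ ⟨h, hh, rfl⟩)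
    (hU ▸ one_ne_zero) lam hlam
  have hhom' : (map (algebraMap O K) q').IsHomogeneous (n * d) := by
    change (mapAlgHom (IsScalarTower.toAlgHom F O K) q').IsHomogeneous (n * d)
    rw [← hrq', hT, ← zero_add (n * d)]
    exact (isHomogeneous_C _ _).mul (isHomogeneous_leftSubst _ ((hhom r hr).map _))
  exact (IsHomogeneous.of_map Subtype.val_injective hhom').map _

theorem coeff_leftSubst_mem_range_algebraMap [IsAlgClosed F] [Finite ι] [FiniteDimensional F M]
    (hirr : IrredOn H) (hhom : ∀ p ∈ M, p.IsHomogeneous (n * d))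
    (hstable : ∀ h ∈ H, ∀ p ∈ M, leftSubst h.1 p ∈ M)
    (hcomm : ∀ h ∈ H, ∀ h' ∈ H, ∀ p ∈ M,
      leftSubst h.1 (leftSubst h'.1 p) = leftSubst h'.1 (leftSubst h.1 p))
    (hγ : γ.det ≠ 0) (hγH : ∀ h ∈ H, ∀ p ∈ M,
      leftSubst (h.1.map (algebraMap F K)) (leftSubst γ (map (algebraMap F K) p)) =
        leftSubst γ (map (algebraMap F K) (leftSubst h.1 p)))
    {p : MvPolynomial (Fin n × ι) F} (hp : p ∈ M) (α : Fin n × ι →₀ ℕ) :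
    (γ.det ^ d)⁻¹ * coeff α (leftSubst γ (map (algebraMap F K) p)) ∈
      Set.range (algebraMap F K) := by
  by_contra ht
  obtain ⟨O, hFO, htO⟩ := exists_valuationSubring_notMem ht
  let _ : Algebra F O := ((algebraMap F K).codRestrict O hFO).toAlgebra
  have : IsScalarTower F O K := .of_algebraMap_eq fun _ => rfl
  exact htO (coeff_leftSubst_mem_valuationSubring hirr hhom hstable hcomm hγ hγH O hp α)

end Semistability

noncomputable section GenericPoint

universe u

variable {F : Type u} [Field F] {n : ℕ} {ι : Type*} {H : Subgroup (GL (Fin n) F)}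

variable (F n) in
/-- The generic matrix, with entries in the coordinate ring of the space of matrices. -/
abbrev genericMatrix : Matrix (Fin n) (Fin n) (MvPolynomial (Fin n × Fin n) F) :=
  mvPolynomialX (Fin n) (Fin n) F

theorem map_evalAt_genericMatrix {B : Type*} [CommRing B] [Algebra F B]
    (A : Matrix (Fin n) (Fin n) B) :
    (genericMatrix F n).map (evalAt A) = A := by
  ext i j
  simp

theorem map_leftSubst_genericMatrix {B : Type*} [CommRing B] [Algebra F B]
    (φ : MvPolynomial (Fin n × Fin n) F →ₐ[F] B) (p : MvPolynomial (Fin n × ι) F) :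
    MvPolynomial.map φ.toRingHom (leftSubst (genericMatrix F n) (MvPolynomial.map C p)) =
      leftSubst ((genericMatrix F n).map φ) (MvPolynomial.map (algebraMap F B) p) := by
  rw [map_leftSubst, MvPolynomial.map_map, ← algebraMap_eq]
  exact congrArg (fun ψ => leftSubst _ (MvPolynomial.map ψ p)) φ.comp_algebraMap

theorem map_evalAt_leftSubst_genericMatrix (A : Matrix (Fin n) (Fin n) F)
    (p : MvPolynomial (Fin n × ι) F) :
    MvPolynomial.map (evalAt (F := F) A).toRingHom
      (leftSubst (genericMatrix F n) (MvPolynomial.map C p)) = leftSubst A p := by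
  rw [map_leftSubst_genericMatrix, map_evalAt_genericMatrix, Algebra.algebraMap_self,
    MvPolynomial.map_id]

theorem exists_algHom_field_ker_eq_vanishingIdeal {S : Set (GL (Fin n) F)} (hS : IsIrreducible S) :
    ∃ (K : Type u) (_ : Field K) (_ : Algebra F K) (π : MvPolynomial (Fin n × Fin n) F →ₐ[F] K),
      RingHom.ker π = vanishingIdeal S := by
  have := isPrime_vanishingIdeal hS
  let A := MvPolynomial (Fin n × Fin n) F ⧸ vanishingIdeal S
  refine ⟨FractionRing A, inferInstance, inferInstance,
    (IsScalarTower.toAlgHom F A (FractionRing A)).comp (Ideal.Quotient.mkₐ F _), ?_⟩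
  ext p
  rw [RingHom.mem_ker, AlgHom.comp_apply, IsScalarTower.coe_toAlgHom',
    FaithfulSMul.algebraMap_eq_zero_iff, Ideal.Quotient.mkₐ_eq_mk, Ideal.Quotient.eq_zero_iff_mem]

variable {K : Type*} [Field K] [Algebra F K] {π : MvPolynomial (Fin n × Fin n) F →ₐ[F] K}
  {S : Set (GL (Fin n) F)}

theorem map_eq_map_of_forall_map_evalAt_eq {σ : Type*} (hπ : RingHom.ker π = vanishingIdeal S)
    {P Q : MvPolynomial σ (MvPolynomial (Fin n × Fin n) F)}
    (hPQ : ∀ g ∈ S, MvPolynomial.map (evalAt (F := F) g.1).toRingHom P =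
      MvPolynomial.map (evalAt (F := F) g.1).toRingHom Q) :
    MvPolynomial.map π.toRingHom P = MvPolynomial.map π.toRingHom Q := by
  ext β
  have hker : coeff β P - coeff β Q ∈ RingHom.ker π := by
    rw [hπ, mem_vanishingIdeal]
    intro g hg
    have := congrArg (coeff β) (hPQ g hg)
    rw [coeff_map, coeff_map] at this
    rw [map_sub]
    exact sub_eq_zero.mpr this
  rw [RingHom.mem_ker, map_sub, sub_eq_zero] at hker
  rw [coeff_map, coeff_map]
  exact hker

theorem det_map_genericMatrix {B : Type*} [CommRing B] [Algebra F B]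
    (φ : MvPolynomial (Fin n × Fin n) F →ₐ[F] B) :
    ((genericMatrix F n).map φ).det = φ (genericMatrix F n).det :=
  (φ.map_det _).symm

theorem det_map_genericMatrix_ne_zero (hπ : RingHom.ker π = vanishingIdeal S) (hS : S.Nonempty) :
    ((genericMatrix F n).map π).det ≠ 0 := by
  obtain ⟨g, hg⟩ := hS
  rw [det_map_genericMatrix]
  intro hdet
  rw [← RingHom.mem_ker, hπ, mem_vanishingIdeal] at hdet
  refine (Matrix.GeneralLinearGroup.det g).ne_zero ?_
  rw [Matrix.GeneralLinearGroup.val_det_apply, ← evalAt_det_mvPolynomialX (F := F) g.1, hdet g hg]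

theorem map_C_map_algHom {B : Type*} [CommRing B] [Algebra F B] (A : Matrix (Fin n) (Fin n) F)
    (φ : MvPolynomial (Fin n × Fin n) F →ₐ[F] B) :
    (A.map C).map φ.toRingHom = A.map (algebraMap F B) :=
  Matrix.ext fun _ _ => φ.commutes _

theorem leftSubst_comm_genericMatrix (hπ : RingHom.ker π = vanishingIdeal S) {h : GL (Fin n) F}
    {p : MvPolynomial (Fin n × ι) F}
    (hcomm : ∀ g ∈ S, leftSubst h.1 (leftSubst g.1 p) = leftSubst g.1 (leftSubst h.1 p)) :
    leftSubst (h.1.map (algebraMap F K))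
        (leftSubst ((genericMatrix F n).map π) (MvPolynomial.map (algebraMap F K) p)) =
      leftSubst ((genericMatrix F n).map π)
        (MvPolynomial.map (algebraMap F K) (leftSubst h.1 p)) := by
  rw [← map_leftSubst_genericMatrix, ← map_leftSubst_genericMatrix, ← map_C_map_algHom h.1 π,
    ← map_leftSubst]
  refine map_eq_map_of_forall_map_evalAt_eq hπ fun g hg => ?_
  rw [map_leftSubst, map_evalAt_leftSubst_genericMatrix, map_evalAt_leftSubst_genericMatrix,
    ← hcomm g hg, map_C_map_algHom]
  rfl

end GenericPoint

noncomputable section SemiInvariants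

variable {F : Type*} [Field F] {n : ℕ} {ι : Type*} {D : Subgroup (GL (Fin n) F)} {χ : D →* F}
  {s : ℕ} {p : MvPolynomial (Fin n × ι) F}

variable (ι) in
/-- The forms of degree `s` on which `D` acts by left substitution through the character `χ`. -/
def semiInvariants (D : Subgroup (GL (Fin n) F)) (χ : D →* F) (s : ℕ) :
    Submodule F (MvPolynomial (Fin n × ι) F) :=
  homogeneousSubmodule _ F s ⊓ ⨅ d : D, Module.End.eigenspace (leftSubst d.1.1).toLinearMap (χ d)

theorem mem_semiInvariants : p ∈ semiInvariants ι D χ s ↔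
    p.IsHomogeneous s ∧ ∀ d : D, leftSubst d.1.1 p = χ d • p := by
  simp [semiInvariants]

instance [Finite ι] : FiniteDimensional F (semiInvariants ι D χ s) := by
  have : Module.Finite F (homogeneousSubmodule (Fin n × ι) F s) :=
    .of_fg (homogeneousSubmodule_fg _ _ _)
  exact Submodule.finiteDimensional_of_le inf_le_left

theorem leftSubst_mem_semiInvariants {h : GL (Fin n) F}
    (hχ : ∀ d : D, ∃ d' : D, (d' : GL (Fin n) F) = h * d * h⁻¹ ∧ χ d' = χ d)
    (hp : p ∈ semiInvariants ι D χ s) : leftSubst h.1 p ∈ semiInvariants ι D χ s := by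
  rw [mem_semiInvariants] at hp ⊢
  refine ⟨isHomogeneous_leftSubst _ hp.1, fun d => ?_⟩
  obtain ⟨d', hd', hχd⟩ := hχ d
  have hswap : h.1 * d.1.1 = d'.1.1 * h.1 := by
    rw [← Units.val_mul, ← Units.val_mul, hd', inv_mul_cancel_right]
  rw [leftSubst_leftSubst, hswap, ← leftSubst_leftSubst, hp.2, hχd, map_smul]

theorem pow_mem_semiInvariants (hp : p ∈ semiInvariants ι D χ s) (k : ℕ) :
    p ^ k ∈ semiInvariants ι D (χ ^ k) (s * k) := by
  rw [mem_semiInvariants] at hp ⊢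
  exact ⟨hp.1.pow k, fun d => by rw [map_pow, hp.2 d, smul_pow, MonoidHom.pow_apply]⟩

theorem conj_mem_commutator {G : Type*} [Group G] {H : Subgroup G} {h d : G} (hh : h ∈ H)
    (hd : d ∈ ⁅H, H⁆) : h * d * h⁻¹ ∈ ⁅H, H⁆ :=
  (Subgroup.mem_normalizer_iff.mp (Subgroup.normalizer_commutator_ge_left H H hh) d).mp hd

end SemiInvariants

noncomputable section DetPower

universe u

variable {F : Type u} [Field F] {n : ℕ} {ι : Type*} {H : Subgroup (GL (Fin n) F)} {d : ℕ}
  {p : MvPolynomial (Fin n × ι) F}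

theorem leftSubst_comm_of_mem_semiInvariants (hp : p ∈ semiInvariants ι ⁅H, H⁆ 1 d)
    {h g : GL (Fin n) F} (hh : h ∈ H) (hg : g ∈ H) :
    leftSubst h.1 (leftSubst g.1 p) = leftSubst g.1 (leftSubst h.1 p) := by
  have hswap : g.1 * h.1 = (⁅g, h⁆ : GL (Fin n) F).1 * (h.1 * g.1) := by
    simp only [← Units.val_mul, commutatorElement_def, inv_mul_cancel_right, ← mul_assoc]
  have hinv := (mem_semiInvariants.mp hp).2 ⟨_, Subgroup.commutator_mem_commutator hg hh⟩
  rw [leftSubst_leftSubst, leftSubst_leftSubst, hswap, ← leftSubst_leftSubst, hinv,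
    MonoidHom.one_apply, one_smul]

theorem leftSubst_eq_det_pow_mul_of_mem_semiInvariants [IsAlgClosed F] [Finite ι] (hirr : IrredOn H)
    (hH : IsIrreducible (H : Set (GL (Fin n) F))) (hp : p ∈ semiInvariants ι ⁅H, H⁆ 1 (n * d))
    {h : GL (Fin n) F} (hh : h ∈ H) : leftSubst h.1 p = C (h.1.det ^ d) * p := by
  obtain ⟨K, _, _, π, hπ⟩ := exists_algHom_field_ker_eq_vanishingIdeal hH
  have hdet := det_map_genericMatrix_ne_zero hπ ⟨1, H.one_mem⟩
  have hconst (α) : ∃ c, ∀ g ∈ H, coeff α (leftSubst g.1 p) = g.1.det ^ d * c := by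
    obtain ⟨c, hc⟩ := coeff_leftSubst_mem_range_algebraMap (M := semiInvariants ι ⁅H, H⁆ 1 (n * d))
      hirr (fun q hq => (mem_semiInvariants.mp hq).1)
      (fun g hg q hq => leftSubst_mem_semiInvariants
        (fun x => ⟨⟨_, conj_mem_commutator hg x.2⟩, rfl, rfl⟩) hq)
      (fun g hg g' hg' q hq => leftSubst_comm_of_mem_semiInvariants hq hg hg') hdet
      (fun g hg q hq => leftSubst_comm_genericMatrix hπ
        fun g' hg' => leftSubst_comm_of_mem_semiInvariants hq hg hg') hp α
    refine ⟨c, fun g hg => ?_⟩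
    have hker : coeff α (leftSubst (genericMatrix F n) (MvPolynomial.map C p)) -
        (genericMatrix F n).det ^ d * C c ∈ RingHom.ker π := by
      have hcoeff := congrArg (coeff α) (map_leftSubst_genericMatrix π p)
      rw [coeff_map] at hcoeff
      rw [RingHom.mem_ker, map_sub, map_mul, map_pow, ← det_map_genericMatrix, algHom_C, hc,
        mul_inv_cancel_left₀ (pow_ne_zero d hdet), sub_eq_zero]
      exact hcoeff
    rw [hπ, mem_vanishingIdeal] at hker
    have hcoeff := congrArg (coeff α) (map_evalAt_leftSubst_genericMatrix g.1 p)
    rw [coeff_map] at hcoeff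
    rw [← hcoeff, ← sub_eq_zero, ← hker g hg, map_sub, map_mul, map_pow, evalAt_det_mvPolynomialX,
      algHom_C]
    rfl
  ext α
  obtain ⟨c, hc⟩ := hconst α
  have hone := hc 1 H.one_mem
  rw [Units.val_one, leftSubst_one, det_one, one_pow, one_mul] at hone
  rw [coeff_C_mul, hone, hc h hh]

end DetPower

noncomputable section Forms

universe u

variable {F : Type u} [Field F] {n : ℕ}

theorem evalAt_leftSubst (A B : Matrix (Fin n) (Fin n) F) (p : MvPolynomial (Fin n × Fin n) F) :
    evalAt B (leftSubst A p) = evalAt (A * B) p :=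
  eval_leftSubst A _ p

theorem funext_evalAt [Infinite F] {p q : MvPolynomial (Fin n × Fin n) F}
    (hpq : ∀ A : Matrix (Fin n) (Fin n) F, evalAt A p = evalAt A q) : p = q :=
  MvPolynomial.funext fun x => hpq fun i j => x (i, j)

theorem evalAt_smul {p : MvPolynomial (Fin n × Fin n) F} {r : ℕ} (hp : p.IsHomogeneous r) (c : F)
    (A : Matrix (Fin n) (Fin n) F) : evalAt (c • A) p = c ^ r * evalAt A p := by
  simp only [evalAt, aeval_def, eval₂_eq, Finset.mul_sum]
  refine Finset.sum_congr rfl fun β hβ => ?_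
  have hdeg : ∑ i ∈ β.support, β i = r := by
    simpa [Finsupp.weight_apply, Finsupp.sum] using hp (mem_support_iff.mp hβ)
  simp only [Matrix.smul_apply, smul_eq_mul, mul_pow, Finset.prod_mul_distrib,
    Finset.prod_pow_eq_pow_sum, hdeg]
  ring

theorem evalAt_homogeneousComponent_eq_zero [Infinite F] {p : MvPolynomial (Fin n × Fin n) F}
    {A : Matrix (Fin n) (Fin n) F} (hp : ∀ c : Fˣ, evalAt ((c : F) • A) p = 0) (r : ℕ) :
    evalAt A (homogeneousComponent r p) = 0 := by
  let q : Polynomial F := ∑ s ∈ Finset.range (p.totalDegree + 1),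
    Polynomial.monomial s (evalAt A (homogeneousComponent s p))
  have hq : q = 0 := polynomial_eq_zero_of_forall_units_eval_eq_zero fun c => by
    rw [← hp c, Polynomial.eval_finsetSum]
    conv_rhs => rw [← sum_homogeneousComponent p, map_sum]
    refine Finset.sum_congr rfl fun s _ => ?_
    rw [evalAt_smul (homogeneousComponent_isHomogeneous s p), Polynomial.eval_monomial, mul_comm]
  have hcoeff := congrArg (Polynomial.coeff · r) hq
  simp only [q, Polynomial.finsetSum_coeff, Polynomial.coeff_monomial, Finset.sum_ite_eq',
    Polynomial.coeff_zero, Finset.mem_range, Order.lt_add_one_iff] at hcoeff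
  by_cases hr : r ≤ p.totalDegree
  · rwa [if_pos hr] at hcoeff
  · rw [homogeneousComponent_eq_zero _ _ (not_le.mp hr), map_zero]

/-- The forms of degree `r` in the entries of the generic matrix that vanish on `D`. -/
def vanishingForms (D : Set (GL (Fin n) F)) (r : ℕ) :
    Submodule F (MvPolynomial (Fin n × Fin n) F) :=
  homogeneousSubmodule _ F r ⊓ (vanishingIdeal D).restrictScalars F

theorem mem_vanishingForms {D : Set (GL (Fin n) F)} {r : ℕ} {p : MvPolynomial (Fin n × Fin n) F} :
    p ∈ vanishingForms D r ↔ p.IsHomogeneous r ∧ ∀ g ∈ D, evalAt g.1 p = 0 := by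
  rw [vanishingForms, Submodule.mem_inf, mem_homogeneousSubmodule, Submodule.restrictScalars_mem,
    mem_vanishingIdeal]

instance {D : Set (GL (Fin n) F)} {r : ℕ} : FiniteDimensional F (vanishingForms D r) := by
  have : Module.Finite F (homogeneousSubmodule (Fin n × Fin n) F r) :=
    .of_fg (homogeneousSubmodule_fg _ _ _)
  exact Submodule.finiteDimensional_of_le inf_le_left

theorem exists_mem_vanishingForms [Infinite F] {D : Set (GL (Fin n) F)}
    {p : MvPolynomial (Fin n × Fin n) F}
    (hp : ∀ c : Fˣ, ∀ g ∈ D, evalAt (scalarGL n c * g).1 p = 0) {h : GL (Fin n) F}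
    (hne : evalAt h.1 p ≠ 0) : ∃ r, ∃ f ∈ vanishingForms D r, evalAt h.1 f ≠ 0 := by
  by_contra! hcon
  refine hne ?_
  rw [← sum_homogeneousComponent p, map_sum]
  refine Finset.sum_eq_zero fun r _ => hcon r _ (mem_vanishingForms.mpr
    ⟨homogeneousComponent_isHomogeneous r p, fun g hg =>
      evalAt_homogeneousComponent_eq_zero (fun c => ?_) r⟩)
  rw [← hp c g hg, Units.val_mul, val_scalarGL, smul_mul_assoc, one_mul]

end Forms

noncomputable section DetCharacter

variable {F : Type*} [Field F] {n : ℕ} {ι : Type*}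

theorem map_eq_one_of_mem_commutator {G M : Type*} [Group G] [CommMonoid M] {H : Subgroup G}
    (δ : H →* M) {h : H} (hh : (h : G) ∈ ⁅H, H⁆) : δ h = 1 := by
  rw [← H.map_subtype_commutator] at hh
  obtain ⟨x, hx, hxh⟩ := hh
  obtain rfl := Subtype.ext hxh
  exact congrArg Units.val (Abelianization.commutator_subset_ker δ.toHomUnits hx)

/-- The determinant of the action of `K` by left substitution on a stable space of polynomials. -/
def leftSubstDet (K : Subgroup (GL (Fin n) F)) (M : Submodule F (MvPolynomial (Fin n × ι) F))
    (hM : ∀ h ∈ K, ∀ p ∈ M, leftSubst h.1 p ∈ M) : K →* F where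
  toFun h := LinearMap.det ((leftSubst h.1.1).toLinearMap.restrict (hM h.1 h.2))
  map_one' := by
    rw [← LinearMap.det_id (A := F) (M := M)]
    exact congrArg _ (LinearMap.ext fun p => Subtype.ext (leftSubst_one p.1))
  map_mul' g h := by
    rw [mul_comm, ← LinearMap.det_comp]
    exact congrArg _ (LinearMap.ext fun p => Subtype.ext (leftSubst_leftSubst h.1.1 g.1.1 p.1).symm)

theorem pow_finrank_semiInvariants_eq_one {H : Subgroup (GL (Fin n) F)} {s : ℕ}
    {χ : (⁅H, H⁆ : Subgroup (GL (Fin n) F)) →* F} (hχ : ∀ h ∈ H, ∀ d : (⁅H, H⁆ : Subgroup _),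
      ∃ d' : (⁅H, H⁆ : Subgroup _), (d' : GL (Fin n) F) = h * d * h⁻¹ ∧ χ d' = χ d) :
    χ ^ Module.finrank F (semiInvariants ι ⁅H, H⁆ χ s) = 1 := by
  ext d
  have hd : d.1 ∈ H := Subgroup.commutator_le_self H d.2
  have hscalar : (leftSubst d.1.1).toLinearMap.restrict
      (fun _ => leftSubst_mem_semiInvariants (s := s) (ι := ι) (hχ _ hd)) = χ d • LinearMap.id :=
    LinearMap.ext fun p => Subtype.ext ((mem_semiInvariants.mp p.2).2 d)
  have hdet := map_eq_one_of_mem_commutator (h := ⟨d.1, hd⟩) (leftSubstDet H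
    (semiInvariants ι ⁅H, H⁆ χ s) fun h hh p hp => leftSubst_mem_semiInvariants (hχ h hh) hp) d.2
  rw [MonoidHom.pow_apply, MonoidHom.one_apply, ← hdet]
  calc χ d ^ _ = LinearMap.det (χ d • LinearMap.id) := by
        rw [LinearMap.det_smul, LinearMap.det_id, mul_one]
    _ = _ := congrArg LinearMap.det hscalar.symm

end DetCharacter

noncomputable section Conjugation

universe u

variable {F : Type u} [Field F] {n : ℕ} {D : Subgroup (GL (Fin n) F)} {r : ℕ}
  {p : MvPolynomial (Fin n × Fin n) F}

/-- The substitution `f(X) ↦ f(h⁻¹ X h)` on polynomials in the entries of the generic matrix. -/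
def conjSubst (h : GL (Fin n) F) :
    MvPolynomial (Fin n × Fin n) F →ₐ[F] MvPolynomial (Fin n × Fin n) F :=
  evalAt (h⁻¹.1.map C * genericMatrix F n * h.1.map C)

theorem evalAt_conjSubst (h : GL (Fin n) F) (A : Matrix (Fin n) (Fin n) F) :
    evalAt A (conjSubst h p) = evalAt (h⁻¹.1 * A * h.1) p := by
  have hconst (g : GL (Fin n) F) : (g.1.map C).map (evalAt (F := F) A) = g.1 :=
    Matrix.ext fun i j => algHom_C (evalAt A) (g.1 i j)
  rw [conjSubst, ← evalAt_map, Matrix.map_mul, Matrix.map_mul, hconst, hconst,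
    map_evalAt_genericMatrix]

theorem isHomogeneous_conjSubst (h : GL (Fin n) F) (hp : p.IsHomogeneous r) :
    (conjSubst h p).IsHomogeneous r := by
  have hlinear (q : Fin n × Fin n) :
      ((h⁻¹.1.map C * genericMatrix F n * h.1.map C :
        Matrix (Fin n) (Fin n) _) q.1 q.2).IsHomogeneous 1 := by
    simp only [Matrix.mul_apply, Matrix.map_apply, mvPolynomialX_apply]
    refine .sum _ _ _ fun l _ => ?_
    refine (IsHomogeneous.sum _ _ 1 fun k _ => ?_).mul (isHomogeneous_C _ _)
    simpa using (isHomogeneous_C _ (h⁻¹.1 q.1 k)).mul (isHomogeneous_X F (k, l))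
  simpa [conjSubst] using hp.aeval _ hlinear

theorem conjSubst_conjSubst_inv [Infinite F] (h : GL (Fin n) F)
    (p : MvPolynomial (Fin n × Fin n) F) : conjSubst h (conjSubst h⁻¹ p) = p :=
  funext_evalAt fun A => by
    rw [evalAt_conjSubst, evalAt_conjSubst, inv_inv, mul_assoc h⁻¹.1, Units.mul_inv_cancel_left,
      Units.mul_inv_cancel_right]

theorem conjSubst_leftSubst [Infinite F] (h d : GL (Fin n) F)
    (p : MvPolynomial (Fin n × Fin n) F) :
    conjSubst h (leftSubst d.1 (conjSubst h⁻¹ p)) = leftSubst (h * d * h⁻¹).1 p :=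
  funext_evalAt fun A => by
    rw [evalAt_conjSubst, evalAt_leftSubst, evalAt_conjSubst, evalAt_leftSubst, inv_inv,
      Units.val_mul, Units.val_mul]
    simp only [← mul_assoc, Units.mul_inv_cancel_right]

theorem leftSubst_mem_vanishingForms {d : GL (Fin n) F} (hd : d ∈ D) (hp : p ∈ vanishingForms D r) :
    leftSubst d.1 p ∈ vanishingForms D r := by
  rw [mem_vanishingForms] at hp ⊢
  refine ⟨isHomogeneous_leftSubst _ hp.1, fun g hg => ?_⟩
  rw [evalAt_leftSubst]
  exact hp.2 (d * g) (D.mul_mem hd hg)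

theorem conjSubst_mem_vanishingForms {h : GL (Fin n) F}
    (hh : h ∈ Subgroup.normalizer (D : Set (GL (Fin n) F))) (hp : p ∈ vanishingForms D r) :
    conjSubst h p ∈ vanishingForms D r := by
  rw [mem_vanishingForms] at hp ⊢
  refine ⟨isHomogeneous_conjSubst _ hp.1, fun g hg => ?_⟩
  rw [evalAt_conjSubst]
  exact hp.2 (h⁻¹ * g * h) ((Subgroup.mem_normalizer_iff''.mp hh g).mp hg)

/-- The determinant character of the action of `D` on the forms vanishing on `D`. -/
def vanishingFormsDet (D : Subgroup (GL (Fin n) F)) (r : ℕ) : D →* F :=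
  leftSubstDet D (vanishingForms D r) fun _ hd _ hp => leftSubst_mem_vanishingForms hd hp

theorem vanishingFormsDet_conj [Infinite F] {h : GL (Fin n) F}
    (hh : h ∈ Subgroup.normalizer (D : Set (GL (Fin n) F))) (d : D) :
    vanishingFormsDet D r ⟨h * d * h⁻¹, (Subgroup.mem_normalizer_iff.mp hh d).mp d.2⟩ =
      vanishingFormsDet D r d := by
  let M := vanishingForms (D : Set (GL (Fin n) F)) r
  have hconj {g : GL (Fin n) F} (hg : g ∈ Subgroup.normalizer (D : Set (GL (Fin n) F))) :
      ∀ p ∈ M, (conjSubst g).toLinearMap p ∈ M := fun _ hp => conjSubst_mem_vanishingForms hg hp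
  let c := (conjSubst h).toLinearMap.restrict (hconj hh)
  let c' := (conjSubst h⁻¹).toLinearMap.restrict (hconj (inv_mem hh))
  let left : Module.End F M :=
    (leftSubst d.1.1).toLinearMap.restrict fun _ hp => leftSubst_mem_vanishingForms d.2 hp
  have hinv : c * c' = 1 :=
    LinearMap.ext fun p => Subtype.ext (conjSubst_conjSubst_inv h p.1)
  calc vanishingFormsDet D r ⟨h * d * h⁻¹, _⟩
      = LinearMap.det (c * left * c') :=
        congrArg LinearMap.det (LinearMap.ext fun p =>
          Subtype.ext (conjSubst_leftSubst h d.1 p.1).symm)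
    _ = LinearMap.det left := by
        rw [map_mul, map_mul, mul_right_comm, ← map_mul, hinv, map_one, one_mul]

end Conjugation

noncomputable section DetForm

variable {R : Type*} [CommRing R] {m κ ε : Type*} [Fintype ε] [DecidableEq ε]

/-- The determinant `det (bᵢ(Xⱼ))` of finitely many polynomials `bᵢ` in the entries of an `m × κ`
matrix, evaluated at the blocks `Xⱼ` of an `m × (κ × ε)` matrix. -/
def detForm (b : ε → MvPolynomial (m × κ) R) : MvPolynomial (m × (κ × ε)) R :=
  (Matrix.of fun i j => rename (fun q : m × κ => (q.1, (q.2, j))) (b i)).det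

theorem isHomogeneous_detForm {b : ε → MvPolynomial (m × κ) R} {r : ℕ}
    (hb : ∀ i, (b i).IsHomogeneous r) : (detForm b).IsHomogeneous (Fintype.card ε * r) := by
  rw [detForm, Matrix.det_apply]
  refine .sum _ _ _ fun σ _ => (homogeneousSubmodule _ R _).smul_of_tower_mem _ ?_
  simpa using IsHomogeneous.prod Finset.univ _ (fun _ => r)
    fun i _ => (hb (σ i)).rename_isHomogeneous (f := fun q : m × κ => (q.1, (q.2, i)))

theorem leftSubst_detForm [Fintype m] (A : Matrix m m R) (b : ε → MvPolynomial (m × κ) R) :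
    leftSubst A (detForm b) = detForm fun i => leftSubst A (b i) := by
  have hrename (j : ε) (p : MvPolynomial (m × κ) R) :
      leftSubst A (rename (fun q : m × κ => (q.1, (q.2, j))) p) =
        rename (fun q : m × κ => (q.1, (q.2, j))) (leftSubst A p) := by
    induction p using MvPolynomial.induction_on with
    | C a => simp
    | add p q hp hq => simp only [map_add, hp, hq]
    | mul_X p q hp => simp [hp]
  rw [detForm, AlgHom.map_det]
  exact congrArg det (Matrix.ext fun i j => hrename j (b i))

theorem eval_detForm (b : ε → MvPolynomial (m × κ) R) (Y : ε → m × κ → R) :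
    eval (fun q => Y q.2.2 (q.1, q.2.1)) (detForm b) =
      (Matrix.of fun i j => eval (Y j) (b i)).det := by
  rw [detForm, RingHom.map_det]
  exact congrArg det (Matrix.ext fun i j => eval_rename _ _ _)

theorem detForm_linearMap {M : Submodule R (MvPolynomial (m × κ) R)} (b : Module.Basis ε R M)
    (L : M →ₗ[R] M) :
    detForm (fun i => (L (b i) : MvPolynomial (m × κ) R)) =
      LinearMap.det L • detForm fun i => (b i : MvPolynomial (m × κ) R) := by
  have hmul : (Matrix.of fun i j => rename (fun q : m × κ => (q.1, (q.2, j))) (L (b i)).1) =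
      (LinearMap.toMatrix b b L)ᵀ.map C *
        Matrix.of fun i j => rename (fun q : m × κ => (q.1, (q.2, j))) (b i).1 := by
    ext1 i j
    conv_lhs => rw [Matrix.of_apply, ← b.sum_repr (L (b i)), Submodule.coe_sum, map_sum]
    simp only [Matrix.mul_apply, Matrix.map_apply, Matrix.transpose_apply, Matrix.of_apply,
      LinearMap.toMatrix_apply, Submodule.coe_smul, smul_eq_C_mul, map_mul, rename_C]
  rw [detForm, detForm, hmul, det_mul, smul_eq_C_mul, ← LinearMap.det_toMatrix b,
    ← det_transpose (LinearMap.toMatrix b b L), RingHom.map_det]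
  rfl

end DetForm

noncomputable section SeparatingFunctionals

variable {K V T ε : Type*} [Field K] [AddCommGroup V] [Module K V] [FiniteDimensional K V]

theorem span_range_eq_top_of_separating {S : T → Module.Dual K V}
    (hS : ∀ v, (∀ t, S t v = 0) → v = 0) : Submodule.span K (Set.range S) = ⊤ := by
  rw [← Subspace.dualCoannihilator_dualAnnihilator_eq (W := Submodule.span K (Set.range S)),
    Submodule.dualAnnihilator_eq_top_iff, Submodule.eq_bot_iff]
  exact fun v hv => hS v fun t =>
    (Submodule.mem_dualCoannihilator v).mp hv _ (Submodule.subset_span ⟨t, rfl⟩)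

theorem exists_det_ne_zero_of_separating [Fintype ε] [DecidableEq ε] {S : T → Module.Dual K V}
    (hS : ∀ v, (∀ t, S t v = 0) → v = 0) {t₀ : T} (ht₀ : S t₀ ≠ 0) (b : Module.Basis ε K V) :
    ∃ Y : ε → T, t₀ ∈ Set.range Y ∧ (Matrix.of fun i j => S (Y j) (b i)).det ≠ 0 := by
  obtain ⟨B, -, htB, hspan, hli⟩ := exists_linearIndepOn_extension
    ((linearIndepOn_singleton_iff K).mpr ht₀) (Set.subset_univ {t₀})
  have htop : ⊤ ≤ Submodule.span K (Set.range fun t : B => S t) := by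
    rw [← span_range_eq_top_of_separating hS, ← Set.image_univ, Submodule.span_le,
      ← Set.image_eq_range]
    exact hspan
  let c := Module.Basis.mk hli htop
  let σ := c.indexEquiv b.dualBasis
  refine ⟨fun j => (σ.symm j).1, ⟨σ ⟨t₀, htB rfl⟩, by simp⟩, ?_⟩
  have hmatrix : (Matrix.of fun i j => S (σ.symm j).1 (b i)) =
      b.dualBasis.toMatrix (c.reindex σ) := by
    ext i j
    rw [Module.Basis.toMatrix_apply, Module.Basis.reindex_apply, Module.Basis.dualBasis_repr]
    exact congrArg (· (b i)) (Module.Basis.mk_apply hli htop _).symm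
  rw [hmatrix]
  exact (b.dualBasis.isUnit_det (c.reindex σ)).ne_zero

end SeparatingFunctionals

noncomputable section Decomposition

universe u

variable {F : Type u} [Field F] {n : ℕ} {D : Subgroup (GL (Fin n) F)} {r : ℕ}

theorem detForm_mem_semiInvariants {ε : Type*} [Fintype ε] [DecidableEq ε]
    (b : Module.Basis ε F (vanishingForms (D : Set (GL (Fin n) F)) r)) :
    detForm (fun i => (b i).1) ∈
      semiInvariants (Fin n × ε) D (vanishingFormsDet D r) (Fintype.card ε * r) := by
  rw [mem_semiInvariants]
  refine ⟨isHomogeneous_detForm fun i => (mem_vanishingForms.mp (b i).2).1, fun d => ?_⟩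
  rw [leftSubst_detForm]
  exact detForm_linearMap b
    ((leftSubst d.1.1).toLinearMap.restrict fun _ hp => leftSubst_mem_vanishingForms d.2 hp)

theorem exists_eval_detForm_eq_zero_of_evalAt_ne_zero [Infinite F] {ε : Type*} [Fintype ε]
    [DecidableEq ε] (b : Module.Basis ε F (vanishingForms (D : Set (GL (Fin n) F)) r))
    {f : MvPolynomial (Fin n × Fin n) F} (hf : f ∈ vanishingForms (D : Set (GL (Fin n) F)) r)
    {h : GL (Fin n) F} (hfh : evalAt h.1 f ≠ 0) :
    ∃ x, eval x (detForm fun i => (b i).1) = 0 ∧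
      eval x (leftSubst h.1 (detForm fun i => (b i).1)) ≠ 0 := by
  let S (A : Matrix (Fin n) (Fin n) F) :
      Module.Dual F (vanishingForms (D : Set (GL (Fin n) F)) r) :=
    (evalAt A).toLinearMap.domRestrict _
  obtain ⟨Z, ⟨j, hj⟩, hZ⟩ := exists_det_ne_zero_of_separating (S := S) (t₀ := h.1)
    (fun v hv => Subtype.ext (funext_evalAt fun A => by simpa [S] using hv A))
    (fun hS => hfh (congrArg (· ⟨f, hf⟩) hS)) b
  let Y (k : ε) (q : Fin n × Fin n) : F := (h⁻¹.1 * Z k) q.1 q.2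
  refine ⟨fun q => Y q.2.2 (q.1, q.2.1), ?_, ?_⟩
  · rw [eval_detForm]
    refine det_eq_zero_of_column_eq_zero j fun i => ?_
    have hone : h⁻¹.1 * Z j = 1 := by rw [hj, Units.inv_mul]
    have hvanish := (mem_vanishingForms.mp (b i).2).2 1 D.one_mem
    simp only [Matrix.of_apply, Y, hone]
    exact hvanish
  · rw [leftSubst_detForm, eval_detForm]
    convert hZ using 3
    ext i k
    have heval := evalAt_leftSubst h.1 (h⁻¹.1 * Z k) (b i).1
    rw [Units.mul_inv_cancel_left] at heval
    exact heval

theorem exists_pow_mem_semiInvariants_one {ι : Type*} [Finite ι] {H : Subgroup (GL (Fin n) F)}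
    {s : ℕ} {χ : (⁅H, H⁆ : Subgroup (GL (Fin n) F)) →* F}
    (hχ : ∀ h ∈ H, ∀ d : (⁅H, H⁆ : Subgroup _),
      ∃ d' : (⁅H, H⁆ : Subgroup _), (d' : GL (Fin n) F) = h * d * h⁻¹ ∧ χ d' = χ d)
    {p : MvPolynomial (Fin n × ι) F} (hp : p ∈ semiInvariants ι ⁅H, H⁆ χ s) (hp0 : p ≠ 0) :
    ∃ k ≠ 0, p ^ k ∈ semiInvariants ι ⁅H, H⁆ 1 (s * k) := by
  have : Nontrivial (semiInvariants ι ⁅H, H⁆ χ s) :=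
    ⟨⟨p, hp⟩, 0, fun h => hp0 (congrArg Subtype.val h)⟩
  refine ⟨Module.finrank F (semiInvariants ι ⁅H, H⁆ χ s), Module.finrank_pos.ne', ?_⟩
  rw [← pow_finrank_semiInvariants_eq_one (ι := ι) (s := s) hχ]
  exact pow_mem_semiInvariants hp _

theorem evalAt_eq_zero_of_forall_scalarGL_mul [IsAlgClosed F] {H : Subgroup (GL (Fin n) F)}
    (hirr : IrredOn H) (hH : IsIrreducible (H : Set (GL (Fin n) F)))
    {p : MvPolynomial (Fin n × Fin n) F}
    (hp : ∀ c : Fˣ, ∀ d ∈ ⁅H, H⁆, evalAt (scalarGL n c * d).1 p = 0) {h : GL (Fin n) F}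
    (hh : h ∈ H) : evalAt h.1 p = 0 := by
  have : Infinite F := IsAlgClosed.instInfinite
  by_contra hne
  obtain ⟨r, f, hf, hfh⟩ :=
    exists_mem_vanishingForms (D := (⁅H, H⁆ : Subgroup (GL (Fin n) F))) hp hne
  let b := Module.finBasis F
    (vanishingForms ((⁅H, H⁆ : Subgroup (GL (Fin n) F)) : Set (GL (Fin n) F)) r)
  obtain ⟨x, hx, hhx⟩ := exists_eval_detForm_eq_zero_of_evalAt_ne_zero b hf hfh
  set Φ := detForm fun i => (b i).1
  have hΦ : Φ ∈ semiInvariants _ ⁅H, H⁆ _ _ := detForm_mem_semiInvariants b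
  have hΦ0 : Φ ≠ 0 := fun hΦ => hhx (by rw [hΦ, map_zero, map_zero])
  obtain ⟨k, hk, hΦk⟩ := exists_pow_mem_semiInvariants_one (fun g hg d =>
    ⟨_, rfl, vanishingFormsDet_conj (Subgroup.normalizer_commutator_ge_left H H hg) d⟩)
    hΦ hΦ0
  have hΦkn := pow_mem_semiInvariants hΦk n
  rw [one_pow, mul_comm _ n, ← pow_mul] at hΦkn
  have hkn : k * n ≠ 0 := mul_ne_zero hk hirr.1.ne'
  have hscalar := congrArg (eval x)
    (leftSubst_eq_det_pow_mul_of_mem_semiInvariants hirr hH hΦkn hh)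
  simp only [map_pow, map_mul, hx, zero_pow hkn, mul_zero] at hscalar
  exact hhx (eq_zero_of_pow_eq_zero hscalar)

theorem le_center_sup_commutator [IsAlgClosed F] {H : Subgroup (GL (Fin n) F)}
    (hclosed : IsClosed (H : Set (GL (Fin n) F))) (hH : IsIrreducible (H : Set (GL (Fin n) F)))
    (hirr : IrredOn H) : H ≤ Subgroup.center (GL (Fin n) F) ⊔ ⁅H, H⁆ := by
  intro h hh
  rw [← SetLike.mem_coe, ← (isClosed_center_sup_commutator hclosed hH).closure_eq,
    mem_closure_iff_vanishingIdeal_le]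
  refine fun p hp => evalAt_eq_zero_of_forall_scalarGL_mul hirr hH (fun c d hd => ?_) hh
  exact mem_vanishingIdeal.mp hp _ (Subgroup.mul_mem_sup (scalarGL_mem_center c) hd)

end Decomposition

section CenterSup

variable {X : Type*} [Group X]

theorem commutatorElement_mul_left_of_mem_center {z : X} (hz : z ∈ Subgroup.center X) (g h : X) :
    ⁅z * g, h⁆ = ⁅g, h⁆ := by
  have hcomm := Subgroup.mem_center_iff.mp hz (g * h * g⁻¹)
  rw [commutatorElement_def, commutatorElement_def, _root_.mul_inv_rev, mul_assoc z, mul_assoc z,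
    ← mul_assoc _ g⁻¹, ← mul_assoc z, ← hcomm, mul_inv_cancel_right]

theorem commutator_center_sup_le (K : Subgroup X) :
    ⁅Subgroup.center X ⊔ K, Subgroup.center X ⊔ K⁆ ≤ ⁅K, K⁆ := by
  rw [Subgroup.commutator_le]
  intro a ha b hb
  obtain ⟨z, hz, k, hk, rfl⟩ := Subgroup.mem_sup_of_normal_left.mp ha
  obtain ⟨w, hw, l, hl, rfl⟩ := Subgroup.mem_sup_of_normal_left.mp hb
  rw [commutatorElement_mul_left_of_mem_center hz, ← commutatorElement_inv,
    commutatorElement_mul_left_of_mem_center hw, commutatorElement_inv]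
  exact Subgroup.commutator_mem_commutator hk hl

theorem index_dvd_card_center {K : Subgroup X} (hK : Subgroup.center X ⊔ K = ⊤) :
    K.index ∣ Nat.card (Subgroup.center X) := by
  have : K.Normal := Subgroup.Normal.of_commutator_le X <| by
    rw [_root_.commutator_def, ← hK]
    exact (commutator_center_sup_le K).trans (Subgroup.commutator_le_self K)
  rw [← K.relIndex_top_right, ← hK, Subgroup.relIndex_sup_right]
  exact Subgroup.relIndex_dvd_card _ _

theorem center_sup_subgroupOf_eq_top {G D K : Subgroup X} (hG : G ≤ Subgroup.center X ⊔ D)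
    (hDG : D ≤ G) (hDK : D ≤ K) : Subgroup.center G ⊔ K.subgroupOf G = ⊤ := by
  rw [eq_top_iff]
  rintro ⟨g, hg⟩ -
  obtain ⟨c, hc, d, hd, rfl⟩ := Subgroup.mem_sup_of_normal_left.mp (hG hg)
  have hcG : c ∈ G := (Subgroup.mul_mem_cancel_right G (hDG hd)).mp hg
  have hcenter : (⟨c, hcG⟩ : G) ∈ Subgroup.center G :=
    Subgroup.mem_center_iff.mpr fun x => Subtype.ext (Subgroup.mem_center_iff.mp hc x)
  exact Subgroup.mul_mem_sup hcenter (show (⟨d, hDG hd⟩ : G) ∈ K.subgroupOf G from hDK hd)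

end CenterSup

section Center

variable {F : Type*} [Field F] {n : ℕ} {G : Subgroup (GL (Fin n) F)}

theorem centerSet_eq_map_center :
    centerSet (G : Set (GL (Fin n) F)) = (Subgroup.center G).map G.subtype := by
  ext z
  simp [centerSet, Subgroup.mem_center_iff, eq_comm, and_comm]

theorem card_centerSet :
    Nat.card (centerSet (G : Set (GL (Fin n) F))) = Nat.card (Subgroup.center G) := by
  rw [centerSet_eq_map_center]
  exact Subgroup.card_map_of_injective G.subtype_injective

theorem pow_card_centerSet_eq_one (hn : 0 < n) {ζ : Fˣ} (hζ : scalarGL n ζ ∈ G) :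
    ζ ^ Nat.card (centerSet (G : Set (GL (Fin n) F))) = 1 := by
  have hcenter : (⟨scalarGL n ζ, hζ⟩ : G) ∈ Subgroup.center G := Subgroup.mem_center_iff.mpr
    fun g => Subtype.ext (Subgroup.mem_center_iff.mp (scalarGL_mem_center ζ) g.1)
  have hpow := pow_card_eq_one' (x := (⟨_, hcenter⟩ : Subgroup.center G))
  rw [← card_centerSet] at hpow
  have := Fin.pos_iff_nonempty.mp hn
  refine Units.map_injective (f := (Matrix.scalar (Fin n)).toMonoidHom)
    (fun _ _ => Matrix.scalar_inj.mp) ?_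
  rw [map_pow, map_one]
  exact congrArg (fun x : Subgroup.center G => (x : GL (Fin n) F)) hpow

theorem scalarSaturation_eq_center_sup : scalarSaturation (G : Set (GL (Fin n) F)) =
    (Subgroup.center (GL (Fin n) F) ⊔ G : Subgroup (GL (Fin n) F)) := by
  ext x
  rw [SetLike.mem_coe, Subgroup.mem_sup_of_normal_left]
  constructor
  · rintro ⟨g, hg, c, rfl⟩
    exact ⟨_, scalarGL_mem_center c, g, hg, rfl⟩
  · rintro ⟨_, hc, g, hg, rfl⟩
    obtain ⟨c, rfl⟩ := mem_center_iff_exists_scalarGL.mp hc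
    exact ⟨g, hg, c, rfl⟩

theorem irredOn_mono {H : Subgroup (GL (Fin n) F)} (hG : IrredOn G) (hGH : G ≤ H) : IrredOn H :=
  ⟨hG.1, fun W hW => hG.2 W fun g hg => hW g (hGH hg)⟩

end Center

noncomputable section IdentityComponent

variable {F : Type*} [Field F] {n : ℕ} {G H S : Subgroup (GL (Fin n) F)}

/-- The Zariski closure of a subgroup of `GL n F`. Multiplication is only separately continuous for
the Zariski topology, which rules out `Subgroup.topologicalClosure`. -/
def zariskiClosure (S : Subgroup (GL (Fin n) F)) : Subgroup (GL (Fin n) F) where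
  carrier := closure S
  one_mem' := subset_closure S.one_mem
  mul_mem' ha hb := map_mem_closure₂' continuous_const_mul continuous_mul_const ha hb
    fun _ hx _ hy => S.mul_mem hx hy
  inv_mem' ha := map_mem_closure continuous_inv ha fun _ hx => S.inv_mem hx

theorem commutator_zariskiClosure_le (hG : IsClosed (G : Set (GL (Fin n) F))) (hSG : ⁅S, S⁆ ≤ G) :
    ⁅zariskiClosure S, zariskiClosure S⁆ ≤ G := by
  rw [Subgroup.commutator_le]
  intro x hx y hy
  rw [← SetLike.mem_coe, ← hG.closure_eq]
  exact map_mem_closure₂' (f := fun x y : GL (Fin n) F => ⁅x, y⁆)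
    continuous_commutatorElement_right continuous_commutatorElement_left hx hy
    fun _ ha _ hb => hSG (Subgroup.commutator_mem_commutator ha hb)

theorem commutator_le_idCompSubgroup (hH : IsPreconnected (H : Set (GL (Fin n) F)))
    (hHG : ⁅H, H⁆ ≤ G) : ⁅H, H⁆ ≤ idCompSubgroup G := by
  rw [Subgroup.commutator_le]
  refine fun a ha b hb => Subgroup.subset_closure
    ⟨(fun x => ⁅a, x⁆) '' H, ⟨?_, ?_, 1, H.one_mem, commutatorElement_one_right a⟩, b, hb, rfl⟩
  · rintro _ ⟨x, hx, rfl⟩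
    exact hHG (Subgroup.commutator_mem_commutator ha hx)
  · rw [← isConnected_iff_GLZConnected]
    exact ⟨⟨_, 1, H.one_mem, rfl⟩, hH.image _ (continuous_commutatorElement_right a).continuousOn⟩

theorem derSubgroup_le : derSubgroup G ≤ G := by
  refine (Subgroup.commutator_le_self _).trans ((Subgroup.closure_le G).mpr ?_)
  rintro x ⟨S, ⟨hSG, -, -⟩, hx⟩
  exact hSG hx

theorem le_center_sup_derSubgroup [IsAlgClosed F] (hclosed : GLZClosed (G : Set (GL (Fin n) F)))
    (hirr : IrredOn G) (hconn : GLZConnected (scalarSaturation (G : Set (GL (Fin n) F)))) :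
    G ≤ Subgroup.center (GL (Fin n) F) ⊔ derSubgroup G := by
  let S : Subgroup (GL (Fin n) F) := Subgroup.center (GL (Fin n) F) ⊔ G
  let H := zariskiClosure S
  have hS : IsPreconnected (S : Set (GL (Fin n) F)) := by
    rw [← isConnected_iff_GLZConnected, scalarSaturation_eq_center_sup] at hconn
    exact hconn.isPreconnected
  have hDG : ⁅H, H⁆ ≤ G := commutator_zariskiClosure_le (isClosed_iff_GLZClosed.mpr hclosed)
    ((commutator_center_sup_le G).trans (Subgroup.commutator_le_self G))
  have hD : ⁅H, H⁆ ≤ idCompSubgroup G := commutator_le_idCompSubgroup hS.closure hDG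
  have hH : H ≤ Subgroup.center _ ⊔ ⁅H, H⁆ :=
    le_center_sup_commutator isClosed_closure (isIrreducible_of_isPreconnected hS).closure
      (irredOn_mono hirr fun _ hg => subset_closure (le_sup_right (a := Subgroup.center _) hg))
  have hDD : ⁅H, H⁆ ≤ derSubgroup G := calc
    ⁅H, H⁆ ≤ ⁅⁅H, H⁆, ⁅H, H⁆⁆ :=
      (Subgroup.commutator_mono hH hH).trans (commutator_center_sup_le ⁅H, H⁆)
    _ ≤ derSubgroup G := Subgroup.commutator_mono hD hD
  exact fun g hg =>
    sup_le_sup_left hDD _ (hH (subset_closure (le_sup_right (a := Subgroup.center _) hg)))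

end IdentityComponent

end ZariskiGL

open Matrix in
/-- Let `G ⊆ GL_n(F)` be a closed subgroup acting irreducibly on `F^n`
with `G/Z(G)` connected (encoded via the scalar saturation), and suppose the center
`Z(G)` is finite of order `N`.  Then every element of `G` is `ζ·g` with `ζ` an `N`-th
root of unity (as a scalar matrix) and `g ∈ G^der`, and the order of the component group
`G/G°` divides `N`. -/
theorem scalar_times_derived_and_component_group {F : Type*} [Field F] [IsAlgClosed F]
    {n : ℕ} (G : Subgroup (GL (Fin n) F))
    (hclosed : GLZClosed (G : Set (GL (Fin n) F)))
    (hirr : IrredOn G)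
    (hconn : GLZConnected (scalarSaturation (G : Set (GL (Fin n) F))))
    (N : ℕ) (hN : 0 < N)
    (hZfin : (centerSet (G : Set (GL (Fin n) F))).Finite)
    (hcard : Nat.card (centerSet (G : Set (GL (Fin n) F))) = N) :
    (∀ z ∈ G, ∃ ζ : Fˣ, ζ ^ N = 1 ∧ ∃ g ∈ derSubgroup G, z = scalarGL n ζ * g) ∧
    Nat.card (G ⧸ (idCompSubgroup G).subgroupOf G) ∣ N := by
  have hG := ZariskiGL.le_center_sup_derSubgroup hclosed hirr hconn
  subst hcard
  constructor
  · intro z hz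
    obtain ⟨c, hc, g, hg, rfl⟩ := Subgroup.mem_sup_of_normal_left.mp (hG hz)
    obtain ⟨ζ, rfl⟩ := ZariskiGL.mem_center_iff_exists_scalarGL.mp hc
    have hζ : scalarGL n ζ ∈ G :=
      (Subgroup.mul_mem_cancel_right G (ZariskiGL.derSubgroup_le hg)).mp hz
    exact ⟨ζ, ZariskiGL.pow_card_centerSet_eq_one hirr.1 hζ, g, hg, rfl⟩
  · rw [ZariskiGL.card_centerSet]
    exact ZariskiGL.index_dvd_card_center (ZariskiGL.center_sup_subgroupOf_eq_top hG
      ZariskiGL.derSubgroup_le (Subgroup.commutator_le_self _))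
end

section
/- Let G be a connected reductive group over an algebraically closed field F and let V be a finite-dimensional representation of G with zero weight multiplicity n₀ = 0 (the zero weight space for a maximal torus of G is trivial). Then the set { g ∈ G : 1 is an eigenvalue of g on V } is a proper Zariski-closed conjugation-invariant subset of G. -/
open Matrix

noncomputable section
open Matrix
variable {F : Type*} [Field F] {n m : ℕ}

/-- A torus in `G ⊆ GL_n(F)`: a Zariski-closed, Zariski-connected subgroup of `G` that is
simultaneously diagonalizable. -/
def IsTorusIn (G T : Subgroup (GL (Fin n) F)) : Prop :=
  T ≤ G ∧ GLZClosed (T : Set (GL (Fin n) F)) ∧ GLZConnected (T : Set (GL (Fin n) F)) ∧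
  ∃ P : GL (Fin n) F, ∀ t ∈ T, ∃ d : Fin n → F,
    ((P * t * P⁻¹ : GL (Fin n) F) : Matrix (Fin n) (Fin n) F) = Matrix.diagonal d

/-- A maximal torus of `G`. -/
def IsMaximalTorusIn (G T : Subgroup (GL (Fin n) F)) : Prop :=
  IsTorusIn G T ∧ ∀ T' : Subgroup (GL (Fin n) F), IsTorusIn G T' → T ≤ T' → T' = T

/-- A homomorphism `ρ : G → GL_m(F)` on a subgroup `G ⊆ GL_n(F)` is algebraic: its matrix
entries are given by polynomials in the matrix entries of `g` and in `det(g)⁻¹`. -/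
def IsAlgebraicOn (G : Subgroup (GL (Fin n) F)) (ρ : G →* GL (Fin m) F) : Prop :=
  ∃ P : Fin m × Fin m → MvPolynomial ((Fin n × Fin n) ⊕ Unit) F,
    ∀ (g : G) (i j : Fin m),
      (ρ g : Matrix (Fin m) (Fin m) F) i j =
        MvPolynomial.eval
          (Sum.elim (fun q => ((g : GL (Fin n) F) : Matrix (Fin n) (Fin n) F) q.1 q.2)
            (fun _ => (((g : GL (Fin n) F) : Matrix (Fin n) (Fin n) F).det)⁻¹))
          (P (i, j))

end

/-!
Closedness and conjugation invariance come from the equation `det (ρ g - 1) = 0`. For properness,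
suppose that every `ρ t`, `t ∈ T`, fixes a nonzero vector, and let `A` be the commutative algebra
generated by `ρ(T)`. Each `ρ t - 1` is then a zero divisor on the finite `A`-module `V`, so it lies
in one of the finitely many associated primes of `V`, each of which annihilates some nonzero vector.
Hence `T` is the union of finitely many stabilizers of nonzero vectors, and by B. H. Neumann's
lemma one of them has finite index. Being Zariski closed, it is also open, so it equals the
connected group `T`: this produces a nonzero vector of weight zero.
-/

section CommutativeActions

open scoped Pointwise IsMulCommutative

theorem exists_finiteIndex_comap_stabilizer_units {A V T : Type*} [CommRing A] [IsNoetherianRing A]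
    [AddCommGroup V] [Module A V] [Module.Finite A V] [Group T] (φ : T →* Aˣ)
    (hφ : ∀ t, ∃ v : V, v ≠ 0 ∧ φ t • v = v) :
    ∃ v : V, v ≠ 0 ∧ ((MulAction.stabilizer Aˣ v).comap φ).FiniteIndex := by
  have hann (p : associatedPrimes A V) : ∃ v : V, v ≠ 0 ∧ ∀ a ∈ p.1, a • v = 0 := by
    obtain ⟨hp, v, hv⟩ := isAssociatedPrime_iff.mp p.2
    refine ⟨v, ?_, fun a ha => ?_⟩
    · rintro rfl
      exact hp.ne_top (hv.trans Submodule.colon_singleton_zero)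
    · simpa [hv, Submodule.mem_colon_singleton] using ha
  choose v hv0 hv using hann
  have := (associatedPrimes.finite A V).fintype
  have hcover : ⋃ p ∈ Finset.univ,
      (1 : T) • ((MulAction.stabilizer Aˣ (v p)).comap φ : Set T) = Set.univ := by
    refine Set.eq_univ_of_forall fun t => ?_
    obtain ⟨w, hw0, hw⟩ := hφ t
    have hzero : (φ t - 1 : A) ∈ ⋃ p ∈ associatedPrimes A V, (p : Set A) := by
      rw [biUnion_associatedPrimes_eq_zero_divisors]
      exact ⟨w, hw0, by rw [sub_smul, one_smul, ← Units.smul_def, hw, sub_self]⟩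
    obtain ⟨p, hp, htp⟩ := Set.mem_iUnion₂.mp hzero
    have hfix : φ t • v ⟨p, hp⟩ = v ⟨p, hp⟩ := by
      simpa [sub_smul, sub_eq_zero, Units.smul_def] using hv ⟨p, hp⟩ _ htp
    simpa using ⟨p, hp, hfix⟩
  obtain ⟨p, -, hp⟩ := Subgroup.exists_finiteIndex_of_leftCoset_cover hcover
  exact ⟨v p, hv0 p, hp⟩

theorem exists_finiteIndex_comap_stabilizer_generalLinearGroup {K V T : Type*} [Field K]
    [AddCommGroup V] [Module K V] [FiniteDimensional K V] [Group T] [IsMulCommutative T]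
    (ρ : T →* LinearMap.GeneralLinearGroup K V) (hρ : ∀ t, ∃ v : V, v ≠ 0 ∧ ρ t • v = v) :
    ∃ v : V, v ≠ 0 ∧
      ((MulAction.stabilizer (LinearMap.GeneralLinearGroup K V) v).comap ρ).FiniteIndex := by
  let S : Set (Module.End K V) := Set.range fun t => (ρ t : Module.End K V)
  have hcomm : IsMulCommutative (Algebra.adjoin K S) := by
    refine Algebra.isMulCommutative_adjoin K ?_
    rintro _ ⟨s, rfl⟩ _ ⟨t, rfl⟩
    simp only [← Units.val_mul, ← map_mul, mul_comm' s t]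
  have hnoeth : IsNoetherianRing (Algebra.adjoin K S) := isNoetherian_of_tower K inferInstance
  have hfinite : Module.Finite (Algebra.adjoin K S) V :=
    Module.Finite.of_restrictScalars_finite K _ V
  let φ : T →* Algebra.adjoin K S :=
    ((Units.coeHom _).comp ρ).codRestrict _ fun t => Algebra.subset_adjoin ⟨t, rfl⟩
  exact exists_finiteIndex_comap_stabilizer_units (A := Algebra.adjoin K S) (V := V) φ.toHomUnits hρ

end CommutativeActions

theorem eq_top_of_isClosed_of_finiteIndex {T : Type*} [Group T] [TopologicalSpace T]
    [SeparatelyContinuousMul T] [PreconnectedSpace T] (H : Subgroup T) [H.FiniteIndex]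
    (hH : IsClosed (H : Set T)) : H = ⊤ :=
  SetLike.coe_injective <|
    IsClopen.eq_univ ⟨hH, H.isOpen_of_isClosed_of_finiteIndex hH⟩ ⟨1, H.one_mem⟩

theorem exists_mulVec_eq_self_iff {ι R : Type*} [Fintype ι] [DecidableEq ι] [CommRing R]
    [IsDomain R] (A : Matrix ι ι R) : (∃ v, v ≠ 0 ∧ A *ᵥ v = v) ↔ (A - 1).det = 0 := by
  simp only [← exists_mulVec_eq_zero_iff, sub_mulVec, one_mulVec, sub_eq_zero]

theorem IsTorusIn.isMulCommutative {F : Type*} [Field F] {n : ℕ}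
    {G T : Subgroup (GL (Fin n) F)} (hT : IsTorusIn G T) : IsMulCommutative T := by
  obtain ⟨-, -, -, P, hP⟩ := hT
  refine ⟨⟨fun s t => Subtype.ext ?_⟩⟩
  obtain ⟨d, hd⟩ := hP s s.2
  obtain ⟨e, he⟩ := hP t t.2
  have hconj : Commute (MulAut.conj P s.1) (MulAut.conj P t.1) := by
    refine Units.ext ?_
    simp only [MulAut.conj_apply, Units.val_mul (P * _ * _), hd, he]
    exact commute_diagonal d e
  exact (MulAut.conj P).injective (by simpa only [Subgroup.coe_mul, map_mul] using hconj.eq)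

section ZariskiTopology

open MvPolynomial

variable {F : Type*} [Field F] {n m : ℕ}

/-- The point of affine space `F^(n × n)` given by the entries of `g`. -/
def glEntries (g : GL (Fin n) F) : Fin n × Fin n → F := fun q => g.1 q.1 q.2

/-- The coordinates of `g` as a point of the affine variety `GL_n`: its entries, together with
`det(g)⁻¹` at the index `Sum.inr ()`. -/
noncomputable def glCoords (g : GL (Fin n) F) : (Fin n × Fin n) ⊕ Unit → F :=
  Sum.elim (glEntries g) fun _ => g.1.det⁻¹

/-- The Zariski topology on `GL_n(F)`, whose closed sets are those satisfying `GLZClosed`. It is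
induced from the prime spectrum of the polynomial ring in the matrix entries, which spares checking
the axioms of a topology; multiplication is only separately continuous for it. -/
@[reducible]
noncomputable def glZariskiTopology : TopologicalSpace (GL (Fin n) F) :=
  .induced (fun g => pointToPoint (k := F) (glEntries g)) inferInstance

attribute [local instance] glZariskiTopology

theorem isClosed_iff_glZClosed {S : Set (GL (Fin n) F)} : IsClosed S ↔ GLZClosed S := by
  have hpreimage (I : Set (MvPolynomial (Fin n × Fin n) F)) :
      (fun g : GL (Fin n) F => pointToPoint (k := F) (glEntries g)) ⁻¹' PrimeSpectrum.zeroLocus I =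
        {g | ∀ p ∈ I, eval (glEntries g) p = 0} := by
    ext g
    exact forall₂_congr fun p _ => mem_vanishingIdeal_singleton_iff (glEntries g) p
  simp only [isClosed_induced_iff, PrimeSpectrum.isClosed_iff_zeroLocus]
  constructor
  · rintro ⟨_, ⟨I, rfl⟩, rfl⟩
    exact ⟨_, ⟨I, rfl⟩, hpreimage I⟩
  · rintro ⟨_, ⟨I, rfl⟩, rfl⟩
    exact ⟨_, ⟨I, rfl⟩, hpreimage I⟩

theorem isConnected_iff_glZConnected {S : Set (GL (Fin n) F)} :
    IsConnected S ↔ GLZConnected S := by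
  simp only [IsConnected, isPreconnected_closed_iff, isClosed_iff_glZClosed, GLZConnected]

theorem isClosed_setOf_eval_glEntries_eq_zero (p : MvPolynomial (Fin n × Fin n) F) :
    IsClosed {g : GL (Fin n) F | eval (glEntries g) p = 0} :=
  isClosed_iff_glZClosed.mpr ⟨_, ⟨{p}, rfl⟩, Set.ext fun g =>
    (forall_eq (p := fun q => eval (glEntries g) q = 0)).symm⟩

theorem eval_glEntries_det_mvPolynomialX (g : GL (Fin n) F) :
    eval (glEntries g) (mvPolynomialX (Fin n) (Fin n) F).det = g.1.det := by
  rw [RingHom.map_det]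
  exact congrArg det (mvPolynomialX_mapMatrix_eval g.1)

theorem exists_eval_glEntries_eq_det_pow_mul (q : MvPolynomial ((Fin n × Fin n) ⊕ Unit) F) :
    ∃ (k : ℕ) (p : MvPolynomial (Fin n × Fin n) F), ∀ g : GL (Fin n) F,
      eval (glEntries g) p = g.1.det ^ k * eval (glCoords g) q := by
  induction q using MvPolynomial.induction_on with
  | C c => exact ⟨0, C c, by simp⟩
  | add q r hq hr =>
    obtain ⟨k, p, hp⟩ := hq
    obtain ⟨l, s, hs⟩ := hr
    refine ⟨k + l, p * (mvPolynomialX _ _ F).det ^ l + s * (mvPolynomialX _ _ F).det ^ k,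
      fun g => ?_⟩
    simp only [map_add, map_mul, map_pow, hp, hs, eval_glEntries_det_mvPolynomialX]
    ring
  | mul_X q i hq =>
    obtain ⟨k, p, hp⟩ := hq
    rcases i with i | i
    · refine ⟨k, p * X i, fun g => ?_⟩
      simp only [map_mul, hp, eval_X, glCoords, Sum.elim_inl]
      ring
    · refine ⟨k + 1, p, fun g => ?_⟩
      have hg : g.1.det ≠ 0 := g.det_ne_zero
      have hX : eval (glCoords g) (X (Sum.inr i)) = g.1.det⁻¹ := eval_X _
      rw [map_mul, hX, hp]
      field_simp
      ring

theorem isClosed_setOf_eval_glCoords_eq_zero (q : MvPolynomial ((Fin n × Fin n) ⊕ Unit) F) :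
    IsClosed {g : GL (Fin n) F | eval (glCoords g) q = 0} := by
  obtain ⟨k, p, hp⟩ := exists_eval_glEntries_eq_det_pow_mul q
  convert isClosed_setOf_eval_glEntries_eq_zero p using 3 with g
  simp [hp, g.det_ne_zero]

theorem continuous_iff_isClosed_setOf_eval_glEntries_eq_zero {X : Type*} [TopologicalSpace X]
    {f : X → GL (Fin m) F} :
    Continuous f ↔ ∀ p, IsClosed {x | eval (glEntries (f x)) p = 0} := by
  refine ⟨fun hf p => (isClosed_setOf_eval_glEntries_eq_zero p).preimage hf, fun hf => ?_⟩
  refine continuous_iff_isClosed.mpr fun S hS => ?_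
  obtain ⟨_, ⟨I, rfl⟩, rfl⟩ := isClosed_iff_glZClosed.mp hS
  have hpreimage : f ⁻¹' {g | ∀ p ∈ I, eval (glEntries g) p = 0} =
      ⋂ p ∈ I, {x | eval (glEntries (f x)) p = 0} := by
    ext; simp
  exact hpreimage ▸ isClosed_biInter fun p _ => hf p

theorem continuous_of_eval_glCoords {X : Type*} [TopologicalSpace X] {c : X → GL (Fin n) F}
    (hc : Continuous c) {f : X → GL (Fin m) F}
    (P : Fin m × Fin m → MvPolynomial ((Fin n × Fin n) ⊕ Unit) F)
    (hf : ∀ x i j, (f x).1 i j = eval (glCoords (c x)) (P (i, j))) : Continuous f := by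
  refine continuous_iff_isClosed_setOf_eval_glEntries_eq_zero.mpr fun p => ?_
  have hcomp (x : X) : eval (glEntries (f x)) p = eval (glCoords (c x)) (bind₁ P p) := by
    have hentries : glEntries (f x) = fun q => eval (glCoords (c x)) (P q) :=
      funext fun q => hf x q.1 q.2
    rw [hentries, ← aeval_eq_eval, ← aeval_eq_eval]
    exact (aeval_bind₁ _ _ _).symm
  simp only [hcomp]
  exact (isClosed_setOf_eval_glCoords_eq_zero (bind₁ P p)).preimage hc

theorem separatelyContinuousMul_gl : SeparatelyContinuousMul (GL (Fin n) F) where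
  continuous_const_mul {a} := continuous_of_eval_glCoords continuous_id
    (fun q => ∑ k, C (a.1 q.1 k) * X (Sum.inl (k, q.2))) fun g i j => by
      simp [glCoords, glEntries, mul_apply]
  continuous_mul_const {a} := continuous_of_eval_glCoords continuous_id
    (fun q => ∑ k, X (Sum.inl (q.1, k)) * C (a.1 k q.2)) fun g i j => by
      simp [glCoords, glEntries, mul_apply]

attribute [local instance] separatelyContinuousMul_gl

theorem IsAlgebraicOn.continuous {G : Subgroup (GL (Fin n) F)} {ρ : G →* GL (Fin m) F}
    (hρ : IsAlgebraicOn G ρ) : Continuous ρ :=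
  let ⟨P, hP⟩ := hρ
  continuous_of_eval_glCoords continuous_subtype_val P hP

theorem isClosed_setOf_det_sub_one_eq_zero : IsClosed {g : GL (Fin n) F | (g.1 - 1).det = 0} := by
  convert isClosed_setOf_eval_glEntries_eq_zero (mvPolynomialX (Fin n) (Fin n) F - 1).det
    using 4 with g
  rw [RingHom.map_det, map_sub, map_one]
  exact congrArg (fun A => det (A - 1)) (mvPolynomialX_mapMatrix_eval g.1).symm

theorem isClosed_setOf_mulVec_eq (v w : Fin n → F) :
    IsClosed {g : GL (Fin n) F | g.1 *ᵥ v = w} := by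
  have hcoord (g : GL (Fin n) F) : g.1 *ᵥ v = w ↔
      ∀ i, eval (glEntries g) (∑ j, X (i, j) * C (v j) - C (w i)) = 0 := by
    simp [funext_iff, sub_eq_zero, mulVec, dotProduct, glEntries]
  simp only [hcoord, Set.ofPred_forall]
  exact isClosed_iInter fun i => isClosed_setOf_eval_glEntries_eq_zero _

theorem exists_ne_zero_forall_mulVec_eq_self {T : Type*} [Group T] [IsMulCommutative T]
    [TopologicalSpace T] [SeparatelyContinuousMul T] [PreconnectedSpace T] {ρ : T →* GL (Fin m) F}
    (hcont : Continuous ρ) (hρ : ∀ t, ∃ v, v ≠ 0 ∧ (ρ t).1 *ᵥ v = v) :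
    ∃ v, v ≠ 0 ∧ ∀ t, (ρ t).1 *ᵥ v = v := by
  let ρ' : T →* LinearMap.GeneralLinearGroup F (Fin m → F) :=
    GeneralLinearGroup.toLin.toMonoidHom.comp ρ
  obtain ⟨v, hv0, hv⟩ := exists_finiteIndex_comap_stabilizer_generalLinearGroup ρ' hρ
  have htop := eq_top_of_isClosed_of_finiteIndex ((MulAction.stabilizer _ v).comap ρ')
    ((isClosed_setOf_mulVec_eq v v).preimage hcont)
  exact ⟨v, hv0, fun t => (Subgroup.eq_top_iff' _).mp htop t⟩

section EigenvalueOneLocus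

variable {G T : Subgroup (GL (Fin n) F)} {ρ : G →* GL (Fin m) F}

/-- The set of `g ∈ G` such that `1` is an eigenvalue of `ρ(g)`, as a subset of the ambient
`GL_n(F)`. -/
def eigenvalueOneLocus (ρ : G →* GL (Fin m) F) : Set (GL (Fin n) F) :=
  {g | ∃ hg : g ∈ G, ∃ v, v ≠ 0 ∧ (ρ ⟨g, hg⟩).1 *ᵥ v = v}

theorem mem_eigenvalueOneLocus_iff {g : GL (Fin n) F} :
    g ∈ eigenvalueOneLocus ρ ↔ ∃ hg : g ∈ G, ((ρ ⟨g, hg⟩).1 - 1).det = 0 :=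
  exists_congr fun _ => exists_mulVec_eq_self_iff _

theorem IsAlgebraicOn.exists_eigenvalueOneLocus_eq_inter (hρ : IsAlgebraicOn G ρ) :
    ∃ C, GLZClosed C ∧ eigenvalueOneLocus ρ = (G : Set (GL (Fin n) F)) ∩ C := by
  obtain ⟨C, hC, hCρ⟩ :=
    isClosed_induced_iff.mp (isClosed_setOf_det_sub_one_eq_zero.preimage hρ.continuous)
  refine ⟨C, isClosed_iff_glZClosed.mp hC, Set.ext fun g => ?_⟩
  rw [mem_eigenvalueOneLocus_iff, Set.mem_inter_iff, ← exists_prop]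
  exact exists_congr fun hg => (Set.ext_iff.mp hCρ ⟨g, hg⟩).symm

theorem conj_mem_eigenvalueOneLocus {g h : GL (Fin n) F} (hg : g ∈ eigenvalueOneLocus ρ)
    (hh : h ∈ G) : h * g * h⁻¹ ∈ eigenvalueOneLocus ρ := by
  obtain ⟨hgG, hdet⟩ := mem_eigenvalueOneLocus_iff.mp hg
  refine mem_eigenvalueOneLocus_iff.mpr ⟨mul_mem (mul_mem hh hgG) (inv_mem hh), ?_⟩
  have hconj : (ρ (⟨h, hh⟩ * ⟨g, hgG⟩ * ⟨h, hh⟩⁻¹)).1 - 1 =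
      (ρ ⟨h, hh⟩).1 * ((ρ ⟨g, hgG⟩).1 - 1) * (ρ ⟨h, hh⟩)⁻¹.1 := by
    simp only [map_mul, map_inv, Units.val_mul, mul_sub, sub_mul, mul_one, Units.mul_inv]
  exact (congrArg det hconj).trans ((det_units_conj _ _).trans hdet)

theorem eigenvalueOneLocus_ssubset [IsMulCommutative T] (hTG : T ≤ G)
    (hT : GLZConnected (T : Set (GL (Fin n) F))) (hρ : IsAlgebraicOn G ρ)
    (hfix : ∀ v, (∀ t : G, t.1 ∈ T → (ρ t).1 *ᵥ v = v) → v = 0) :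
    eigenvalueOneLocus ρ ⊂ (G : Set (GL (Fin n) F)) := by
  refine ⟨fun g hg => hg.1, fun hGY => ?_⟩
  have : PreconnectedSpace T :=
    Subtype.preconnectedSpace (isConnected_iff_glZConnected.mpr hT).isPreconnected
  have : SeparatelyContinuousMul T :=
    Topology.IsInducing.subtypeVal.separatelyContinuousMul T.subtype
  have hcont : Continuous (ρ.comp (Subgroup.inclusion hTG)) :=
    hρ.continuous.comp (continuous_inclusion hTG)
  obtain ⟨v, hv0, hv⟩ := exists_ne_zero_forall_mulVec_eq_self hcont fun t => (hGY (hTG t.2)).2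
  exact hv0 (hfix v fun t ht => hv ⟨t, ht⟩)

end EigenvalueOneLocus

end ZariskiTopology

theorem eigenvalue_one_locus_of_no_zero_weight_general {F : Type*} [Field F] {n m : ℕ}
    {G T : Subgroup (GL (Fin n) F)} [IsMulCommutative T] (hTG : T ≤ G)
    (hT : GLZConnected (T : Set (GL (Fin n) F))) {ρ : G →* GL (Fin m) F}
    (hρ : IsAlgebraicOn G ρ)
    (hfix : ∀ v, (∀ t : G, t.1 ∈ T → (ρ t).1 *ᵥ v = v) → v = 0) :
    (∃ C, GLZClosed C ∧ eigenvalueOneLocus ρ = (G : Set (GL (Fin n) F)) ∩ C) ∧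
    eigenvalueOneLocus ρ ⊂ (G : Set (GL (Fin n) F)) ∧
    (∀ g ∈ eigenvalueOneLocus ρ, ∀ h ∈ G, h * g * h⁻¹ ∈ eigenvalueOneLocus ρ) :=
  ⟨hρ.exists_eigenvalueOneLocus_eq_inter, eigenvalueOneLocus_ssubset hTG hT hρ hfix,
    fun _ hg _ hh => conj_mem_eigenvalueOneLocus hg hh⟩

open Matrix in
/-- Let `G ⊆ GL_n(F)` be connected reductive, and `V = F^m` a
finite-dimensional algebraic representation `ρ` of `G` whose zero weight multiplicity is
`0` (the fixed space of a maximal torus `T` of `G` is trivial).  Then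
`{ g ∈ G : 1 is an eigenvalue of ρ(g) on V }` is a proper, relatively Zariski-closed,
conjugation-invariant subset of `G`. -/
theorem eigenvalue_one_locus_of_no_zero_weight {F : Type*} [Field F] [IsAlgClosed F]
    {n m : ℕ} (G : Subgroup (GL (Fin n) F))
    (hclosed : GLZClosed (G : Set (GL (Fin n) F)))
    (hconn : GLZConnected (G : Set (GL (Fin n) F)))
    (hred : LinearlyReductiveOn (G : Set (GL (Fin n) F)))
    (ρ : G →* GL (Fin m) F) (halg : IsAlgebraicOn G ρ)
    (T : Subgroup (GL (Fin n) F)) (hT : IsMaximalTorusIn G T)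
    (hwt0 : ∀ v : Fin m → F,
      (∀ t : G, (t : GL (Fin n) F) ∈ T →
        Matrix.mulVec ((ρ t : GL (Fin m) F) : Matrix (Fin m) (Fin m) F) v = v) → v = 0) :
    let Y : Set (GL (Fin n) F) := {g : GL (Fin n) F | ∃ hg : g ∈ G, ∃ v : Fin m → F,
      v ≠ 0 ∧ Matrix.mulVec ((ρ ⟨g, hg⟩ : GL (Fin m) F) : Matrix (Fin m) (Fin m) F) v = v}
    (∃ C : Set (GL (Fin n) F), GLZClosed C ∧ Y = (G : Set (GL (Fin n) F)) ∩ C) ∧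
    Y ⊂ (G : Set (GL (Fin n) F)) ∧
    (∀ g ∈ Y, ∀ h ∈ G, h * g * h⁻¹ ∈ Y) := by
  have := hT.1.isMulCommutative
  exact eigenvalue_one_locus_of_no_zero_weight_general hT.1.1 hT.1.2.2.1 halg hwt0
end
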